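/- arXiv:1312.1126 — 5 statements merged into one kernel-verified Lean document; each statement's English description precedes it below -/
import Mathlib

section
/- In the setting of the intertwined Markov chains (finite sets S_1,…,S_n, stochastic matrices P_k, stochastic links Λᵏ_{k−1} with P_k Λᵏ_{k−1} = Λᵏ_{k−1} P_{k−1} = Δᵏ_{k−1}, sequential-update kernel P^n_Λ, and initial measure M_n(X) = μ_n(x^n) ∏_{k=2}^n Λᵏ_{k−1}(x^k, x^{k−1})), let t_1 ≤ t_2 be nonnegative integers and n ≥ n_1 ≥ n_2 ≥ 1. Define Δⁿ_{m,t} := (P_n)^t Λⁿ_{n−1} ⋯ Λ^{m+1}_m for n > m and Δⁿ_{n,t} := (P_n)^t. Then the joint law of the level-n_1 coordinate at time t_1 and the level-n_2 coordinate at time t_2 of the chain started from M_n and evolved by P^n_Λ is given by: for all a ∈ S_{n_1} and b ∈ S_{n_2}, ∑_{X, Y : x^{n_1} = a, y^{n_2} = b} (M_n (P^n_Λ)^{t_1})(X) · ((P^n_Λ)^{t_2 − t_1})(X, Y) = (μ_n Δⁿ_{n_1, t_1})(a) · Δ^{n_1}_{n_2, t_2 − t_1}(a, b). -/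
/-!
Write `L(X) = ∏ₖ Λₖ(x^{k+1}, x^k)`, `M_ν(X) = ν(x^n) L(X)` and `K_n` for the sequential-update kernel.
Everything is proved by peeling off the top level: a configuration on levels `0, …, n + 1` is a pair
`snc X x`, and `K_{n+1}(snc X x, snc Y y) = K_n(X, Y) · P(x, y) Λ(y, yⁿ) / Δ(x, yⁿ)` (`seqPL_snc`).

* `M_ν K_n^t = M_{ν P_n^t}` (`gibbs_kerPow`): summing out the lower levels of the top factor
  produces `(Λ P)(x, yⁿ) = Δ(x, yⁿ)`, which cancels the denominator.
* The lower levels evolve autonomously (`kerPow_proj`): summing `K_{n+1}^s` over the new top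
  coordinate gives `K_n^s`, provided `Λ(x, xⁿ) ≠ 0`. This proviso is needed because `K_{n+1}` is set
  to zero where a denominator vanishes; it holds on the support of `M_ν` and is preserved by the
  dynamics.
* The marginal of `M_ν` on lower levels is `M_{νΛ⋯Λ}` (`gibbs_marginal`).

The law at time `t₁` is thus `M_{μ P^{t₁}}`; restricting to levels up to `n₁` gives `M_ν` with
`ν = μ Δ_{n₁,t₁}`. Conditioning on `x^{n₁} = a` replaces `ν` by `ν(a) δ_a`, and evolving for `s` more
steps gives `ν(a) M_{P^s(a, ·)}`, whose marginal at level `n₂` is `ν(a) Δ_{n₂,s}(a, b)`.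
-/

open Classical

/-- `Δᵏ⁺¹_k = P_{k+1} Λᵏ⁺¹_k`, the intertwined kernel from level `k+1` to level `k`. -/
noncomputable def DDk (S : ℕ → Type) [∀ k, Fintype (S k)]
    (P : ∀ k, S k → S k → ℝ) (Λ : ∀ k, S (k + 1) → S k → ℝ)
    (k : ℕ) (x : S (k + 1)) (y : S k) : ℝ :=
  ∑ z : S (k + 1), P (k + 1) x z * Λ k z y

/-- Configurations on levels `0, 1, …, n`. -/
abbrev Cfg (S : ℕ → Type) (n : ℕ) := ∀ k : Fin (n + 1), S k

/-- The sequential-update transition kernel `P^n_Λ` on configurations. -/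
noncomputable def seqPL (S : ℕ → Type) [∀ k, Fintype (S k)]
    (P : ∀ k, S k → S k → ℝ) (Λ : ∀ k, S (k + 1) → S k → ℝ)
    (n : ℕ) (X Y : Cfg S n) : ℝ :=
  if ∀ k : Fin n, 0 < DDk S P Λ k (X k.succ) (Y k.castSucc) then
    P 0 (X 0) (Y 0) *
      ∏ k : Fin n,
        (P ((k : ℕ) + 1) (X k.succ) (Y k.succ) * Λ k (Y k.succ) (Y k.castSucc)
          / DDk S P Λ k (X k.succ) (Y k.castSucc))
  else 0

/-- `t`-step power of a transition kernel on a finite set. -/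
noncomputable def kerPow {α : Type} [Fintype α] (K : α → α → ℝ) : ℕ → α → α → ℝ
  | 0 => fun x y => if x = y then 1 else 0
  | t + 1 => fun x y => ∑ z, K x z * kerPow K t z y

/-- Composition of the links from level `b + j` down to level `b`:
`Λ^{b+j}_{b+j-1} ⋯ Λ^{b+1}_b` (the identity kernel when `j = 0`). -/
noncomputable def chainLink (S : ℕ → Type) [∀ k, Fintype (S k)]
    (Λ : ∀ k, S (k + 1) → S k → ℝ) (b : ℕ) : (j : ℕ) → S (b + j) → S b → ℝ
  | 0 => fun x y => if x = y then 1 else 0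
  | j + 1 => fun x y => ∑ w : S (b + j), Λ (b + j) x w * chainLink S Λ b j w y

/-- `Δⁿ_{m,t} = (P_n)^t Λⁿ_{n-1} ⋯ Λ^{m+1}_m` (with `n = b + j`, `m = b`). -/
noncomputable def DeltaNMT (S : ℕ → Type) [∀ k, Fintype (S k)]
    (P : ∀ k, S k → S k → ℝ) (Λ : ∀ k, S (k + 1) → S k → ℝ)
    (b j t : ℕ) (x : S (b + j)) (y : S b) : ℝ :=
  ∑ z : S (b + j), kerPow (P (b + j)) t x z * chainLink S Λ b j z y

/-! ### Splitting off the top level of a configuration -/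

/-- The configuration on levels `0, …, n + 1` with lower part `X` and top coordinate `x`. -/
def snc {S : ℕ → Type} {n : ℕ} (X : Cfg S n) (x : S (n + 1)) : Cfg S (n + 1) :=
  @Fin.snoc (n + 1) (fun k => S k) X x

theorem snc_castSucc {S : ℕ → Type} {n : ℕ} (X : Cfg S n) (x : S (n + 1)) (k : Fin (n + 1)) :
    snc X x k.castSucc = X k :=
  @Fin.snoc_castSucc (n + 1) (fun k => S k) x X k

theorem snc_last {S : ℕ → Type} {n : ℕ} (X : Cfg S n) (x : S (n + 1)) :
    snc X x (Fin.last (n + 1)) = x :=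
  @Fin.snoc_last (n + 1) (fun k => S k) x X

theorem snc_mk {S : ℕ → Type} {n : ℕ} (X : Cfg S n) (x : S (n + 1)) (m : ℕ) (h : m < n + 1)
    (h' : m < n + 1 + 1) : snc X x ⟨m, h'⟩ = X ⟨m, h⟩ :=
  snc_castSucc X x ⟨m, h⟩

theorem snc_succ_castSucc {S : ℕ → Type} {n : ℕ} (X : Cfg S n) (x : S (n + 1)) (k : Fin n) :
    snc X x k.castSucc.succ = X k.succ :=
  snc_castSucc X x k.succ

theorem snc_succ_last {S : ℕ → Type} {n : ℕ} (X : Cfg S n) (x : S (n + 1)) :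
    snc X x (Fin.last n).succ = x :=
  snc_last X x

theorem exists_snc {S : ℕ → Type} {n : ℕ} (X : Cfg S (n + 1)) : ∃ X' x, X = snc X' x :=
  ⟨fun k => X k.castSucc, X (Fin.last (n + 1)),
    (@Fin.snoc_init_self (n + 1) (fun k => S k) X).symm⟩

theorem sum_snc {S : ℕ → Type} [∀ k, Fintype (S k)] {n : ℕ} (f : Cfg S (n + 1) → ℝ) :
    ∑ X, f X = ∑ X : Cfg S n, ∑ x : S (n + 1), f (snc X x) := by
  rw [Finset.sum_comm]
  rw [← (Fin.snocEquiv (fun k : Fin (n + 1 + 1) => S k)).sum_comp, Fintype.sum_prod_type]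
  rfl

theorem sum_cfg_zero {S : ℕ → Type} [∀ k, Fintype (S k)] (f : S 0 → ℝ) :
    ∑ X : Cfg S 0, f (X 0) = ∑ x, f x :=
  (Equiv.piUnique (fun k : Fin 1 => S k)).sum_comp f

theorem snc_inj {S : ℕ → Type} {n : ℕ} (X Y : Cfg S n) (x y : S (n + 1)) :
    snc X x = snc Y y ↔ X = Y ∧ x = y := by
  constructor
  · intro h
    refine ⟨funext fun k => ?_, ?_⟩
    · rw [← snc_castSucc X x k, h, snc_castSucc]
    · rw [← snc_last X x, h, snc_last]
  · rintro ⟨rfl, rfl⟩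
    rfl

/-- The product of links `∏ₖ Λₖ(x^{k+1}, x^k)` along a configuration. -/
noncomputable def linkW (S : ℕ → Type) (Λ : ∀ k, S (k + 1) → S k → ℝ) (n : ℕ) (X : Cfg S n) : ℝ :=
  ∏ k : Fin n, Λ k (X k.succ) (X k.castSucc)

theorem linkW_snc {S : ℕ → Type} {Λ : ∀ k, S (k + 1) → S k → ℝ} {n : ℕ} (X : Cfg S n) (x : S (n + 1)) :
    linkW S Λ (n + 1) (snc X x) = linkW S Λ n X * Λ n x (X (Fin.last n)) := by
  unfold linkW
  rw [Fin.prod_univ_castSucc]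
  congr 1
  · refine Finset.prod_congr rfl fun k _ => ?_
    rw [snc_succ_castSucc, snc_castSucc]
    rfl
  · rw [snc_succ_last, snc_castSucc]
    rfl

section

variable {S : ℕ → Type} [∀ k, Fintype (S k)]
  {P : ∀ k, S k → S k → ℝ} {Λ : ∀ k, S (k + 1) → S k → ℝ}

/-! ### The sequential-update kernel -/

theorem DDk_nonneg {n : ℕ} (hP : ∀ x y, 0 ≤ P (n + 1) x y) (hΛ : ∀ x y, 0 ≤ Λ n x y)
    (x : S (n + 1)) (y : S n) : 0 ≤ DDk S P Λ n x y :=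
  Finset.sum_nonneg fun _ _ => mul_nonneg (hP _ _) (hΛ _ _)

/-- Recursion for the sequential-update kernel. Where `Δ` vanishes both sides are zero, the right
one by the convention `r / 0 = 0`. -/
theorem seqPL_snc {n : ℕ} (hP : ∀ x y, 0 ≤ P (n + 1) x y) (hΛ : ∀ x y, 0 ≤ Λ n x y)
    (X Y : Cfg S n) (x y : S (n + 1)) :
    seqPL S P Λ (n + 1) (snc X x) (snc Y y) =
      seqPL S P Λ n X Y *
        (P (n + 1) x y * Λ n y (Y (Fin.last n)) / DDk S P Λ n x (Y (Fin.last n))) := by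
  have hcond : (∀ k : Fin (n + 1), 0 < DDk S P Λ k (snc X x k.succ) (snc Y y k.castSucc)) ↔
      (∀ k : Fin n, 0 < DDk S P Λ k (X k.succ) (Y k.castSucc)) ∧
        0 < DDk S P Λ n x (Y (Fin.last n)) := by
    rw [Fin.forall_fin_succ']
    apply and_congr
    · refine forall_congr' fun k => ?_
      rw [snc_succ_castSucc, snc_castSucc]
      rfl
    · rw [snc_succ_last, snc_castSucc]
      rfl
  unfold seqPL
  by_cases h1 : ∀ k : Fin n, 0 < DDk S P Λ k (X k.succ) (Y k.castSucc)
  · by_cases h2 : 0 < DDk S P Λ n x (Y (Fin.last n))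
    · rw [if_pos (hcond.2 ⟨h1, h2⟩), if_pos h1, Fin.prod_univ_castSucc, mul_assoc]
      congr 1
      congr 1
      · refine Finset.prod_congr rfl fun k _ => ?_
        rw [snc_succ_castSucc, snc_succ_castSucc, snc_castSucc]
        rfl
      · rw [snc_succ_last, snc_succ_last, snc_castSucc]
        rfl
    · rw [if_neg fun h => h2 (hcond.1 h).2]
      have h0 : DDk S P Λ n x (Y (Fin.last n)) = 0 :=
        le_antisymm (not_lt.1 h2) (DDk_nonneg hP hΛ _ _)
      rw [h0, div_zero, mul_zero]
  · rw [if_neg fun h => h1 (hcond.1 h).1, if_neg h1, zero_mul]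

theorem seqPL_zero (X Y : Cfg S 0) : seqPL S P Λ 0 X Y = P 0 (X 0) (Y 0) := by
  simp [seqPL]

/-- `Δ` cancels even where it vanishes, since then every term `P(x, y) Λ(y, z)` of the sum
defining it vanishes. -/
theorem P_mul_link_div {n : ℕ} (hP : ∀ x y, 0 ≤ P (n + 1) x y) (hΛ : ∀ x y, 0 ≤ Λ n x y)
    (x y : S (n + 1)) (z : S n) :
    P (n + 1) x y * Λ n y z / DDk S P Λ n x z * DDk S P Λ n x z = P (n + 1) x y * Λ n y z := by
  by_cases h : DDk S P Λ n x z = 0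
  · have h' := (Finset.sum_eq_zero_iff_of_nonneg
      (fun w _ => mul_nonneg (hP x w) (hΛ w z))).1 h y (Finset.mem_univ y)
    rw [h, mul_zero, h']
  · exact div_mul_cancel₀ _ h

/-! ### Evolution of the measures `M_ν` -/

theorem gibbs_step {n : ℕ} (hP : ∀ k ≤ n, ∀ x y, 0 ≤ P k x y) (hΛ : ∀ k < n, ∀ x y, 0 ≤ Λ k x y)
    (hint : ∀ k < n, ∀ (x : S (k + 1)) (z : S k),
      ∑ y : S (k + 1), P (k + 1) x y * Λ k y z = ∑ w : S k, Λ k x w * P k w z)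
    (ν : S n → ℝ) (Y : Cfg S n) :
    ∑ X : Cfg S n, ν (X (Fin.last n)) * linkW S Λ n X * seqPL S P Λ n X Y =
      (∑ x, ν x * P n x (Y (Fin.last n))) * linkW S Λ n Y := by
  induction n with
  | zero =>
    simp only [seqPL_zero, linkW, Finset.univ_eq_empty, Finset.prod_empty, mul_one]
    exact sum_cfg_zero fun x => ν x * P 0 x (Y 0)
  | succ n ih =>
    obtain ⟨Y, y, rfl⟩ := exists_snc Y
    have hP' := hP (n + 1) le_rfl
    have hΛ' := hΛ n n.lt_succ_self
    rw [sum_snc, Finset.sum_comm, Finset.sum_mul]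
    refine Finset.sum_congr rfl fun x _ => ?_
    have ih' := ih (fun k hk => hP k (by omega)) (fun k hk => hΛ k (by omega))
      (fun k hk => hint k (by omega)) (fun w => Λ n x w) Y
    rw [← hint n n.lt_succ_self] at ih'
    change _ = DDk S P Λ n x (Y (Fin.last n)) * _ at ih'
    have hc := P_mul_link_div hP' hΛ' x y (Y (Fin.last n))
    simp only [seqPL_snc hP' hΛ', linkW_snc, snc_last]
    calc _ = ν x * (P (n + 1) x y * Λ n y (Y (Fin.last n)) / DDk S P Λ n x (Y (Fin.last n))) *
          ∑ X : Cfg S n, Λ n x (X (Fin.last n)) * linkW S Λ n X * seqPL S P Λ n X Y := by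
          rw [Finset.mul_sum]
          exact Finset.sum_congr rfl fun X _ => by ring
      _ = ν x * (P (n + 1) x y * Λ n y (Y (Fin.last n)) / DDk S P Λ n x (Y (Fin.last n)) *
            DDk S P Λ n x (Y (Fin.last n))) * linkW S Λ n Y := by rw [ih']; ring
      _ = _ := by rw [hc]; ring

/-- `M_ν K_n^t = M_{ν P_n^t}`. -/
theorem gibbs_kerPow {n : ℕ} (hP : ∀ k ≤ n, ∀ x y, 0 ≤ P k x y)
    (hΛ : ∀ k < n, ∀ x y, 0 ≤ Λ k x y)
    (hint : ∀ k < n, ∀ (x : S (k + 1)) (z : S k),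
      ∑ y : S (k + 1), P (k + 1) x y * Λ k y z = ∑ w : S k, Λ k x w * P k w z)
    (t : ℕ) (ν : S n → ℝ) (Y : Cfg S n) :
    ∑ X : Cfg S n, ν (X (Fin.last n)) * linkW S Λ n X * kerPow (seqPL S P Λ n) t X Y =
      (∑ x, ν x * kerPow (P n) t x (Y (Fin.last n))) * linkW S Λ n Y := by
  induction t generalizing ν with
  | zero => simp [kerPow]
  | succ t ih =>
    simp only [kerPow, Finset.mul_sum]
    rw [Finset.sum_comm]
    simp only [← mul_assoc, ← Finset.sum_mul]
    simp only [gibbs_step hP hΛ hint]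
    rw [ih (fun z => ∑ x, ν x * P n x z), Finset.sum_comm]
    simp only [Finset.sum_mul]

/-! ### Autonomy of the lower levels -/

theorem P_ne_zero_of_seqPL {n : ℕ} (X Y : Cfg S n) (hP : ∀ k ≤ n, ∀ x y, 0 ≤ P k x y)
    (hΛ : ∀ k < n, ∀ x y, 0 ≤ Λ k x y) (h : seqPL S P Λ n X Y ≠ 0) :
    P n (X (Fin.last n)) (Y (Fin.last n)) ≠ 0 := by
  cases n with
  | zero => rwa [seqPL_zero] at h
  | succ n =>
    obtain ⟨X, x, rfl⟩ := exists_snc X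
    obtain ⟨Y, y, rfl⟩ := exists_snc Y
    rw [seqPL_snc (hP (n + 1) le_rfl) (hΛ n n.lt_succ_self)] at h
    rw [snc_last, snc_last]
    intro h0
    simp [h0] at h

theorem seqPL_proj {n : ℕ} (hP : ∀ k ≤ n + 1, ∀ x y, 0 ≤ P k x y)
    (hΛ : ∀ k < n + 1, ∀ x y, 0 ≤ Λ k x y)
    (hint : ∀ k < n + 1, ∀ (x : S (k + 1)) (z : S k),
      ∑ y : S (k + 1), P (k + 1) x y * Λ k y z = ∑ w : S k, Λ k x w * P k w z)
    (X Y : Cfg S n) (x : S (n + 1)) (hx : Λ n x (X (Fin.last n)) ≠ 0) :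
    ∑ y, seqPL S P Λ (n + 1) (snc X x) (snc Y y) = seqPL S P Λ n X Y := by
  simp only [seqPL_snc (hP (n + 1) le_rfl) (hΛ n n.lt_succ_self)]
  rw [← Finset.mul_sum, ← Finset.sum_div]
  change _ * (DDk S P Λ n x (Y (Fin.last n)) / _) = _
  by_cases h : seqPL S P Λ n X Y = 0
  · rw [h, zero_mul]
  · have hp := P_ne_zero_of_seqPL X Y (fun k hk => hP k (by omega))
      (fun k hk => hΛ k (by omega)) h
    -- `Δ(x, yⁿ) = (Λ P)(x, yⁿ)` has the nonzero term `Λ(x, xⁿ) P(xⁿ, yⁿ)`.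
    have hD : DDk S P Λ n x (Y (Fin.last n)) ≠ 0 := by
      intro h0
      unfold DDk at h0
      rw [hint n n.lt_succ_self] at h0
      have := (Finset.sum_eq_zero_iff_of_nonneg (fun w _ => mul_nonneg
        (hΛ n n.lt_succ_self x w) (hP n (by omega) w (Y (Fin.last n))))).1 h0
        (X (Fin.last n)) (Finset.mem_univ _)
      exact mul_ne_zero hx hp this
    rw [div_self hD, mul_one]

/-- Autonomy of the lower levels: from a starting point whose top link is nonzero, the projection
forgetting the top level evolves by the sequential-update kernel of the lower levels. -/
theorem kerPow_proj {n : ℕ} (hP : ∀ k ≤ n + 1, ∀ x y, 0 ≤ P k x y)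
    (hΛ : ∀ k < n + 1, ∀ x y, 0 ≤ Λ k x y)
    (hint : ∀ k < n + 1, ∀ (x : S (k + 1)) (z : S k),
      ∑ y : S (k + 1), P (k + 1) x y * Λ k y z = ∑ w : S k, Λ k x w * P k w z)
    (s : ℕ) (X Y : Cfg S n) (x : S (n + 1)) (hx : Λ n x (X (Fin.last n)) ≠ 0) :
    ∑ y, kerPow (seqPL S P Λ (n + 1)) s (snc X x) (snc Y y) = kerPow (seqPL S P Λ n) s X Y := by
  induction s generalizing X x with
  | zero =>
    simp only [kerPow, snc_inj, ite_and]
    split_ifs <;> simp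
  | succ s ih =>
    simp only [kerPow]
    rw [Finset.sum_comm]
    simp only [← Finset.mul_sum]
    rw [sum_snc]
    refine Finset.sum_congr rfl fun Z _ => ?_
    rw [← seqPL_proj hP hΛ hint X Z x hx, Finset.sum_mul]
    refine Finset.sum_congr rfl fun z _ => ?_
    -- A transition of positive probability ends at a configuration whose top link is nonzero.
    by_cases hz : Λ n z (Z (Fin.last n)) = 0
    · rw [seqPL_snc (hP (n + 1) le_rfl) (hΛ n n.lt_succ_self), hz]
      simp
    · rw [ih Z z hz]

/-! ### Marginals and joint laws -/

/-- The top coordinate of `M_f` has law `f`. -/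
theorem gibbs_top {n : ℕ} (hΛsum : ∀ k < n, ∀ x, ∑ y, Λ k x y = 1) (f : S n → ℝ) :
    ∑ Y : Cfg S n, f (Y (Fin.last n)) * linkW S Λ n Y = ∑ x, f x := by
  induction n with
  | zero =>
    simp only [linkW, Finset.univ_eq_empty, Finset.prod_empty, mul_one]
    exact sum_cfg_zero f
  | succ n ih =>
    have := ih (fun k hk => hΛsum k (by omega)) (fun w => ∑ x, f x * Λ n x w)
    rw [Finset.sum_comm] at this
    simp only [← Finset.mul_sum, hΛsum n n.lt_succ_self, mul_one] at this
    rw [← this, sum_snc]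
    refine Finset.sum_congr rfl fun Y _ => ?_
    rw [Finset.sum_mul]
    refine Finset.sum_congr rfl fun y _ => ?_
    rw [snc_last, linkW_snc]
    ring

theorem gibbs_marginal_step {n q : ℕ} (ν : S (n + 1) → ℝ) (b : S q) (h : q < n + 1)
    (h' : q < n + 1 + 1) :
    ∑ Y : Cfg S (n + 1), (if Y ⟨q, h'⟩ = b then
        ν (Y (Fin.last (n + 1))) * linkW S Λ (n + 1) Y else 0) =
      ∑ Y : Cfg S n, (if Y ⟨q, h⟩ = b then
        (∑ x, ν x * Λ n x (Y (Fin.last n))) * linkW S Λ n Y else 0) := by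
  rw [sum_snc]
  refine Finset.sum_congr rfl fun Y _ => ?_
  simp only [snc_mk Y _ q h h', linkW_snc, snc_last]
  split_ifs
  · rw [Finset.sum_mul]
    exact Finset.sum_congr rfl fun y _ => by ring
  · exact Finset.sum_const_zero

/-- The level-`q` coordinate of `M_ν` has law `ν Λ^{q+j}_{q+j-1} ⋯ Λ^{q+1}_q`. -/
theorem gibbs_marginal {q j : ℕ} (hΛsum : ∀ k < q + j, ∀ x, ∑ y, Λ k x y = 1)
    (ν : S (q + j) → ℝ) (b : S q) (hq : q < q + j + 1) :
    ∑ Y : Cfg S (q + j), (if Y ⟨q, hq⟩ = b then ν (Y (Fin.last (q + j))) * linkW S Λ (q + j) Y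
      else 0) = ∑ x, ν x * chainLink S Λ q j x b := by
  induction j with
  | zero =>
    have := gibbs_top (Λ := Λ) hΛsum (fun x => ν x * chainLink S Λ q 0 x b)
    rw [← this]
    refine Finset.sum_congr rfl fun Y _ => ?_
    simp only [chainLink, mul_ite, mul_one, mul_zero, ite_mul, zero_mul]
    rfl
  | succ j ih =>
    have := ih (fun k hk => hΛsum k (by omega)) (fun w => ∑ x, ν x * Λ (q + j) x w) (by omega)
    simp only [chainLink, Finset.mul_sum]
    rw [Finset.sum_comm]
    simp only [← mul_assoc, ← Finset.sum_mul]
    rw [← this]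
    exact gibbs_marginal_step (n := q + j) ν b (by omega) (by omega)

theorem joint_reduce_step {n : ℕ} (hP : ∀ k ≤ n + 1, ∀ x y, 0 ≤ P k x y)
    (hΛ : ∀ k < n + 1, ∀ x y, 0 ≤ Λ k x y)
    (hint : ∀ k < n + 1, ∀ (x : S (k + 1)) (z : S k),
      ∑ y : S (k + 1), P (k + 1) x y * Λ k y z = ∑ w : S k, Λ k x w * P k w z)
    (s : ℕ) (ν : S (n + 1) → ℝ) {m q : ℕ} (a : S m) (b : S q)
    (hm : m < n + 1) (hm' : m < n + 1 + 1) (hq : q < n + 1) (hq' : q < n + 1 + 1) :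
    ∑ X : Cfg S (n + 1), ∑ Y : Cfg S (n + 1), (if X ⟨m, hm'⟩ = a ∧ Y ⟨q, hq'⟩ = b then
        ν (X (Fin.last (n + 1))) * linkW S Λ (n + 1) X * kerPow (seqPL S P Λ (n + 1)) s X Y
      else 0) =
    ∑ X : Cfg S n, ∑ Y : Cfg S n, (if X ⟨m, hm⟩ = a ∧ Y ⟨q, hq⟩ = b then
        (∑ x, ν x * Λ n x (X (Fin.last n))) * linkW S Λ n X * kerPow (seqPL S P Λ n) s X Y
      else 0) := by
  rw [sum_snc]
  refine Finset.sum_congr rfl fun X _ => ?_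
  simp only [sum_snc (n := n)]
  rw [Finset.sum_comm]
  refine Finset.sum_congr rfl fun Y _ => ?_
  simp only [snc_mk X _ m hm hm', snc_mk Y _ q hq hq', linkW_snc, snc_last]
  split_ifs
  · rw [Finset.sum_mul, Finset.sum_mul]
    refine Finset.sum_congr rfl fun x _ => ?_
    rw [← Finset.mul_sum]
    by_cases hx : Λ n x (X (Fin.last n)) = 0
    · rw [hx]
      ring
    · rw [kerPow_proj hP hΛ hint s X Y x hx]
      ring
  · simp

/-- For the chain started from `M_ν`, the joint law of the level-`m` coordinate at time `0` and the
level-`q` coordinate at time `s` is that of the chain on levels up to `m` started from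
`M_{νΛ⋯Λ}`. -/
theorem joint_reduce {m j : ℕ} (hP : ∀ k ≤ m + j, ∀ x y, 0 ≤ P k x y)
    (hΛ : ∀ k < m + j, ∀ x y, 0 ≤ Λ k x y)
    (hint : ∀ k < m + j, ∀ (x : S (k + 1)) (z : S k),
      ∑ y : S (k + 1), P (k + 1) x y * Λ k y z = ∑ w : S k, Λ k x w * P k w z)
    (s : ℕ) (ν : S (m + j) → ℝ) (a : S m) (q : ℕ) (hqm : q < m + 1) (b : S q)
    (hm : m < m + j + 1) (hq : q < m + j + 1) :
    ∑ X : Cfg S (m + j), ∑ Y : Cfg S (m + j), (if X ⟨m, hm⟩ = a ∧ Y ⟨q, hq⟩ = b then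
        ν (X (Fin.last (m + j))) * linkW S Λ (m + j) X * kerPow (seqPL S P Λ (m + j)) s X Y
      else 0) =
    ∑ X : Cfg S m, ∑ Y : Cfg S m, (if X (Fin.last m) = a ∧ Y ⟨q, hqm⟩ = b then
        (∑ x, ν x * chainLink S Λ m j x (X (Fin.last m))) * linkW S Λ m X *
          kerPow (seqPL S P Λ m) s X Y
      else 0) := by
  induction j with
  | zero => simp [chainLink]; rfl
  | succ j ih =>
    have := ih (fun k hk => hP k (by omega)) (fun k hk => hΛ k (by omega))
      (fun k hk => hint k (by omega)) (fun w => ∑ x, ν x * Λ (m + j) x w) (by omega) (by omega)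
    have e : ∀ u : S m, ∑ x, ν x * chainLink S Λ m (j + 1) x u =
        ∑ w, (∑ x, ν x * Λ (m + j) x w) * chainLink S Λ m j w u := by
      intro u
      simp only [chainLink, Finset.mul_sum]
      rw [Finset.sum_comm]
      simp only [← mul_assoc, ← Finset.sum_mul]
    simp only [e]
    rw [← this]
    exact joint_reduce_step (n := m + j) hP hΛ hint s ν a b (by omega) (by omega) (by omega)
      (by omega)

end

/-- Joint law of the level-`n₁` coordinate at time `t₁` and the level-`n₂` coordinate at time
`t₂ = t₁ + s` (with `n = n₂ + j₂ + j₁ ≥ n₁ = n₂ + j₂ ≥ n₂`) of the intertwined Markov chain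
started from `M_n(X) = μ_n(xⁿ) ∏_k Λ(x^{k+1}, x^k)`:
it equals `(μ_n Δⁿ_{n₁,t₁})(a) · Δ^{n₁}_{n₂,t₂-t₁}(a,b)`. -/
theorem joint_space_like_law (S : ℕ → Type) [∀ k, Fintype (S k)] [∀ k, Nonempty (S k)]
    (P : ∀ k, S k → S k → ℝ) (Λ : ∀ k, S (k + 1) → S k → ℝ)
    (n₂ j₂ j₁ : ℕ) (t₁ s : ℕ)
    (hPpos : ∀ k ≤ n₂ + j₂ + j₁, ∀ x y, 0 ≤ P k x y)
    (hPsum : ∀ k ≤ n₂ + j₂ + j₁, ∀ x, ∑ y, P k x y = 1)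
    (hΛpos : ∀ k < n₂ + j₂ + j₁, ∀ x y, 0 ≤ Λ k x y)
    (hΛsum : ∀ k < n₂ + j₂ + j₁, ∀ x, ∑ y, Λ k x y = 1)
    (hint : ∀ k < n₂ + j₂ + j₁, ∀ (x : S (k + 1)) (z : S k),
      ∑ y : S (k + 1), P (k + 1) x y * Λ k y z = ∑ w : S k, Λ k x w * P k w z)
    (μ : S (n₂ + j₂ + j₁) → ℝ) (hμpos : ∀ x, 0 ≤ μ x) (hμsum : ∑ x, μ x = 1)
    (a : S (n₂ + j₂)) (b : S n₂) :
    ∑ X : Cfg S (n₂ + j₂ + j₁), ∑ Y : Cfg S (n₂ + j₂ + j₁),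
        (if X ⟨n₂ + j₂, by omega⟩ = a ∧ Y ⟨n₂, by omega⟩ = b then
          (∑ X₀ : Cfg S (n₂ + j₂ + j₁),
              (μ (X₀ (Fin.last (n₂ + j₂ + j₁))) *
                ∏ k : Fin (n₂ + j₂ + j₁), Λ k (X₀ k.succ) (X₀ k.castSucc)) *
                kerPow (seqPL S P Λ (n₂ + j₂ + j₁)) t₁ X₀ X) *
            kerPow (seqPL S P Λ (n₂ + j₂ + j₁)) s X Y
        else 0)
      = (∑ x : S (n₂ + j₂ + j₁), μ x * DeltaNMT S P Λ (n₂ + j₂) j₁ t₁ x a) *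
          DeltaNMT S P Λ n₂ j₂ s a b := by
  have hν := fun X => gibbs_kerPow hPpos hΛpos hint t₁ μ X
  unfold linkW at hν
  simp only [hν]
  have h1 := joint_reduce (m := n₂ + j₂) (j := j₁) hPpos hΛpos hint s
    (fun y => ∑ x, μ x * kerPow (P (n₂ + j₂ + j₁)) t₁ x y) a n₂ (by omega) b (by omega) (by omega)
  refine h1.trans ?_
  have e : ∀ u, ∑ y, (∑ x, μ x * kerPow (P (n₂ + j₂ + j₁)) t₁ x y) *
      chainLink S Λ (n₂ + j₂) j₁ y u = ∑ x, μ x * DeltaNMT S P Λ (n₂ + j₂) j₁ t₁ x u := by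
    intro u
    simp only [DeltaNMT, Finset.mul_sum, Finset.sum_mul]
    rw [Finset.sum_comm]
    simp only [mul_assoc]
  simp only [e]
  -- Conditionally on `x^{n₁} = a` the chain on levels up to `n₁` starts from `M_{δ_a}`.
  have h2 := fun Y => gibbs_kerPow (n := n₂ + j₂) (P := P) (Λ := Λ)
    (fun k hk => hPpos k (by omega)) (fun k hk => hΛpos k (by omega))
    (fun k hk => hint k (by omega)) s (fun x => if x = a then 1 else 0) Y
  have h3 := gibbs_marginal (q := n₂) (j := j₂) (Λ := Λ) (fun k hk => hΛsum k (by omega))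
    (fun x => kerPow (P (n₂ + j₂)) s a x) b (by omega)
  simp only [ite_mul, one_mul, zero_mul, Finset.sum_ite_eq', Finset.mem_univ, if_true] at h2
  simp only [← h2] at h3
  unfold DeltaNMT at *
  rw [← h3, Finset.mul_sum, Finset.sum_comm]
  refine Finset.sum_congr rfl fun Y _ => ?_
  by_cases hY : Y ⟨n₂, by omega⟩ = b
  · simp only [hY, and_true, if_true, Finset.mul_sum]
    refine Finset.sum_congr rfl fun X _ => ?_
    split_ifs with hX
    · rw [hX, mul_assoc]
    · rw [mul_zero]
  · simp [hY]
end

section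
/- (Eynard–Mehta theorem, finite form.) Let m, N ≥ 1, let 𝔛^{(1)},…,𝔛^{(m)} be finite sets, and let Φ_i : 𝔛^{(1)} → ℂ, Ψ_i : 𝔛^{(m)} → ℂ (1 ≤ i ≤ N) and 𝒯_{k,k+1} : 𝔛^{(k)} × 𝔛^{(k+1)} → ℂ (1 ≤ k ≤ m−1) be given. For a configuration (X^{(1)},…,X^{(m)}) with X^{(k)} ⊆ 𝔛^{(k)}, |X^{(k)}| = N, define the weight W = det[Φ_i(x_j^{(1)})]_{i,j=1}^N ∏_{k=1}^{m−1} det[𝒯_{k,k+1}(x_i^{(k)}, x_j^{(k+1)})]_{i,j=1}^N det[Ψ_i(x_j^{(m)})]_{i,j=1}^N (independent of the chosen orderings of the X^{(k)}). Define 𝒯_{i,j} = 𝒯_{i,i+1} ∗ ⋯ ∗ 𝒯_{j−1,j} for i < j and 𝒯_{i,j} = 0 for i ≥ j, and the N×N matrix G by G_{ij} = Φ_i ∗ 𝒯_{1,2} ∗ ⋯ ∗ 𝒯_{m−1,m} ∗ Ψ_j; assume det G ≠ 0. Set K(t_1,x_1; t_2,x_2) = −𝒯_{t_1,t_2}(x_1,x_2)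 + ∑_{k,ℓ=1}^N [G^{−1}]_{k,ℓ} (𝒯_{t_1,m} ∗ Ψ_k)(x_1) (Φ_ℓ ∗ 𝒯_{1,t_2})(x_2), with the conventions 𝒯_{t,m} ∗ Ψ_k = Ψ_k for t = m and Φ_ℓ ∗ 𝒯_{1,t} = Φ_ℓ for t = 1. Then for any n ≥ 1 and any pinned points (t_1,x_1), …, (t_n,x_n) with distinct pairs, ∑_{configurations containing x_r ∈ X^{(t_r)} for all r} W / ∑_{all configurations} W = det(K(t_r, x_r; t_s, x_s))_{r,s=1}^n (the denominator being nonzero since it is a nonzero multiple of det G). -/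
/-!
Inclusion–exclusion reduces the pinned sum to sums over configurations avoiding the points `ξ r`,
`r ∈ S`; these have the product form `∑ W(x) ∏ h(x_j^k)` with `h` the indicator of the complement
of the pinned points in `S`. Applying Andréief's identity slice by slice (`sum_fwd`, `sum_WtEM`)
turns such a sum into `((N+1)!)^(m+1)` times the determinant of the thinned Gram matrix
`Φ h₀ 𝒯_{0,1} h₁ ⋯ 𝒯_{m-1,m} h_m Ψ`.

On the disjoint union of the slices, let `𝒯` be the one-step operator, `C = (1 - 𝒯)⁻¹` the matrix
of all chains (`bigC`), and `P` the projection onto the pinned points in `S`, so `h = 1 - P`. The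
kernel is `K = -(C - 1) + C Ψ G⁻¹ Φ C`. If `F = Φ + F (1 - P) 𝒯` are the thinned forward chains,
then `F Q = Φ C` with `Q = 1 + P (C - 1)`, whence `1 - P K = (1 - P C Ψ G⁻¹ F) Q`. Since `Q` is
block unitriangular in time, `det Q = 1`, and the Weinstein–Aronszajn identity gives
`det (1 - P K) det G = det (G - F P C Ψ) = det (F (1 - P) Ψ)`, the thinned Gram determinant
(`det_one_sub_kernel`). A second use of Weinstein–Aronszajn restricts `det (1 - P K)` to the pinned
points, which is where their distinctness enters (`diagonal_avoid`, `sum_avoid`).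

Finally `det K = ∑_S (-1)^|S| det (1 - D_S K)`, `D_S` the coordinate projection onto `S`
(`det_eq_sum_det_one_sub`), matches the inclusion–exclusion sum term by term; `S = ∅` gives the
denominator.
-/


open Classical

section EynardMehta

variable (𝒳 : ℕ → Type) [∀ k, Fintype (𝒳 k)] [∀ k, DecidableEq (𝒳 k)]
  (T : ∀ k, 𝒳 k → 𝒳 (k + 1) → ℂ)

/-- The convolution chain `𝒯_{i,j} = 𝒯_{i,i+1} ∗ ⋯ ∗ 𝒯_{j-1,j}` for `i < j`,
and `𝒯_{i,j} = 0` for `i ≥ j`. -/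
noncomputable def chainT (i : ℕ) : (j : ℕ) → 𝒳 i → 𝒳 j → ℂ
  | 0 => fun _ _ => 0
  | j + 1 => fun x y =>
      if h : i = j then T j (h ▸ x) y
      else if i < j then ∑ z : 𝒳 j, chainT i j x z * T j z y
      else 0

/-- The convolution chain with the identity-kernel convention at `i = j` (used for the
boundary conventions `𝒯_{t,m} ∗ Ψ = Ψ` at `t = m` and `Φ ∗ 𝒯_{0,t} = Φ` at `t = 0`). -/
noncomputable def chainTId (i j : ℕ) (x : 𝒳 i) (y : 𝒳 j) : ℂ :=
  if h : i = j then (if h ▸ x = y then 1 else 0) else chainT 𝒳 T i j x y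

variable (N m : ℕ) (Φ : Fin (N + 1) → 𝒳 0 → ℂ) (Ψ : Fin (N + 1) → 𝒳 m → ℂ)

/-- The Gram matrix `G_{ij} = Φ_i ∗ 𝒯_{0,1} ∗ ⋯ ∗ 𝒯_{m-1,m} ∗ Ψ_j`. -/
noncomputable def GmatEM : Matrix (Fin (N + 1)) (Fin (N + 1)) ℂ :=
  Matrix.of fun i j => ∑ x : 𝒳 0, ∑ y : 𝒳 m, Φ i x * chainTId 𝒳 T 0 m x y * Ψ j y

/-- The Eynard–Mehta correlation kernel
`K(t₁,x₁;t₂,x₂) = -𝒯_{t₁,t₂}(x₁,x₂) + ∑_{k,ℓ} [G⁻¹]_{kℓ} (𝒯_{t₁,m} ∗ Ψ_k)(x₁) (Φ_ℓ ∗ 𝒯_{0,t₂})(x₂)`. -/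
noncomputable def KkerEM (t₁ : ℕ) (x₁ : 𝒳 t₁) (t₂ : ℕ) (x₂ : 𝒳 t₂) : ℂ :=
  - chainT 𝒳 T t₁ t₂ x₁ x₂ +
    ∑ k : Fin (N + 1), ∑ l : Fin (N + 1),
      (GmatEM 𝒳 T N m Φ Ψ)⁻¹ k l
        * (∑ y : 𝒳 m, chainTId 𝒳 T t₁ m x₁ y * Ψ k y)
        * (∑ x : 𝒳 0, Φ l x * chainTId 𝒳 T 0 t₂ x x₂)

/-- The weight of a configuration with `N+1` points at each of the `m+1` time slices:
`W = det[Φ_i(x_j⁰)] ∏_k det[𝒯(x_i^k, x_j^{k+1})] det[Ψ_i(x_j^m)]`. -/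
noncomputable def WtEM (x : ∀ k : Fin (m + 1), Fin (N + 1) → 𝒳 k) : ℂ :=
  (Matrix.of fun i j : Fin (N + 1) => Φ i (x 0 j)).det *
    (∏ k : Fin m,
      (Matrix.of fun i j : Fin (N + 1) => T k (x k.castSucc i) (x k.succ j)).det) *
    (Matrix.of fun i j : Fin (N + 1) => Ψ i (x (Fin.last m) j)).det

set_option linter.unusedSectionVars false

/-! ### Linear algebra -/

/-- Andréief's identity (the Cauchy–Binet formula summed over ordered tuples). -/
theorem andreief {X : Type*} [Fintype X] {M : ℕ} (A : Matrix (Fin M) X ℂ)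
    (B : Matrix X (Fin M) ℂ) :
    ∑ y : Fin M → X, (Matrix.of fun i j => A i (y j)).det * (Matrix.of fun i j => B (y i) j).det
      = (M.factorial : ℂ) * (A * B).det := by
  have key : ∀ σ : Equiv.Perm (Fin M),
      ∑ y : Fin M → X, (∏ j, A (σ j) (y j)) * (Matrix.of fun i j => B (y i) j).det
        = (Equiv.Perm.sign σ : ℂ) * (A * B).det := by
    intro σ
    rw [← Matrix.det_permute]
    have h1 : ((A * B).submatrix σ id) = fun i => ∑ z, A (σ i) z • B z := by
      ext i j
      simp [Matrix.mul_apply, Finset.sum_apply]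
    rw [h1]
    have h2 := (Matrix.detRowAlternating (R := ℂ) (n := Fin M)).toMultilinearMap.map_sum
      (fun i z => A (σ i) z • B z)
    refine Eq.trans ?_ h2.symm
    refine Finset.sum_congr rfl fun y _ => ?_
    exact ((Matrix.detRowAlternating (R := ℂ) (n := Fin M)).toMultilinearMap.map_smul_univ
      (fun i => A (σ i) (y i)) (fun i => B (y i))).symm
  have hs : ∀ σ : Equiv.Perm (Fin M),
      (Equiv.Perm.sign σ : ℂ) * ((Equiv.Perm.sign σ : ℂ) * (A * B).det) = (A * B).det := by
    intro σ
    rcases Int.units_eq_one_or (Equiv.Perm.sign σ) with h | h <;> simp [h]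
  calc _ = ∑ σ : Equiv.Perm (Fin M), (Equiv.Perm.sign σ : ℂ) *
        ∑ y : Fin M → X, (∏ j, A (σ j) (y j)) * (Matrix.of fun i j => B (y i) j).det := by
        simp_rw [Matrix.det_apply' (Matrix.of fun i j => A i _), Finset.sum_mul, Finset.mul_sum]
        rw [Finset.sum_comm]
        simp [mul_assoc]
    _ = _ := by
        simp_rw [key, hs]
        simp [Fintype.card_perm]

/-- Inclusion–exclusion for determinants: expand `K = 1 + (K - 1)` by multilinearity in the rows. -/
theorem det_eq_sum_det_one_sub {n : ℕ} (K : Matrix (Fin n) (Fin n) ℂ) :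
    K.det = ∑ S : Finset (Fin n), (-1) ^ S.card *
      (1 - Matrix.diagonal (fun r => if r ∈ S then (1 : ℂ) else 0) * K).det := by
  have h := (Matrix.detRowAlternating (R := ℂ) (n := Fin n)).toMultilinearMap.map_add_univ
    (fun i => K i - (1 : Matrix (Fin n) (Fin n) ℂ) i) (fun i => (1 : Matrix (Fin n) (Fin n) ℂ) i)
  have h0 : ((fun i => K i - (1 : Matrix (Fin n) (Fin n) ℂ) i) +
      (fun i => (1 : Matrix (Fin n) (Fin n) ℂ) i)) = K := by
    ext i j; simp
  rw [h0] at h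
  refine Eq.trans h ?_
  refine Finset.sum_congr rfl fun S _ => ?_
  have h1 : (S.piecewise (fun i => K i - (1 : Matrix (Fin n) (Fin n) ℂ) i)
      (fun i => (1 : Matrix (Fin n) (Fin n) ℂ) i)) = fun i => (if i ∈ S then (-1 : ℂ) else 1) •
        (1 - Matrix.diagonal (fun r => if r ∈ S then (1 : ℂ) else 0) * K) i := by
    ext i j
    by_cases hi : i ∈ S <;> simp [hi, Matrix.diagonal_mul]
  rw [h1]
  refine Eq.trans ((Matrix.detRowAlternating (R := ℂ) (n := Fin n)).toMultilinearMap.map_smul_univ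
      (fun i => if i ∈ S then (-1 : ℂ) else 1) _) ?_
  rw [Finset.prod_ite_mem]
  simp
  rfl

/-- A rank-`N` perturbation identity. Here `C` plays the role of `(1 - 𝒯)⁻¹` and `F` of
`Φ (1 - (1 - P) 𝒯)⁻¹`, so that `F (1 - P) Ψ` is the Gram matrix thinned by `1 - P`. -/
theorem det_one_sub_kernel {E M : Type*} [Fintype E] [DecidableEq E] [Fintype M] [DecidableEq M]
    (C 𝒯 P : Matrix E E ℂ) (Φ F : Matrix M E ℂ) (Ψ : Matrix E M ℂ)
    (hC : C - C * 𝒯 = 1) (hF : F = Φ + F * (1 - P) * 𝒯)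
    (hQ : (1 + P * (C - 1)).det = 1) (hG : (Φ * C * Ψ).det ≠ 0) :
    (1 - P * (-(C - 1) + C * Ψ * (Φ * C * Ψ)⁻¹ * (Φ * C))).det * (Φ * C * Ψ).det
      = (F * (1 - P) * Ψ).det := by
  have hC' : (1 - 𝒯) * C = 1 := by
    rw [mul_eq_one_comm, mul_sub, mul_one, hC]
  have h𝒯 : 𝒯 * C = C - 1 := by
    rw [sub_mul, one_mul] at hC'
    rw [← hC']; abel
  have hFQ : F * (1 + P * (C - 1)) = Φ * C := by
    have h1 : F * C = Φ * C + F * (1 - P) * (C - 1) := by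
      conv_lhs => rw [hF]
      rw [Matrix.add_mul, Matrix.mul_assoc _ 𝒯, h𝒯]
    have h2 : F * (1 + P * (C - 1)) = F * C - F * (1 - P) * (C - 1) := by
      simp only [Matrix.mul_add, Matrix.mul_sub, Matrix.sub_mul, Matrix.mul_one, Matrix.mul_assoc]
      abel
    rw [h2, h1]; abel
  set G := Φ * C * Ψ with hGdef
  have e1 : 1 - P * (-(C - 1) + C * Ψ * G⁻¹ * (Φ * C))
      = (1 - (P * C * Ψ * G⁻¹) * F) * (1 + P * (C - 1)) := by
    rw [Matrix.sub_mul, Matrix.mul_assoc _ F, hFQ]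
    simp only [Matrix.mul_add, Matrix.mul_sub, Matrix.mul_neg, Matrix.one_mul, Matrix.mul_one,
      Matrix.mul_assoc]
    abel
  rw [e1, Matrix.det_mul, hQ, mul_one, Matrix.det_one_sub_mul_comm, ← Matrix.det_mul,
    Matrix.sub_mul, Matrix.one_mul]
  congr 1
  have hu : IsUnit G.det := isUnit_iff_ne_zero.mpr hG
  have e2 : F * (P * C * Ψ * G⁻¹) * G = F * P * C * Ψ := by
    rw [Matrix.mul_assoc F, Matrix.nonsing_inv_mul_cancel_right _ _ hu]
    simp only [Matrix.mul_assoc]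
  rw [e2, hGdef, ← hFQ]
  simp only [Matrix.mul_add, Matrix.mul_sub, Matrix.add_mul, Matrix.sub_mul, Matrix.mul_one,
      Matrix.mul_assoc]
  abel

/-! ### Summation of the weights by transfer matrices -/

/-- The thinned forward chains `Φ_i h₀ ∗ 𝒯_{0,1} h₁ ∗ ⋯ ∗ 𝒯_{k-1,k}`; the last slice carries no
factor `h`. -/
noncomputable def fwd (h : ∀ k, 𝒳 k → ℂ) : (k : ℕ) → Fin (N + 1) → 𝒳 k → ℂ
  | 0 => Φ
  | k + 1 => fun i y => ∑ z : 𝒳 k, fwd h k i z * h k z * T k z y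

/-- Integrating out all slices but the last one; each of them
contributes a factor `(N+1)!` by Andréief's identity. -/
theorem sum_fwd (h : ∀ k, 𝒳 k → ℂ) (m : ℕ) (Θ : (Fin (N + 1) → 𝒳 m) → ℂ) :
    ∑ x : ∀ k : Fin (m + 1), Fin (N + 1) → 𝒳 k,
      (Matrix.of fun i j : Fin (N + 1) => Φ i (x 0 j)).det *
      (∏ k : Fin m,
        (Matrix.of fun i j : Fin (N + 1) => T k (x k.castSucc i) (x k.succ j)).det) *
      (∏ k : Fin m, ∏ j, h k (x k.castSucc j)) * Θ (x (Fin.last m))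
    = ((N + 1).factorial : ℂ) ^ m *
      ∑ y : Fin (N + 1) → 𝒳 m,
        (Matrix.of fun i j : Fin (N + 1) => fwd 𝒳 T N Φ h m i (y j)).det * Θ y := by
  induction m with
  | zero =>
    rw [← (Equiv.piUnique (fun k : Fin 1 => Fin (N + 1) → 𝒳 k)).symm.sum_comp]
    simp [fwd]
    rfl
  | succ m ih =>
    rw [← (Fin.snocEquiv (fun k : Fin (m + 2) => Fin (N + 1) → 𝒳 k)).sum_comp,
      Fintype.sum_prod_type, Finset.sum_comm]
    have step := ih (fun z => (∏ j, h m (z j)) * ∑ y : Fin (N + 1) → 𝒳 (m + 1),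
      (Matrix.of fun i j : Fin (N + 1) => T m (z i) (y j)).det * Θ y)
    have hA : ∀ y : Fin (N + 1) → 𝒳 (m + 1),
        ∑ z : Fin (N + 1) → 𝒳 m,
          (Matrix.of fun i j : Fin (N + 1) => fwd 𝒳 T N Φ h m i (z j)).det * (∏ j, h m (z j)) *
          (Matrix.of fun i j : Fin (N + 1) => T m (z i) (y j)).det
        = ((N + 1).factorial : ℂ) *
          (Matrix.of fun i j : Fin (N + 1) => fwd 𝒳 T N Φ h (m + 1) i (y j)).det := by
      intro y
      have := andreief (Matrix.of fun i z => fwd 𝒳 T N Φ h m i z * h m z)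
        (Matrix.of fun z j => T m z (y j))
      refine Eq.trans ?_ (this.trans ?_)
      · refine Finset.sum_congr rfl fun z _ => ?_
        congr 1
        rw [mul_comm, ← Matrix.det_mul_row]
        simp [mul_comm]
      · congr 2
    calc _ = _ := ?_
      _ = _ := step
      _ = _ := ?_
    · refine Finset.sum_congr rfl fun x _ => ?_
      rw [Finset.mul_sum, Finset.mul_sum]
      refine Finset.sum_congr rfl fun y _ => ?_
      rw [Fin.prod_univ_castSucc, Fin.prod_univ_castSucc]
      simp only [Fin.snocEquiv_apply, Fin.snoc_last, ← Fin.castSucc_zero, Fin.snoc_castSucc,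
        Fin.succ_last, Fin.succ_castSucc]
      have hr : ∀ a b c d e f : ℂ, a * (b * c) * (d * e) * f = a * b * d * (e * (c * f)) := by
        intros; ring
      exact hr _ _ _ _ _ _
    · rw [pow_succ, mul_assoc]
      congr 1
      simp_rw [Finset.mul_sum, ← mul_assoc, ← hA, Finset.sum_mul]
      rw [Finset.sum_comm]

/-- The `h`-weighted total weight is the determinant of the Gram matrix with `h` inserted at every
slice. -/
theorem sum_WtEM (h : ∀ k, 𝒳 k → ℂ) :
    ∑ x : ∀ k : Fin (m + 1), Fin (N + 1) → 𝒳 k,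
      WtEM 𝒳 T N m Φ Ψ x * ∏ k : Fin (m + 1), ∏ j, h k (x k j)
    = ((N + 1).factorial : ℂ) ^ (m + 1) *
      (Matrix.of fun i j : Fin (N + 1) => ∑ y, fwd 𝒳 T N Φ h m i y * h m y * Ψ j y).det := by
  have h1 := sum_fwd 𝒳 T N Φ h m (fun y => (Matrix.of fun i j : Fin (N + 1) => Ψ i (y j)).det *
    ∏ j, h m (y j))
  refine Eq.trans ?_ (h1.trans ?_)
  · refine Finset.sum_congr rfl fun x _ => ?_
    rw [WtEM, Fin.prod_univ_castSucc]
    simp only [Fin.val_castSucc, Fin.val_last]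
    ring
  · rw [pow_succ, mul_assoc]
    congr 1
    have := andreief (Matrix.of fun i z => fwd 𝒳 T N Φ h m i z * h m z)
        (Matrix.of fun z j => Ψ j z)
    refine Eq.trans ?_ (this.trans ?_)
    · refine Finset.sum_congr rfl fun z _ => ?_
      rw [← Matrix.det_transpose (Matrix.of fun i j => Ψ i (z j)), mul_comm (Matrix.det _) (∏ j, _),
        ← mul_assoc, mul_comm (Matrix.det _) (∏ j, _), ← Matrix.det_mul_row]
      congr 2
      ext i j
      simp [mul_comm]
    · congr 2

/-! ### The operators on the space-time set -/

/-- The one-step transfer operator on the disjoint union of all slices. -/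
noncomputable def bigT : Matrix (Σ k : Fin (m + 1), 𝒳 k) (Σ k : Fin (m + 1), 𝒳 k) ℂ :=
  fun a b => if h : (b.1 : ℕ) = a.1 + 1 then T a.1 a.2 (h ▸ b.2) else 0

/-- All transfer chains at once, the identity included: the inverse of `1 - bigT`. -/
noncomputable def bigC : Matrix (Σ k : Fin (m + 1), 𝒳 k) (Σ k : Fin (m + 1), 𝒳 k) ℂ :=
  fun a b => chainTId 𝒳 T a.1 b.1 a.2 b.2

/-- The functions `Φ_i`, extended by zero from the first slice. -/
noncomputable def bigPhi : Matrix (Fin (N + 1)) (Σ k : Fin (m + 1), 𝒳 k) ℂ :=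
  fun i a => if h : (a.1 : ℕ) = 0 then Φ i (h ▸ a.2) else 0

/-- The functions `Ψ_j`, extended by zero from the last slice. -/
noncomputable def bigPsi : Matrix (Σ k : Fin (m + 1), 𝒳 k) (Fin (N + 1)) ℂ :=
  fun a j => if h : (a.1 : ℕ) = m then Ψ j (h ▸ a.2) else 0

/-- The rows `fwd` on all slices. -/
noncomputable def bigF (h : ∀ k, 𝒳 k → ℂ) : Matrix (Fin (N + 1)) (Σ k : Fin (m + 1), 𝒳 k) ℂ :=
  fun i a => fwd 𝒳 T N Φ h a.1 i a.2

theorem chainT_eq_zero {i j : ℕ} (hij : j ≤ i) (x : 𝒳 i) (y : 𝒳 j) : chainT 𝒳 T i j x y = 0 := by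
  cases j with
  | zero => rfl
  | succ j =>
    simp only [chainT]
    rw [dif_neg (by omega), if_neg (by omega)]

theorem chainT_succ (i j : ℕ) (x : 𝒳 i) (y : 𝒳 (j + 1)) :
    chainT 𝒳 T i (j + 1) x y = ∑ z, chainTId 𝒳 T i j x z * T j z y := by
  by_cases h : i = j
  · subst h
    simp [chainT, chainTId]
  · simp only [chainT, chainTId, dif_neg h]
    split_ifs with h2
    · rfl
    · simp [chainT_eq_zero 𝒳 T (show j ≤ i by omega)]

theorem bigC_sub_one (a b : Σ k : Fin (m + 1), 𝒳 k) :
    (bigC 𝒳 T m - 1) a b = chainT 𝒳 T a.1 b.1 a.2 b.2 := by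
  obtain ⟨i, x⟩ := a
  obtain ⟨j, y⟩ := b
  by_cases h : i = j
  · subst h
    simp [bigC, chainTId, chainT_eq_zero, Matrix.one_apply]
  · have h' : (i : ℕ) ≠ j := fun e => h (Fin.ext e)
    have h2 : (⟨i, x⟩ : Σ k : Fin (m + 1), 𝒳 k) ≠ ⟨j, y⟩ := fun e => h (congrArg Sigma.fst e)
    simp [bigC, chainTId, h', h2]

/-- A sum against a column of `bigT` only sees the preceding slice. -/
theorem sum_mul_bigT (f : ∀ k, 𝒳 k → ℂ) (j : ℕ) (hj : j + 1 < m + 1) (y : 𝒳 (j + 1)) :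
    ∑ a : Σ k : Fin (m + 1), 𝒳 k, f a.1 a.2 * bigT 𝒳 T m a ⟨⟨j + 1, hj⟩, y⟩
      = ∑ z, f j z * T j z y := by
  rw [Fintype.sum_sigma, Finset.sum_eq_single (⟨j, by omega⟩ : Fin (m + 1))]
  · simp [bigT]
  · intro k _ hk
    have : j ≠ k := fun e => hk (Fin.ext e.symm)
    simp [bigT, this]
  · simp

theorem bigC_mul_bigT : bigC 𝒳 T m - bigC 𝒳 T m * bigT 𝒳 T m = 1 := by
  rw [sub_eq_iff_eq_add, ← sub_eq_iff_eq_add']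
  ext a b
  rw [bigC_sub_one]
  obtain ⟨⟨j, hj⟩, y⟩ := b
  cases j with
  | zero => simp [chainT, Matrix.mul_apply, bigT]
  | succ j =>
    rw [chainT_succ, Matrix.mul_apply]
    exact (sum_mul_bigT 𝒳 T m (fun k z => chainTId 𝒳 T a.1 k a.2 z) j hj y).symm

theorem bigF_eq (h : ∀ k, 𝒳 k → ℂ) :
    bigF 𝒳 T N m Φ h = bigPhi 𝒳 N m Φ +
      bigF 𝒳 T N m Φ h * Matrix.diagonal (fun a : Σ k : Fin (m + 1), 𝒳 k => h a.1 a.2) *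
        bigT 𝒳 T m := by
  ext i ⟨⟨j, hj⟩, y⟩
  cases j with
  | zero => simp [bigF, fwd, bigPhi, Matrix.mul_apply, bigT]
  | succ j =>
    rw [Matrix.add_apply, Matrix.mul_apply]
    have := sum_mul_bigT 𝒳 T m (fun k z => fwd 𝒳 T N Φ h k i z * h k z) j hj y
    simp only [Matrix.mul_diagonal]
    simp [bigF, fwd, bigPhi] at this ⊢
    exact this.symm

theorem mul_bigPsi {M : Type*} (f : M → ∀ k, 𝒳 k → ℂ) (i : M) (j : Fin (N + 1)) :
    ((Matrix.of fun i a => f i a.1 a.2 : Matrix M (Σ k : Fin (m + 1), 𝒳 k) ℂ) *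
      bigPsi 𝒳 N m Ψ) i j = ∑ y, f i m y * Ψ j y := by
  rw [Matrix.mul_apply, Fintype.sum_sigma, Finset.sum_eq_single (Fin.last m)]
  · simp [bigPsi]
  · intro k _ hk
    have : (k : ℕ) ≠ m := fun e => hk (Fin.ext e)
    simp [bigPsi, this]
  · simp

theorem bigPhi_mul {M : Type*} (f : M → ∀ k, 𝒳 k → ℂ) (i : M) (l : Fin (N + 1)) :
    (bigPhi 𝒳 N m Φ * (Matrix.of fun a i => f i a.1 a.2 :
      Matrix (Σ k : Fin (m + 1), 𝒳 k) M ℂ)) l i = ∑ x, Φ l x * f i 0 x := by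
  rw [Matrix.mul_apply, Fintype.sum_sigma, Finset.sum_eq_single (0 : Fin (m + 1))]
  · simp only [bigPhi, Fin.val_zero, Matrix.of_apply]
    rfl
  · intro k _ hk
    have : (k : ℕ) ≠ 0 := fun e => hk (Fin.ext e)
    simp [bigPhi, this]
  · simp

theorem bigC_mul_bigPsi (a : Σ k : Fin (m + 1), 𝒳 k) (k : Fin (N + 1)) :
    (bigC 𝒳 T m * bigPsi 𝒳 N m Ψ) a k = ∑ y, chainTId 𝒳 T a.1 m a.2 y * Ψ k y :=
  mul_bigPsi 𝒳 N m Ψ (fun (a : Σ k : Fin (m + 1), 𝒳 k) k y => chainTId 𝒳 T a.1 k a.2 y) a k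

theorem bigPhi_mul_bigC (b : Σ k : Fin (m + 1), 𝒳 k) (l : Fin (N + 1)) :
    (bigPhi 𝒳 N m Φ * bigC 𝒳 T m) l b = ∑ x, Φ l x * chainTId 𝒳 T 0 b.1 x b.2 :=
  bigPhi_mul 𝒳 N m Φ (fun (b : Σ k : Fin (m + 1), 𝒳 k) k x => chainTId 𝒳 T k b.1 x b.2) b l

theorem bigG : bigPhi 𝒳 N m Φ * bigC 𝒳 T m * bigPsi 𝒳 N m Ψ = GmatEM 𝒳 T N m Φ Ψ := by
  ext i j
  have h := bigPhi_mul 𝒳 N m Φ (fun (j : Fin (N + 1)) k x => ∑ y, chainTId 𝒳 T k m x y * Ψ j y) j i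
  have h2 : (Matrix.of fun (a : Σ k : Fin (m + 1), 𝒳 k) (j : Fin (N + 1)) =>
      ∑ y, chainTId 𝒳 T a.1 m a.2 y * Ψ j y) = bigC 𝒳 T m * bigPsi 𝒳 N m Ψ := by
    ext a j
    rw [bigC_mul_bigPsi]; rfl
  rw [h2] at h
  rw [Matrix.mul_assoc, h]
  simp [GmatEM, Finset.mul_sum, mul_assoc]

theorem bigK (a b : Σ k : Fin (m + 1), 𝒳 k) :
    (-(bigC 𝒳 T m - 1) + bigC 𝒳 T m * bigPsi 𝒳 N m Ψ * (GmatEM 𝒳 T N m Φ Ψ)⁻¹ *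
      (bigPhi 𝒳 N m Φ * bigC 𝒳 T m) :
        Matrix (Σ k : Fin (m + 1), 𝒳 k) (Σ k : Fin (m + 1), 𝒳 k) ℂ) a b = KkerEM 𝒳 T N m Φ Ψ a.1 a.2 b.1 b.2 := by
  rw [Matrix.add_apply, Matrix.neg_apply, bigC_sub_one, KkerEM, Matrix.mul_apply]
  congr 1
  rw [Finset.sum_comm]
  refine Finset.sum_congr rfl fun l _ => ?_
  rw [Matrix.mul_apply, bigPhi_mul_bigC, Finset.sum_mul]
  refine Finset.sum_congr rfl fun k _ => ?_
  rw [bigC_mul_bigPsi]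
  ring

/-- The determinant is `1` because `P (C - 1)` is strictly upper triangular in time. -/
theorem det_one_add_diagonal_mul (p : (Σ k : Fin (m + 1), 𝒳 k) → ℂ) :
    (1 + Matrix.diagonal p * (bigC 𝒳 T m - 1)).det = 1 := by
  have hz : ∀ a b : Σ k : Fin (m + 1), 𝒳 k, b.1 ≤ a.1 →
      (1 + Matrix.diagonal p * (bigC 𝒳 T m - 1)) a b = (1 : Matrix _ _ ℂ) a b := by
    intro a b hab
    rw [Matrix.add_apply, Matrix.diagonal_mul, bigC_sub_one,
      chainT_eq_zero 𝒳 T (show (b.1 : ℕ) ≤ a.1 from hab)]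
    simp
  have hbt : (1 + Matrix.diagonal p * (bigC 𝒳 T m - 1)).BlockTriangular Sigma.fst := by
    intro a b hab
    rw [hz a b hab.le, Matrix.one_apply_ne]
    rintro rfl
    exact lt_irrefl _ hab
  rw [hbt.det_fintype]
  refine Finset.prod_eq_one fun k _ => ?_
  have : (1 + Matrix.diagonal p * (bigC 𝒳 T m - 1)).toSquareBlock Sigma.fst k = 1 := by
    ext a b
    rw [Matrix.toSquareBlock_def, Matrix.of_apply, hz _ _ (by rw [a.2, b.2])]
    simp [Matrix.one_apply, Subtype.ext_iff]
  rw [this, Matrix.det_one]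

/-! ### Thinning by a set of pinned points -/

/-- The indicator of the complement of `{e r | r ∈ S}`; the value off the first `m + 1` slices is
immaterial. -/
noncomputable def avoid {n : ℕ} (e : Fin n → Σ k : Fin (m + 1), 𝒳 k) (S : Finset (Fin n))
    (k : ℕ) (z : 𝒳 k) : ℂ :=
  if hk : k < m + 1 then ∏ r ∈ S, (1 - if e r = ⟨⟨k, hk⟩, z⟩ then 1 else 0) else 1

theorem avoid_apply {n : ℕ} (e : Fin n → Σ k : Fin (m + 1), 𝒳 k) (S : Finset (Fin n))
    (k : Fin (m + 1)) (z : 𝒳 k) :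
    avoid 𝒳 m e S k z = ∏ r ∈ S, (1 - if e r = ⟨k, z⟩ then 1 else 0) := by
  simp [avoid, k.2]

theorem diagonal_avoid {n : ℕ} (e : Fin n → Σ k : Fin (m + 1), 𝒳 k)
    (he : Function.Injective e) (S : Finset (Fin n)) :
    (1 : Matrix (Σ k : Fin (m + 1), 𝒳 k) (Σ k : Fin (m + 1), 𝒳 k) ℂ).submatrix id e *
      (Matrix.diagonal (fun r => if r ∈ S then (1 : ℂ) else 0) *
      (1 : Matrix (Σ k : Fin (m + 1), 𝒳 k) (Σ k : Fin (m + 1), 𝒳 k) ℂ).submatrix e id)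
      = Matrix.diagonal (fun a => 1 - avoid 𝒳 m e S a.1 a.2) := by
  ext a b
  rw [Matrix.mul_apply]
  simp only [Matrix.diagonal_mul, Matrix.submatrix_apply, id, Matrix.one_apply,
    Matrix.diagonal_apply, avoid_apply]
  by_cases hab : a = b
  · subst hab
    rw [if_pos rfl]
    by_cases hr : ∃ r, e r = a
    · obtain ⟨r, rfl⟩ := hr
      rw [Finset.sum_eq_single r (fun s _ hs => by
        rw [if_neg (fun h => hs (he h).symm), zero_mul]) (by simp)]
      by_cases hrS : r ∈ S
      · rw [Finset.prod_eq_zero hrS (by simp)]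
        simp [hrS]
      · rw [Finset.prod_eq_one]
        · simp [hrS]
        · intro s hs
          have : e s ≠ e r := fun h => hrS (he h ▸ hs)
          simp [this]
    · push Not at hr
      have hr' := fun r => (hr r).symm
      simp [hr, hr']
  · rw [if_neg hab]
    refine Finset.sum_eq_zero fun r _ => ?_
    by_cases h1 : a = e r
    · have : e r ≠ b := fun h => hab (h1.trans h)
      simp [this]
    · simp [h1]

/-- The total weight of the configurations avoiding the points `e r`, `r ∈ S`, is the total weight
of all configurations times the Fredholm determinant of the kernel on these points. -/
theorem sum_avoid {n : ℕ} (e : Fin n → Σ k : Fin (m + 1), 𝒳 k)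
    (he : Function.Injective e) (S : Finset (Fin n)) (hG : (GmatEM 𝒳 T N m Φ Ψ).det ≠ 0) :
    ∑ x : ∀ k : Fin (m + 1), Fin (N + 1) → 𝒳 k,
      WtEM 𝒳 T N m Φ Ψ x * ∏ k : Fin (m + 1), ∏ j, avoid 𝒳 m e S k (x k j)
    = ((N + 1).factorial : ℂ) ^ (m + 1) * (GmatEM 𝒳 T N m Φ Ψ).det *
      (1 - Matrix.diagonal (fun r => if r ∈ S then (1 : ℂ) else 0) * Matrix.of fun r s : Fin n =>
        KkerEM 𝒳 T N m Φ Ψ (e r).1 (e r).2 (e s).1 (e s).2).det := by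
  have hP : Matrix.diagonal (fun a : Σ k : Fin (m + 1), 𝒳 k => avoid 𝒳 m e S a.1 a.2)
      = 1 - Matrix.diagonal (fun a : Σ k : Fin (m + 1), 𝒳 k => 1 - avoid 𝒳 m e S a.1 a.2) := by
    rw [← Matrix.diagonal_one, Matrix.diagonal_sub]
    simp
  have hF := bigF_eq 𝒳 T N m Φ (avoid 𝒳 m e S)
  rw [hP] at hF
  have key := det_one_sub_kernel (bigC 𝒳 T m) (bigT 𝒳 T m) _ (bigPhi 𝒳 N m Φ) _
    (bigPsi 𝒳 N m Ψ) (bigC_mul_bigT 𝒳 T m) hF (det_one_add_diagonal_mul 𝒳 T m _)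
    (by rw [bigG]; exact hG)
  rw [← hP, bigG, ← diagonal_avoid 𝒳 m e he S, Matrix.mul_assoc, Matrix.det_one_sub_mul_comm] at key
  rw [sum_WtEM, mul_assoc]
  congr 1
  have e1 : (Matrix.of fun i j : Fin (N + 1) =>
      ∑ y, fwd 𝒳 T N Φ (avoid 𝒳 m e S) m i y * avoid 𝒳 m e S m y * Ψ j y)
      = bigF 𝒳 T N m Φ (avoid 𝒳 m e S) *
        Matrix.diagonal (fun a : Σ k : Fin (m + 1), 𝒳 k => avoid 𝒳 m e S a.1 a.2) *
          bigPsi 𝒳 N m Ψ := by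
    ext i j
    have := mul_bigPsi 𝒳 N m Ψ
      (fun i k y => fwd 𝒳 T N Φ (avoid 𝒳 m e S) k i y * avoid 𝒳 m e S k y) i j
    rw [Matrix.of_apply, ← this]
    refine congrFun (congrFun (congrArg (· * bigPsi 𝒳 N m Ψ) ?_) i) j
    ext i a
    rw [Matrix.mul_diagonal]
    rfl
  rw [e1, ← key, mul_comm]
  congr 3
  rw [Matrix.mul_assoc, Matrix.mul_assoc]
  congr 1
  ext r s
  rw [← Matrix.mul_assoc, Matrix.of_apply, ← bigK, Matrix.mul_apply]
  simp only [Matrix.mul_apply (M := Matrix.submatrix _ _ _), Matrix.submatrix_apply, id,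
    Matrix.one_apply]
  simp

/-- Inclusion–exclusion over the pinned points missed by the configuration. -/
theorem pinned_indicator {n : ℕ} (t : Fin n → Fin (m + 1)) (ξ : ∀ r, 𝒳 (t r))
    (x : ∀ k : Fin (m + 1), Fin (N + 1) → 𝒳 k) (w : ℂ) :
    (if ∀ r, ∃ i, x (t r) i = ξ r then w else 0)
      = ∑ S : Finset (Fin n), (-1) ^ S.card *
        (w * ∏ k : Fin (m + 1), ∏ j, avoid 𝒳 m (fun r => ⟨t r, ξ r⟩) S k (x k j)) := by
  have h1 : ∀ S : Finset (Fin n),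
      ∏ k : Fin (m + 1), ∏ j, avoid 𝒳 m (fun r => ⟨t r, ξ r⟩) S k (x k j)
        = ∏ r ∈ S, ∏ j, (1 - if x (t r) j = ξ r then (1 : ℂ) else 0) := by
    intro S
    simp_rw [avoid_apply]
    rw [Finset.prod_congr rfl fun k _ => Finset.prod_comm, Finset.prod_comm]
    refine Finset.prod_congr rfl fun r _ => ?_
    rw [Finset.prod_comm]
    refine Finset.prod_congr rfl fun j _ => ?_
    rw [Finset.prod_eq_single (t r)]
    · simp [eq_comm]
    · intro k _ hk
      have : (⟨t r, ξ r⟩ : Σ k : Fin (m + 1), 𝒳 k) ≠ ⟨k, x k j⟩ :=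
        fun h => hk (congrArg Sigma.fst h).symm
      simp [this]
    · simp
  have h2 : ∑ S : Finset (Fin n), (-1 : ℂ) ^ S.card *
      ∏ r ∈ S, ∏ j, (1 - if x (t r) j = ξ r then (1 : ℂ) else 0)
      = ∏ r, (1 - ∏ j, (1 - if x (t r) j = ξ r then (1 : ℂ) else 0)) := by
    simp_rw [sub_eq_neg_add (1 : ℂ) (∏ j, _)]
    rw [Finset.prod_add]
    simp [Finset.prod_neg]
  simp_rw [h1, mul_left_comm _ w, ← Finset.mul_sum, h2]
  split_ifs with h
  · rw [Finset.prod_eq_one, mul_one]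
    intro r _
    obtain ⟨i, hi⟩ := h r
    rw [Finset.prod_eq_zero (Finset.mem_univ i) (by simp [hi]), sub_zero]
  · push Not at h
    obtain ⟨r, hr⟩ := h
    rw [Finset.prod_eq_zero (Finset.mem_univ r), mul_zero]
    simp [hr]

/-- The Eynard–Mehta theorem (finite form): the point process with weights `W` is
determinantal with correlation kernel `K`; correlation functions at pinned points
`(t_r, ξ_r)` are given by `det(K(t_r,ξ_r; t_s,ξ_s))`. -/
theorem eynard_mehta (n : ℕ) (hn : 1 ≤ n)
    (t : Fin n → Fin (m + 1)) (ξ : ∀ r, 𝒳 (t r))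
    (hdist : Function.Injective fun r => (⟨t r, ξ r⟩ : Σ k : Fin (m + 1), 𝒳 k))
    (hG : (GmatEM 𝒳 T N m Φ Ψ).det ≠ 0) :
    (∑ x : ∀ k : Fin (m + 1), Fin (N + 1) → 𝒳 k,
        if ∀ r, ∃ i, x (t r) i = ξ r then WtEM 𝒳 T N m Φ Ψ x else 0) /
      (∑ x : ∀ k : Fin (m + 1), Fin (N + 1) → 𝒳 k, WtEM 𝒳 T N m Φ Ψ x)
    = (Matrix.of fun r s : Fin n =>
        KkerEM 𝒳 T N m Φ Ψ (t r) (ξ r) (t s) (ξ s)).det := by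
  have hS := fun S => sum_avoid 𝒳 T N m Φ Ψ (fun r => ⟨t r, ξ r⟩) hdist S hG
  have hden : ∑ x : ∀ k : Fin (m + 1), Fin (N + 1) → 𝒳 k, WtEM 𝒳 T N m Φ Ψ x
      = ((N + 1).factorial : ℂ) ^ (m + 1) * (GmatEM 𝒳 T N m Φ Ψ).det := by
    have := hS ∅
    simp only [avoid_apply] at this
    simpa using this
  have hc : ((N + 1).factorial : ℂ) ^ (m + 1) * (GmatEM 𝒳 T N m Φ Ψ).det ≠ 0 :=
    mul_ne_zero (pow_ne_zero _ (Nat.cast_ne_zero.mpr (Nat.factorial_ne_zero _))) hG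
  rw [hden, div_eq_iff hc, det_eq_sum_det_one_sub, Finset.sum_mul]
  simp_rw [pinned_indicator]
  rw [Finset.sum_comm]
  refine Finset.sum_congr rfl fun S _ => ?_
  rw [← Finset.mul_sum, hS S]
  ring

end EynardMehta
end

section
/- (Determinantal structure for measures with increasing number of particles; BFPS theorem, finite form.) Let N ≥ 1, let 𝔛_1,…,𝔛_N be finite sets, and let φ_n : (𝔛_{n−1} ∪ {virt}) × 𝔛_n → ℂ (2 ≤ n ≤ N), φ_1(virt, ·) : 𝔛_1 → ℂ, and Ψ_i : 𝔛_N → ℂ (1 ≤ i ≤ N) be given. For a configuration (x^1, …, x^N) with x^n = (x_1^n,…,x_n^n) an n-point subset of 𝔛_n, define the weight W = ∏_{n=1}^N det(φ_n(x_i^{n−1}, x_j^n))_{i,j=1}^n · det(Ψ_i(x_j^N))_{i,j=1}^N, where x_n^{n−1} := virt. Define φ_{n_1,n_2} = φ_{n_1+1} ∗ ⋯ ∗ φ_{n_2} for n_1 < n_2 and φ_{n_1,n_2} = 0 for n_1 ≥ n_2, and the N×N matrix G by G_{ij} = (φ_i ∗ φ_{i,N} ∗ Ψ_j)(virt); assume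 det G ≠ 0. Set K(n_1,x_1; n_2,x_2) = −φ_{n_1,n_2}(x_1,x_2) + ∑_{ℓ=1}^{n_2} ∑_{k=1}^N [G^{−1}]_{k,ℓ} (φ_{n_1,N} ∗ Ψ_k)(x_1) (φ_ℓ ∗ φ_{ℓ,n_2})(virt, x_2). Then for any pinned points (n_1,x_1),…,(n_p,x_p) (distinct pairs with x_r ∈ 𝔛_{n_r}), ∑_{configurations containing all pinned points} W / ∑_{all configurations} W = det(K(n_r,x_r; n_s,x_s))_{r,s=1}^p. -/
/-!
The proof computes the generating functional of the point process and then extracts the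
correlation functions by inclusion–exclusion.

Summing the weight level by level with Andréief's identity (`sum_det_mul_alternating`) gives
`∑ W = c · det G`, with `c` a product of factorials (`sum_WtBFPS`); this holds for arbitrary
functions `φ_n` and `Ψ_i`. For a function `δ` on the disjoint union of the levels, multiplying
`φ_n(·, y)` by `δ y` multiplies `W` by the product of `δ` over the points of the configuration
(`WtBFPS_deformed`). Therefore the expectation of `∏ δ` is the ratio of two Gram determinants.

Regard the one-step functions as a strictly block triangular matrix `T` on the disjoint union of
the levels. Then the convolution chains form the matrix `Φ = (1 - T)⁻¹`, the Gram matrix is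
`G = V Φ P` (with `V` the virtual functions and `P` the functions `Ψ_j`), and the kernel is
`K = 1 - Φ + Φ P G⁻¹ V Φ`. The deformation multiplies `T` and `V` on the right by the diagonal
matrix `δ`, and Sylvester's determinant identity shows that `det G` gets multiplied by
`det (1 + K (δ - 1))` (`det_deformed`, `sum_WtBFPS_mul`).

Taking `δ` to vanish exactly on a subset `A` of the pinned sites, this is the normalized mass of
the configurations avoiding `A`, and the determinant reduces to `det (1 - χ K)` on the pinned
sites, with `χ` the indicator of `A` (`det_avoid`). The alternating sum over `A` is the mass of
the configurations containing all the pinned sites on one side (`indicator_eq_sum`), and `det K`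
on the other (`det_eq_sum_avoid`).
-/

open Classical

section BFPS

variable (𝒳 : ℕ → Type) [∀ k, Fintype (𝒳 k)] [∀ k, DecidableEq (𝒳 k)] (N : ℕ)
  (t : ∀ k, Option (𝒳 k) → 𝒳 (k + 1) → ℂ) (v0 : 𝒳 0 → ℂ)
  (Ψ : Fin (N + 1) → 𝒳 N → ℂ)

/-- The virtual-variable function `φ_n(virt, ·)` at (0-based) level `i`. -/
def virtF : (i : ℕ) → 𝒳 i → ℂ
  | 0 => v0
  | j + 1 => fun y => t j none y

/-- The convolution chain `φ_{n₁,n₂} = φ_{n₁+1} ∗ ⋯ ∗ φ_{n₂}` for `n₁ < n₂` (over non-virtual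
arguments), with `φ_{n₁,n₂} = 0` for `n₁ ≥ n₂`. -/
noncomputable def chainPhi (i : ℕ) : (j : ℕ) → 𝒳 i → 𝒳 j → ℂ
  | 0 => fun _ _ => 0
  | j + 1 => fun x y =>
      if h : i = j then t j (some (h ▸ x)) y
      else if i < j then ∑ z : 𝒳 j, chainPhi i j x z * t j (some z) y
      else 0

/-- The convolution chain with the identity-kernel convention at `i = j`. -/
noncomputable def chainPhiId (i j : ℕ) (x : 𝒳 i) (y : 𝒳 j) : ℂ :=
  if h : i = j then (if h ▸ x = y then 1 else 0) else chainPhi 𝒳 t i j x y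

/-- The Gram matrix `G_{ij} = (φ_i ∗ φ_{i,N} ∗ Ψ_j)(virt)`. -/
noncomputable def GmatBFPS : Matrix (Fin (N + 1)) (Fin (N + 1)) ℂ :=
  Matrix.of fun i j =>
    ∑ y : 𝒳 N, (∑ z : 𝒳 i, virtF 𝒳 t v0 i z * chainPhiId 𝒳 t i N z y) * Ψ j y

/-- The BFPS correlation kernel
`K(n₁,x₁;n₂,x₂) = -φ_{n₁,n₂}(x₁,x₂) + ∑_{ℓ ≤ n₂} ∑_k [G⁻¹]_{kℓ} (φ_{n₁,N} ∗ Ψ_k)(x₁)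
(φ_ℓ ∗ φ_{ℓ,n₂})(virt, x₂)`. -/
noncomputable def KkerBFPS (n₁ : Fin (N + 1)) (x₁ : 𝒳 n₁) (n₂ : Fin (N + 1)) (x₂ : 𝒳 n₂) : ℂ :=
  - chainPhi 𝒳 t n₁ n₂ x₁ x₂ +
    ∑ l ∈ Finset.univ.filter (fun l : Fin (N + 1) => (l : ℕ) ≤ (n₂ : ℕ)),
      ∑ k : Fin (N + 1),
        (GmatBFPS 𝒳 N t v0 Ψ)⁻¹ k l
          * (∑ y : 𝒳 N, chainPhiId 𝒳 t n₁ N x₁ y * Ψ k y)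
          * (∑ z : 𝒳 l, virtF 𝒳 t v0 l z * chainPhiId 𝒳 t l n₂ z x₂)

/-- The weight of an interlacing-type configuration with `ℓ+1` points at level `ℓ`
(levels `0,…,N`): `W = ∏_n det(φ_n(x_i^{n-1}, x_j^n)) · det(Ψ_i(x_j^N))`, where the extra
row of each `φ`-determinant is the virtual variable. -/
noncomputable def WtBFPS (x : ∀ l : Fin (N + 1), Fin (l.1 + 1) → 𝒳 l) : ℂ :=
  v0 (x 0 0) *
    (∏ l : Fin N,
      (Matrix.of fun i j : Fin (l.1 + 2) =>
        t l (if h : (i : ℕ) < l.1 + 1 then some (x l.castSucc ⟨i, h⟩) else none)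
          (x l.succ j)).det) *
    (Matrix.of fun i j : Fin (N + 1) => Ψ i (x (Fin.last N) j)).det

/-! ### Andréief's identity -/

/-- Andréief's identity (the Cauchy–Binet formula summed over ordered tuples), with one of the two
determinants replaced by an arbitrary alternating form `L`. Expanding the determinant over
permutations, each permutation contributes the same amount, by multilinearity and antisymmetry
of `L`; hence the factor `n!`. -/
theorem sum_det_mul_alternating {n : ℕ} {X E : Type*} [Fintype X] [AddCommGroup E] [Module ℂ E]
    (a : Fin n → X → ℂ) (R : X → E) (L : E [⋀^Fin n]→ₗ[ℂ] ℂ) :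
    ∑ x : Fin n → X, (Matrix.of fun i j => a i (x j)).det * L (fun i => R (x i))
      = n.factorial * L (fun i => ∑ z, a i z • R z) := by
  have key : ∀ σ : Equiv.Perm (Fin n),
      ∑ x : Fin n → X, (((Equiv.Perm.sign σ : ℤ) : ℂ) * ∏ i, a (σ i) (x i)) * L (fun i => R (x i))
        = L (fun i => ∑ z, a i z • R z) := by
    intro σ
    have h1 : L (fun i => ∑ z, a (σ i) z • R z)
        = ∑ x : Fin n → X, (∏ i, a (σ i) (x i)) * L (fun i => R (x i)) := by
      have := L.toMultilinearMap.map_sum (fun i z => a (σ i) z • R z)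
      simp only [AlternatingMap.coe_multilinearMap] at this
      rw [this]
      refine Finset.sum_congr rfl fun x _ => ?_
      have := L.toMultilinearMap.map_smul_univ (fun i => a (σ i) (x i)) (fun i => R (x i))
      simpa using this
    -- antisymmetry cancels the sign of `σ` in the Leibniz formula
    have h2 := L.map_perm (fun i => ∑ z, a i z • R z) σ
    have h3 : ((fun i => ∑ z, a i z • R z) ∘ σ) = fun i => ∑ z, a (σ i) z • R z := rfl
    rw [h3, h1] at h2
    simp_rw [mul_assoc]
    rw [← Finset.mul_sum, h2]
    rcases Int.units_eq_one_or (Equiv.Perm.sign σ) with h | h <;> simp [h]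
  simp_rw [Matrix.det_apply', Finset.sum_mul]
  rw [Finset.sum_comm]
  simp only [Matrix.of_apply]
  rw [Finset.sum_congr rfl fun σ _ => key σ]
  simp [Fintype.card_perm]

/-- The alternating form in `n` arguments obtained from `L` by fixing its last argument to be `w`.
It is used for the determinant whose last row is the row of the virtual variable. -/
def snocAlternating {n : ℕ} {E : Type*} [AddCommGroup E] [Module ℂ E]
    (L : E [⋀^Fin (n + 1)]→ₗ[ℂ] ℂ) (w : E) : E [⋀^Fin n]→ₗ[ℂ] ℂ where
  toFun v := L (Fin.snoc (α := fun _ => E) v w)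
  map_update_add' {i1} v i x y := by
    rw [Subsingleton.elim i1 (instDecidableEqFin n)]
    simp only [Fin.snoc_update, L.map_update_add]
  map_update_smul' {i1} v i c x := by
    rw [Subsingleton.elim i1 (instDecidableEqFin n)]
    simp only [Fin.snoc_update, L.map_update_smul]
  map_eq_zero_of_eq' v i j h hij := by
    refine L.map_eq_zero_of_eq _ (i := i.castSucc) (j := j.castSucc) ?_ ?_
    · simpa using h
    · simpa using hij

/-! ### Convolution chains -/

theorem chainPhi_of_le {i j : ℕ} (h : j ≤ i) (x : 𝒳 i) (y : 𝒳 j) : chainPhi 𝒳 t i j x y = 0 := by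
  cases j with
  | zero => rfl
  | succ j =>
    rw [chainPhi]; beta_reduce
    rw [dif_neg (show i ≠ j by omega), if_neg (show ¬ i < j by omega)]

theorem chainPhiId_self {i : ℕ} (x y : 𝒳 i) :
    chainPhiId 𝒳 t i i x y = if x = y then 1 else 0 := by
  simp [chainPhiId]

theorem chainPhiId_of_ne {i j : ℕ} (h : i ≠ j) (x : 𝒳 i) (y : 𝒳 j) :
    chainPhiId 𝒳 t i j x y = chainPhi 𝒳 t i j x y := by
  simp [chainPhiId, h]

theorem chainPhiId_of_lt {i j : ℕ} (h : j < i) (x : 𝒳 i) (y : 𝒳 j) :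
    chainPhiId 𝒳 t i j x y = 0 := by
  rw [chainPhiId_of_ne _ _ h.ne', chainPhi_of_le _ _ h.le]

/-- The recursion for `φ_{i,j+1}`, uniform in `i`: the identity convention at `i = j` and the
vanishing for `j < i` absorb the case distinction. -/
theorem chainPhi_succ {i j : ℕ} (x : 𝒳 i) (y : 𝒳 (j + 1)) :
    chainPhi 𝒳 t i (j + 1) x y = ∑ z : 𝒳 j, chainPhiId 𝒳 t i j x z * t j (some z) y := by
  rcases lt_trichotomy i j with h | rfl | h
  · rw [chainPhi]; beta_reduce; rw [dif_neg h.ne, if_pos h]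
    simp_rw [chainPhiId_of_ne _ _ h.ne]
  · rw [chainPhi]; beta_reduce; rw [dif_pos rfl]
    simp [chainPhiId_self]
  · rw [chainPhi_of_le _ _ (by omega)]
    simp [chainPhiId_of_lt _ _ h]

/-- The function `(φ_i ∗ φ_{i,j})(virt, ·)` on level `j`. -/
noncomputable def virtChain (i j : ℕ) (y : 𝒳 j) : ℂ :=
  ∑ z : 𝒳 i, virtF 𝒳 t v0 i z * chainPhiId 𝒳 t i j z y

theorem virtChain_self (i : ℕ) (y : 𝒳 i) : virtChain 𝒳 t v0 i i y = virtF 𝒳 t v0 i y := by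
  simp [virtChain, chainPhiId_self]

theorem virtChain_succ {i j : ℕ} (h : i ≤ j) (y : 𝒳 (j + 1)) :
    virtChain 𝒳 t v0 i (j + 1) y = ∑ z : 𝒳 j, virtChain 𝒳 t v0 i j z * t j (some z) y := by
  simp_rw [virtChain, chainPhiId_of_ne 𝒳 t (show i ≠ j + 1 by omega), chainPhi_succ,
    Finset.mul_sum, Finset.sum_mul]
  rw [Finset.sum_comm]
  simp_rw [mul_assoc]

/-! ### Total mass -/

/-- Summing out level `n`: the determinant of the functions `(φ_i ∗ φ_{i,n})(virt, ·)`, `i ≤ n`,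
is carried to the same determinant at level `n + 1`. The row of the virtual variable supplies the
new function, with `i = n + 1`. -/
theorem sum_level (n : ℕ) (y : Fin (n + 2) → 𝒳 (n + 1)) :
    ∑ z : Fin (n + 1) → 𝒳 n,
      (Matrix.of fun i j : Fin (n + 1) => virtChain 𝒳 t v0 i n (z j)).det *
      (Matrix.of fun i j : Fin (n + 2) =>
        t n (if h : (i : ℕ) < n + 1 then some (z ⟨i, h⟩) else none) (y j)).det
    = (n + 1).factorial *
      (Matrix.of fun i j : Fin (n + 2) => virtChain 𝒳 t v0 i (n + 1) (y j)).det := by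
  have := sum_det_mul_alternating (fun (i : Fin (n + 1)) z => virtChain 𝒳 t v0 i n z)
    (fun z (j : Fin (n + 2)) => t n (some z) (y j))
    (snocAlternating Matrix.detRowAlternating (fun j => t n none (y j)))
  convert this using 2
  · refine congrArg _ (congrArg Matrix.det ?_)
    ext i j
    refine Fin.lastCases ?_ (fun i => ?_) i
    · simp [Fin.snoc]
    · simp [Fin.snoc, i.is_le]
  · refine congrArg Matrix.det ?_
    ext i j
    refine Fin.lastCases ?_ (fun i => ?_) i
    · simp [Fin.snoc, virtChain_self, virtF]
    · simp [Fin.snoc, virtChain_succ 𝒳 t v0 i.is_le, i.is_le]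

/-- Summing out all levels but the last one, against an arbitrary function `F` of the top
configuration. -/
theorem sum_levels (F : (Fin (N + 1) → 𝒳 N) → ℂ) :
    ∑ x : ∀ l : Fin (N + 1), Fin (l.1 + 1) → 𝒳 l,
      v0 (x 0 0) *
        (∏ l : Fin N,
          (Matrix.of fun i j : Fin (l.1 + 2) =>
            t l (if h : (i : ℕ) < l.1 + 1 then some (x l.castSucc ⟨i, h⟩) else none)
              (x l.succ j)).det) * F (x (Fin.last N))
    = (∏ l : Fin N, ((l.1 + 1).factorial : ℂ)) * ∑ y : Fin (N + 1) → 𝒳 N,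
      (Matrix.of fun i j : Fin (N + 1) => virtChain 𝒳 t v0 i N (y j)).det * F y := by
  induction N with
  | zero =>
    simp only [Finset.univ_eq_empty, Finset.prod_empty, one_mul, mul_one]
    refine Fintype.sum_equiv (Equiv.piUnique (fun l : Fin 1 => Fin (l.1 + 1) → 𝒳 l)) _ _ fun x => ?_
    simp [virtChain_self, virtF]
  | succ n ih =>
    rw [← (Fin.snocEquiv (fun l : Fin (n + 2) => Fin (l.1 + 1) → 𝒳 l)).sum_comp,
      Fintype.sum_prod_type, Finset.mul_sum]
    refine Finset.sum_congr rfl fun y _ => ?_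
    have := ih (fun z => (Matrix.of fun i j : Fin (n + 2) =>
        t n (if h : (i : ℕ) < n + 1 then some (z ⟨i, h⟩) else none) (y j)).det * F y)
    simp_rw [← mul_assoc] at this
    rw [← Finset.sum_mul, ← Finset.sum_mul, sum_level] at this
    have e1 : ∀ (z : ∀ l : Fin (n + 1), Fin (l.1 + 1) → 𝒳 l) (l : Fin (n + 1)),
        Fin.snocEquiv (fun l : Fin (n + 2) => Fin (l.1 + 1) → 𝒳 l) (y, z) l.castSucc = z l :=
      fun z l => Fin.snoc_castSucc (α := fun l : Fin (n + 2) => Fin (l.1 + 1) → 𝒳 l) y z l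
    have e2 : ∀ (z : ∀ l : Fin (n + 1), Fin (l.1 + 1) → 𝒳 l),
        Fin.snocEquiv (fun l : Fin (n + 2) => Fin (l.1 + 1) → 𝒳 l) (y, z) (Fin.last (n + 1)) = y :=
      fun z => Fin.snoc_last (α := fun l : Fin (n + 2) => Fin (l.1 + 1) → 𝒳 l) y z
    rw [Fin.prod_univ_castSucc]
    rw [← mul_assoc, ← mul_assoc] at this
    rw [← mul_assoc]
    refine Eq.trans ?_ this
    rw [Finset.sum_mul]
    refine Finset.sum_congr rfl fun z _ => ?_
    generalize hX : Fin.snocEquiv (fun l : Fin (n + 2) => Fin (l.1 + 1) → 𝒳 l) (y, z) = X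
    have f1 : ∀ l : Fin (n + 1), X l.castSucc = z l := fun l => hX ▸ e1 z l
    have f2 : X (Fin.last (n + 1)) = y := hX ▸ e2 z
    have f0 : X 0 = z 0 := f1 0
    have f3 : ∀ l : Fin n, X l.castSucc.succ = z l.succ := fun l => f1 l.succ
    have f4 : X (Fin.last n).succ = y := f2
    rw [Fin.prod_univ_castSucc, f2, f0]
    simp only [f1, f3, f4, mul_assoc]
    rfl

/-- The total mass is `det G` up to a nonzero combinatorial factor, which counts the orderings of
the points on each level. There is no assumption on `det G`, so the formula also applies to
deformed weights. -/
theorem sum_WtBFPS :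
    ∑ x : ∀ l : Fin (N + 1), Fin (l.1 + 1) → 𝒳 l, WtBFPS 𝒳 N t v0 Ψ x
    = (∏ l : Fin N, ((l.1 + 1).factorial : ℂ)) * (N + 1).factorial
        * (GmatBFPS 𝒳 N t v0 Ψ).det := by
  have h1 := sum_levels 𝒳 N t v0
    (fun y => (Matrix.of fun i j : Fin (N + 1) => Ψ i (y j)).det)
  have h2 := sum_det_mul_alternating (fun (i : Fin (N + 1)) y => virtChain 𝒳 t v0 i N y)
    (fun y i => Ψ i y) Matrix.detRowAlternating
  rw [mul_assoc]
  refine h1.trans (congrArg _ ?_)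
  refine Eq.trans (Finset.sum_congr rfl fun y _ => congrArg _ ?_) (h2.trans (congrArg _ ?_))
  · exact (Matrix.det_transpose _).symm
  · refine congrArg Matrix.det ?_
    ext i j
    simp [GmatBFPS, virtChain, Finset.sum_apply]

/-! ### A determinant identity -/

/-- The effect on `det (V Φ P)`, where `Φ = (1 - T)⁻¹`, of multiplying `T` and `V` on the right by
`1 + g`: the determinant is multiplied by `det (1 + K g)`, where `K` is the kernel
`1 - Φ + Φ P (V Φ P)⁻¹ V Φ`. The matrix `Q = 1 - (Φ - 1) g` satisfies `Φ' = Q⁻¹ Φ` and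
`1 + g = Q + Φ g`, so the new Gram matrix is `V Φ P + (V Φ g) (Q⁻¹ Φ P)`; the Sylvester identity
`det (1 + A B) = det (1 + B A)` and `det Q = 1` finish the computation. -/
theorem det_deformed {S I : Type*} [Fintype S] [DecidableEq S] [Fintype I] [DecidableEq I]
    (Φ Φ' T g : Matrix S S ℂ) (V : Matrix I S ℂ) (P : Matrix S I ℂ)
    (hΦ : Φ * (1 - T) = 1) (hΦ' : Φ' * (1 - T * (1 + g)) = 1)
    (hT : (1 - T).det = 1) (hT' : (1 - T * (1 + g)).det = 1)
    (hG : (V * Φ * P).det ≠ 0) :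
    (V * (1 + g) * Φ' * P).det
      = (V * Φ * P).det * (1 + (1 - Φ + Φ * P * (V * Φ * P)⁻¹ * (V * Φ)) * g).det := by
  have hΦc := mul_eq_one_comm.mp hΦ
  have hΦc' := mul_eq_one_comm.mp hΦ'
  have hΦT : Φ * T = Φ - 1 := by rw [← hΦ]; noncomm_ring
  set G := V * Φ * P with hGdef
  set Q := 1 - (Φ - 1) * g with hQ
  set R := Φ' * (1 - T) with hR
  have hQ1 : Q = Φ * (1 - T * (1 + g)) := by
    rw [mul_sub, ← mul_assoc, hΦT, hQ]; noncomm_ring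
  have hQR : Q * R = 1 := by
    rw [hQ1, hR, mul_assoc, ← mul_assoc _ Φ', hΦc', one_mul, hΦ]
  have hRΦ : R * Φ = Φ' := by rw [hR, mul_assoc, hΦc, mul_one]
  have hdetQ : Q.det = 1 := by
    have := congrArg Matrix.det hΦ
    rw [Matrix.det_mul, hT, mul_one, Matrix.det_one] at this
    rw [hQ1, Matrix.det_mul, this, hT', one_mul]
  have hD : (1 + g) * Φ' = Φ + Φ * g * (R * Φ) := by
    have : 1 + g = Q + Φ * g := by rw [hQ]; noncomm_ring
    rw [← hRΦ, this, add_mul, ← mul_assoc Q, hQR, one_mul]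
  have hGinv : G * G⁻¹ = 1 := Matrix.mul_nonsing_inv _ (isUnit_iff_ne_zero.mpr hG)
  have hG' : V * (1 + g) * Φ' * P = G * (1 + (G⁻¹ * (V * Φ * g)) * (R * Φ * P)) := by
    rw [Matrix.mul_add G, ← Matrix.mul_assoc G, ← Matrix.mul_assoc G, hGinv, Matrix.one_mul,
      Matrix.mul_one, Matrix.mul_assoc V, hD, Matrix.mul_add, Matrix.add_mul]
    simp only [Matrix.mul_assoc, hGdef]
  rw [hG', Matrix.det_mul, Matrix.det_one_add_mul_comm]
  congr 1
  rw [← one_mul (Matrix.det _), ← hdetQ, ← Matrix.det_mul]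
  congr 1
  have : Q * (1 + R * Φ * P * (G⁻¹ * (V * Φ * g)))
      = Q + (Q * R) * (Φ * P * G⁻¹ * (V * Φ)) * g := by
    rw [Matrix.mul_add, Matrix.mul_one]
    simp only [Matrix.mul_assoc]
  rw [this, hQR, one_mul, hQ, add_mul]
  noncomm_ring

/-! ### Matrices indexed by sites -/

/-- The space of all sites: pairs of a level `l ≤ N` and a point of `𝒳 l`. -/
abbrev Site := Σ l : Fin (N + 1), 𝒳 l

/-- The one-step transition function from `x` on level `i` to level `j`: it is `φ_j(x, ·)` if
`j = i + 1`, and zero otherwise. -/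
def stepFun (i : ℕ) (x : 𝒳 i) : (j : ℕ) → 𝒳 j → ℂ
  | 0 => fun _ => 0
  | j + 1 => fun y => if h : i = j then t j (some (h ▸ x)) y else 0

/-- The one-step transition matrix `T` between sites. -/
def stepMat : Matrix (Site 𝒳 N) (Site 𝒳 N) ℂ :=
  Matrix.of fun a b => stepFun 𝒳 t a.1 a.2 b.1 b.2

/-- The matrix of the convolution chains, with the identity convention on equal levels; it is the
inverse of `1 - T`. -/
noncomputable def phiMat : Matrix (Site 𝒳 N) (Site 𝒳 N) ℂ :=
  Matrix.of fun a b => chainPhiId 𝒳 t a.1 b.1 a.2 b.2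

/-- The matrix `V` whose row `i` is `φ_i(virt, ·)`, supported on level `i`. -/
noncomputable def virtMat : Matrix (Fin (N + 1)) (Site 𝒳 N) ℂ :=
  Matrix.of fun i b => if i = b.1 then virtF 𝒳 t v0 b.1 b.2 else 0

/-- The matrix whose column `j` is `Ψ_j`, supported on level `N`. The sum over `y` merely reads off
the point of level `N` at the site `a`, without a cast. -/
noncomputable def psiMat : Matrix (Site 𝒳 N) (Fin (N + 1)) ℂ :=
  Matrix.of fun a j => ∑ y : 𝒳 N, if a = ⟨Fin.last N, y⟩ then Ψ j y else 0

theorem stepFun_of_ne {i j : ℕ} (h : j ≠ i + 1) (x : 𝒳 i) (y : 𝒳 j) :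
    stepFun 𝒳 t i x j y = 0 := by
  cases j with
  | zero => rfl
  | succ j => exact dif_neg (by omega)

theorem stepFun_succ {i : ℕ} (x : 𝒳 i) (y : 𝒳 (i + 1)) :
    stepFun 𝒳 t i x (i + 1) y = t i (some x) y := dif_pos rfl

theorem phiMat_eq (a b : Site 𝒳 N) :
    phiMat 𝒳 N t a b = (1 : Matrix (Site 𝒳 N) (Site 𝒳 N) ℂ) a b
      + chainPhi 𝒳 t a.1 b.1 a.2 b.2 := by
  obtain ⟨l, x⟩ := a
  obtain ⟨m, y⟩ := b
  by_cases h : l = m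
  · subst h
    simp [phiMat, chainPhiId_self, chainPhi_of_le, Matrix.one_apply]
  · have h' : (l : ℕ) ≠ m := fun e => h (Fin.ext e)
    have : (⟨l, x⟩ : Site 𝒳 N) ≠ ⟨m, y⟩ := fun e => h (congrArg Sigma.fst e)
    simp [phiMat, chainPhiId_of_ne 𝒳 t h', Matrix.one_apply_ne this]

/-- The geometric series `Φ = 1 + Φ T`. -/
theorem phiMat_mul_step : phiMat 𝒳 N t * (1 - stepMat 𝒳 N t) = 1 := by
  rw [mul_sub, mul_one, sub_eq_iff_eq_add]
  ext a b
  rw [phiMat_eq, Matrix.add_apply]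
  congr 1
  obtain ⟨⟨m, hm⟩, y⟩ := b
  rw [Matrix.mul_apply, Fintype.sum_sigma]
  cases m with
  | zero => simp [stepMat, stepFun, chainPhi]
  | succ m =>
    rw [Finset.sum_eq_single ⟨m, by omega⟩]
    · simp [stepMat, phiMat, chainPhi_succ, stepFun_succ]
    · intro l _ hl
      refine Finset.sum_eq_zero fun z _ => ?_
      have : m + 1 ≠ (l : ℕ) + 1 := fun e => hl (Fin.ext (by simpa using e.symm))
      simp [stepMat, stepFun_of_ne 𝒳 t this]
    · simp

/-- `T` strictly raises the level, so `1 - T` is block unitriangular. -/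
theorem det_one_sub_step : (1 - stepMat 𝒳 N t).det = 1 := by
  have hb : (1 - stepMat 𝒳 N t).BlockTriangular Sigma.fst := by
    intro a b hab
    have h1 : a ≠ b := fun e => hab.ne' (congrArg Sigma.fst e)
    have h2 : (b.1 : ℕ) ≠ a.1 + 1 := by have : (b.1 : ℕ) < a.1 := hab; omega
    simp [Matrix.one_apply_ne h1, stepMat, stepFun_of_ne 𝒳 t h2]
  rw [hb.det]
  refine Finset.prod_eq_one fun l _ => ?_
  rw [← Matrix.det_one (n := {a : Site 𝒳 N // a.1 = l})]
  congr 1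
  ext ⟨a, ha⟩ ⟨b, hb⟩
  have h2 : (b.1 : ℕ) ≠ a.1 + 1 := by rw [ha, hb]; omega
  simp [Matrix.toSquareBlock_def, stepMat, stepFun_of_ne 𝒳 t h2, Matrix.one_apply]

theorem virtMat_mul_phiMat (i : Fin (N + 1)) (b : Site 𝒳 N) :
    (virtMat 𝒳 N t v0 * phiMat 𝒳 N t) i b = virtChain 𝒳 t v0 i b.1 b.2 := by
  rw [Matrix.mul_apply, Fintype.sum_sigma, Finset.sum_eq_single i]
  · simp [virtMat, phiMat, virtChain]
  · intro l _ hl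
    simp [virtMat, hl.symm]
  · simp

theorem mul_psiMat {I : Type*} (M : Matrix I (Site 𝒳 N) ℂ) (i : I) (j : Fin (N + 1)) :
    (M * psiMat 𝒳 N Ψ) i j = ∑ y : 𝒳 N, M i ⟨Fin.last N, y⟩ * Ψ j y := by
  simp only [Matrix.mul_apply, psiMat, Matrix.of_apply, Finset.mul_sum]
  rw [Finset.sum_comm]
  simp

theorem GmatBFPS_eq :
    GmatBFPS 𝒳 N t v0 Ψ = virtMat 𝒳 N t v0 * phiMat 𝒳 N t * psiMat 𝒳 N Ψ := by
  ext i j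
  rw [mul_psiMat]
  simp_rw [virtMat_mul_phiMat]
  rfl

/-- The correlation kernel in matrix form. The constraint `l ≤ n₂` in its definition is automatic,
since `φ_{l,n₂}` vanishes for `l > n₂`. -/
theorem KkerBFPS_eq (a b : Site 𝒳 N) :
    KkerBFPS 𝒳 N t v0 Ψ a.1 a.2 b.1 b.2
      = (1 - phiMat 𝒳 N t + phiMat 𝒳 N t * psiMat 𝒳 N Ψ * (GmatBFPS 𝒳 N t v0 Ψ)⁻¹
          * (virtMat 𝒳 N t v0 * phiMat 𝒳 N t) : Matrix (Site 𝒳 N) (Site 𝒳 N) ℂ) a b := by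
  rw [KkerBFPS, Matrix.add_apply, Matrix.sub_apply, phiMat_eq, sub_add_cancel_left]
  congr 1
  rw [Matrix.mul_apply, Finset.sum_filter]
  refine Finset.sum_congr rfl fun l _ => ?_
  rw [virtMat_mul_phiMat, virtChain]
  split_ifs with h
  · rw [Matrix.mul_apply, Finset.sum_mul]
    refine Finset.sum_congr rfl fun k _ => ?_
    rw [mul_psiMat]
    simp only [phiMat, Matrix.of_apply, Fin.val_last]
    ring
  · simp [chainPhiId_of_lt 𝒳 t (not_le.mp h)]

/-! ### Deformed weights -/

/-- A function on sites, extended by `1` to the levels above `N`. -/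
def siteExt (δ : Site 𝒳 N → ℂ) (k : ℕ) (y : 𝒳 k) : ℂ :=
  if h : k < N + 1 then δ ⟨⟨k, h⟩, y⟩ else 1

theorem siteExt_site (δ : Site 𝒳 N → ℂ) (l : Fin (N + 1)) (y : 𝒳 l) :
    siteExt 𝒳 N δ l y = δ ⟨l, y⟩ := dif_pos l.2

/-- The functions `φ_n` multiplied by `δ` in their second argument. -/
def tDef (δ : Site 𝒳 N → ℂ) (k : ℕ) (o : Option (𝒳 k)) (y : 𝒳 (k + 1)) : ℂ :=
  t k o y * siteExt 𝒳 N δ (k + 1) y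

/-- The function `φ_1(virt, ·)` (on level `0`) multiplied by `δ`. -/
def vDef (δ : Site 𝒳 N → ℂ) (y : 𝒳 0) : ℂ := v0 y * siteExt 𝒳 N δ 0 y

/-- Multiplying each `φ_n(·, y)` by `δ y` scales the columns of the determinants, hence multiplies
the weight of a configuration by the product of `δ` over its points. -/
theorem WtBFPS_deformed (δ : Site 𝒳 N → ℂ) (x : ∀ l : Fin (N + 1), Fin (l.1 + 1) → 𝒳 l) :
    WtBFPS 𝒳 N (tDef 𝒳 N t δ) (vDef 𝒳 N v0 δ) Ψ x
      = (∏ l, ∏ i, δ ⟨l, x l i⟩) * WtBFPS 𝒳 N t v0 Ψ x := by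
  have h : ∀ l : Fin N, (Matrix.of fun i j : Fin (l.1 + 2) =>
        tDef 𝒳 N t δ l (if h : (i : ℕ) < l.1 + 1 then some (x l.castSucc ⟨i, h⟩) else none)
          (x l.succ j)).det = (∏ i, δ ⟨l.succ, x l.succ i⟩) *
      (Matrix.of fun i j : Fin (l.1 + 2) =>
        t l (if h : (i : ℕ) < l.1 + 1 then some (x l.castSucc ⟨i, h⟩) else none)
          (x l.succ j)).det := by
    intro l
    refine Eq.trans (congrArg Matrix.det ?_)
      (Matrix.det_mul_row (fun j : Fin (l.1 + 2) => δ ⟨l.succ, x l.succ j⟩) _)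
    ext i j
    exact (congrArg (t l (if h : (i : ℕ) < l.1 + 1 then some (x l.castSucc ⟨i, h⟩) else none)
      (x l.succ j) * ·) (siteExt_site 𝒳 N δ l.succ (x l.succ j))).trans (mul_comm _ _)
  have h0 : vDef 𝒳 N v0 δ (x 0 0) = (∏ i, δ ⟨0, x 0 i⟩) * v0 (x 0 0) := by
    have h1 : (∏ i, δ ⟨0, x 0 i⟩) = δ ⟨0, x 0 0⟩ := Fin.prod_univ_one (fun i => δ ⟨0, x 0 i⟩)
    rw [h1]
    exact (congrArg (v0 (x 0 0) * ·) (siteExt_site 𝒳 N δ 0 (x 0 0))).trans (mul_comm _ _)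
  simp only [WtBFPS, h, h0, Finset.prod_mul_distrib]
  rw [Fin.prod_univ_succ (fun l : Fin (N + 1) => ∏ i, δ ⟨l, x l i⟩)]
  ring

theorem stepMat_deformed (δ : Site 𝒳 N → ℂ) :
    stepMat 𝒳 N (tDef 𝒳 N t δ) = stepMat 𝒳 N t * Matrix.diagonal δ := by
  ext a ⟨⟨m, hm⟩, y⟩
  have h := siteExt_site 𝒳 N δ ⟨m, hm⟩ y
  rw [Matrix.mul_diagonal, ← h]
  cases m with
  | zero => simp [stepMat, stepFun]
  | succ m =>
    simp only [stepMat, stepFun, Matrix.of_apply, tDef]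
    split_ifs <;> simp

theorem virtMat_deformed (δ : Site 𝒳 N → ℂ) :
    virtMat 𝒳 N (tDef 𝒳 N t δ) (vDef 𝒳 N v0 δ) = virtMat 𝒳 N t v0 * Matrix.diagonal δ := by
  ext i ⟨⟨m, hm⟩, y⟩
  have h := siteExt_site 𝒳 N δ ⟨m, hm⟩ y
  rw [Matrix.mul_diagonal, ← h]
  simp only [virtMat, Matrix.of_apply, ite_mul, zero_mul]
  cases m <;> rfl

/-- The correlation kernel as a matrix indexed by sites. -/
noncomputable def kerMat : Matrix (Site 𝒳 N) (Site 𝒳 N) ℂ :=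
  Matrix.of fun a b => KkerBFPS 𝒳 N t v0 Ψ a.1 a.2 b.1 b.2

/-- The generating functional of the point process: the expectation of a multiplicative statistic
`∏ δ` is `det (1 + K (δ - 1))`. -/
theorem sum_WtBFPS_mul (hG : (GmatBFPS 𝒳 N t v0 Ψ).det ≠ 0) (δ : Site 𝒳 N → ℂ) :
    ∑ x : ∀ l : Fin (N + 1), Fin (l.1 + 1) → 𝒳 l,
        (∏ l, ∏ i, δ ⟨l, x l i⟩) * WtBFPS 𝒳 N t v0 Ψ x
      = (∑ x : ∀ l : Fin (N + 1), Fin (l.1 + 1) → 𝒳 l, WtBFPS 𝒳 N t v0 Ψ x)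
        * (1 + kerMat 𝒳 N t v0 Ψ * (Matrix.diagonal δ - 1)).det := by
  have hK : kerMat 𝒳 N t v0 Ψ = 1 - phiMat 𝒳 N t + phiMat 𝒳 N t * psiMat 𝒳 N Ψ
      * (GmatBFPS 𝒳 N t v0 Ψ)⁻¹ * (virtMat 𝒳 N t v0 * phiMat 𝒳 N t) := by
    ext a b
    exact KkerBFPS_eq 𝒳 N t v0 Ψ a b
  simp_rw [← WtBFPS_deformed]
  rw [sum_WtBFPS, sum_WtBFPS, mul_assoc _ (Matrix.det _), hK]
  congr 1
  have h1 : (1 : Matrix (Site 𝒳 N) (Site 𝒳 N) ℂ) + (Matrix.diagonal δ - 1)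
      = Matrix.diagonal δ := add_sub_cancel _ _
  have := det_deformed (phiMat 𝒳 N t) (phiMat 𝒳 N (tDef 𝒳 N t δ)) (stepMat 𝒳 N t)
    (Matrix.diagonal δ - 1) (virtMat 𝒳 N t v0) (psiMat 𝒳 N Ψ) (phiMat_mul_step 𝒳 N t)
    (by rw [h1, ← stepMat_deformed, phiMat_mul_step]) (det_one_sub_step 𝒳 N t)
    (by rw [h1, ← stepMat_deformed, det_one_sub_step]) (by rwa [← GmatBFPS_eq])
  rw [h1, ← virtMat_deformed, ← GmatBFPS_eq, ← GmatBFPS_eq] at this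
  exact this

/-! ### Extraction of correlation functions -/

/-- Inclusion–exclusion for determinants: expand `det ((K - 1) + 1)` by multilinearity in the
rows. -/
theorem det_eq_sum_avoid {p : ℕ} (K : Matrix (Fin p) (Fin p) ℂ) :
    K.det = ∑ A : Finset (Fin p), (-1) ^ A.card *
      (1 - Matrix.diagonal (fun r => if r ∈ A then (1 : ℂ) else 0) * K).det := by
  let M : Fin p → Fin p → ℂ := (K - 1 : Matrix (Fin p) (Fin p) ℂ)
  let O : Fin p → Fin p → ℂ := (1 : Matrix (Fin p) (Fin p) ℂ)
  have h := (Matrix.detRowAlternating (R := ℂ) (n := Fin p)).toMultilinearMap.map_add_univ M O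
  have e : M + O = K := sub_add_cancel K 1
  rw [e] at h
  refine h.trans (Finset.sum_congr rfl fun A _ => ?_)
  have h2 : A.piecewise M O = Matrix.of fun i j => (if i ∈ A then (-1 : ℂ) else 1) *
      (1 - Matrix.diagonal (fun r => if r ∈ A then (1 : ℂ) else 0) * K :
        Matrix (Fin p) (Fin p) ℂ) i j := by
    ext i j
    by_cases hi : i ∈ A
    · rw [Finset.piecewise_eq_of_mem _ _ _ hi]
      simp [hi, M]
    · rw [Finset.piecewise_eq_of_notMem _ _ _ hi]
      simp [hi, O]
  refine Eq.trans (congrArg Matrix.det h2) ?_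
  rw [Matrix.det_mul_column]
  simp

/-- The function on sites that is `0` at the sites `s r`, `r ∈ A`, and `1` elsewhere; its product
over a configuration indicates that the configuration avoids these sites. -/
noncomputable def avoidWt {p : ℕ} (s : Fin p → Site 𝒳 N) (A : Finset (Fin p))
    (a : Site 𝒳 N) : ℂ :=
  if ∃ r ∈ A, a = s r then 0 else 1

/-- The Fredholm-type determinant for avoidance of the sites `s r`, `r ∈ A`, lives on the pinned
sites only. -/
theorem det_avoid {p : ℕ} (s : Fin p → Site 𝒳 N) (hs : Function.Injective s)
    (A : Finset (Fin p)) (K : Matrix (Site 𝒳 N) (Site 𝒳 N) ℂ) :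
    (1 + K * (Matrix.diagonal (avoidWt 𝒳 N s A) - 1)).det
      = (1 - Matrix.diagonal (fun r => if r ∈ A then (1 : ℂ) else 0) * K.submatrix s s).det := by
  -- `E` is the inclusion of the pinned sites; their distinctness gives the factorization `hg`
  let E : Matrix (Site 𝒳 N) (Fin p) ℂ := Matrix.of fun a r => if a = s r then 1 else 0
  let D : Matrix (Fin p) (Fin p) ℂ := Matrix.diagonal fun r => if r ∈ A then 1 else 0
  have hg : Matrix.diagonal (avoidWt 𝒳 N s A) - 1 = -(E * (D * E.transpose)) := by
    ext a b
    have h : (E * (D * E.transpose)) a b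
        = ∑ r, if r ∈ A ∧ a = s r ∧ b = s r then (1 : ℂ) else 0 := by
      rw [Matrix.mul_apply]
      refine Finset.sum_congr rfl fun r _ => ?_
      simp only [E, D, Matrix.diagonal_mul, Matrix.transpose_apply, Matrix.of_apply]
      by_cases h1 : r ∈ A <;> by_cases h2 : a = s r <;> by_cases h3 : b = s r <;>
        simp [h1, h2, h3]
    rw [Matrix.neg_apply, h, Matrix.sub_apply]
    by_cases hab : a = b
    · subst hab
      rw [Matrix.diagonal_apply_eq, Matrix.one_apply_eq, avoidWt]
      split_ifs with hr
      · obtain ⟨r, hrA, rfl⟩ := hr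
        rw [Finset.sum_eq_single r]
        · simp [hrA]
        · intro q _ hq
          exact if_neg fun h => hq (hs h.2.1).symm
        · simp
      · rw [Finset.sum_eq_zero fun r _ => if_neg fun h => hr ⟨r, h.1, h.2.1⟩]
        simp
    · rw [Matrix.diagonal_apply_ne _ hab, Matrix.one_apply_ne hab,
        Finset.sum_eq_zero fun r _ => if_neg fun h => hab (h.2.1.trans h.2.2.symm)]
      simp
  have hE : E.transpose * (K * E) = K.submatrix s s := by
    ext q r
    simp [Matrix.mul_apply, E]
  rw [hg, mul_neg, ← Matrix.mul_assoc, ← Matrix.neg_mul, Matrix.det_one_add_mul_comm,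
    Matrix.mul_neg, Matrix.mul_assoc, hE, ← sub_eq_add_neg]

/-- Inclusion–exclusion: containing every pinned site, written in terms of avoiding subsets
of them. -/
theorem indicator_eq_sum {p : ℕ} (s : Fin p → Site 𝒳 N)
    (x : ∀ l : Fin (N + 1), Fin (l.1 + 1) → 𝒳 l) :
    (if ∀ r, ∃ i, x (s r).1 i = (s r).2 then (1 : ℂ) else 0)
      = ∑ A : Finset (Fin p), (-1) ^ A.card * ∏ l, ∏ i, avoidWt 𝒳 N s A ⟨l, x l i⟩ := by
  have hA : ∀ A : Finset (Fin p), ∏ l, ∏ i, avoidWt 𝒳 N s A ⟨l, x l i⟩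
      = ∏ r ∈ A, if ∃ i, x (s r).1 i = (s r).2 then (0 : ℂ) else 1 := by
    intro A
    by_cases h : ∃ r ∈ A, ∃ i, x (s r).1 i = (s r).2
    · obtain ⟨r, hr, i, hi⟩ := h
      have h0 : (∏ r ∈ A, if ∃ i, x (s r).1 i = (s r).2 then (0 : ℂ) else 1) = 0 :=
        Finset.prod_eq_zero hr (if_pos ⟨i, hi⟩)
      rw [h0]
      refine Finset.prod_eq_zero (Finset.mem_univ (s r).1)
        (Finset.prod_eq_zero (Finset.mem_univ i) (if_pos ⟨r, hr, ?_⟩))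
      rw [hi]
    · rw [Finset.prod_eq_one fun r hr => if_neg fun hi => h ⟨r, hr, hi⟩]
      refine Finset.prod_eq_one fun l _ => Finset.prod_eq_one fun i _ => if_neg ?_
      rintro ⟨r, hr, e⟩
      refine h ⟨r, hr, ?_⟩
      rw [← e]
      exact ⟨i, rfl⟩
  simp_rw [hA]
  have := Finset.prod_one_add
    (f := fun r : Fin p => -(if ∃ i, x (s r).1 i = (s r).2 then (0 : ℂ) else 1)) Finset.univ
  simp_rw [Finset.powerset_univ, Finset.prod_neg] at this
  rw [← this]
  split_ifs with h
  · exact (Finset.prod_eq_one fun r _ => by simp [h r]).symm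
  · obtain ⟨r, hr⟩ := not_forall.mp h
    exact (Finset.prod_eq_zero (Finset.mem_univ r) (by simp [hr])).symm

/-- The Borodin–Ferrari–Prähofer–Sasamoto theorem (finite form): the point process defined by
the weights `W` is determinantal, with correlation functions at pinned points `(ν_r, ξ_r)`
given by `det(K(ν_r,ξ_r; ν_s,ξ_s))`. -/
theorem bfps_determinantal (p : ℕ)
    (ν : Fin p → Fin (N + 1)) (ξ : ∀ r, 𝒳 (ν r))
    (hdist : Function.Injective fun r => (⟨ν r, ξ r⟩ : Σ k : Fin (N + 1), 𝒳 k))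
    (hG : (GmatBFPS 𝒳 N t v0 Ψ).det ≠ 0) :
    (∑ x : ∀ l : Fin (N + 1), Fin (l.1 + 1) → 𝒳 l,
        if ∀ r, ∃ i, x (ν r) i = ξ r then WtBFPS 𝒳 N t v0 Ψ x else 0) /
      (∑ x : ∀ l : Fin (N + 1), Fin (l.1 + 1) → 𝒳 l, WtBFPS 𝒳 N t v0 Ψ x)
    = (Matrix.of fun r s : Fin p =>
        KkerBFPS 𝒳 N t v0 Ψ (ν r) (ξ r) (ν s) (ξ s)).det := by
  have hZ : ∑ x : ∀ l : Fin (N + 1), Fin (l.1 + 1) → 𝒳 l, WtBFPS 𝒳 N t v0 Ψ x ≠ 0 := by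
    rw [sum_WtBFPS]
    refine mul_ne_zero (mul_ne_zero (Finset.prod_ne_zero_iff.mpr fun l _ => ?_) ?_) hG <;>
      exact Nat.cast_ne_zero.mpr (Nat.factorial_ne_zero _)
  rw [div_eq_iff hZ]
  set s : Fin p → Site 𝒳 N := fun r => ⟨ν r, ξ r⟩ with hs
  have hK : (Matrix.of fun r s : Fin p => KkerBFPS 𝒳 N t v0 Ψ (ν r) (ξ r) (ν s) (ξ s))
      = (kerMat 𝒳 N t v0 Ψ).submatrix s s := rfl
  rw [hK, det_eq_sum_avoid, Finset.sum_mul]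
  have hA : ∀ A : Finset (Fin p), (-1) ^ A.card *
      (1 - Matrix.diagonal (fun r => if r ∈ A then (1 : ℂ) else 0)
        * (kerMat 𝒳 N t v0 Ψ).submatrix s s).det *
        ∑ x : ∀ l : Fin (N + 1), Fin (l.1 + 1) → 𝒳 l, WtBFPS 𝒳 N t v0 Ψ x
      = ∑ x : ∀ l : Fin (N + 1), Fin (l.1 + 1) → 𝒳 l,
        ((-1) ^ A.card * ∏ l, ∏ i, avoidWt 𝒳 N s A ⟨l, x l i⟩) * WtBFPS 𝒳 N t v0 Ψ x := by
    intro A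
    simp_rw [mul_assoc]
    rw [← Finset.mul_sum, sum_WtBFPS_mul 𝒳 N t v0 Ψ hG, det_avoid 𝒳 N s hdist,
      mul_comm (Matrix.det _)]
  rw [Finset.sum_congr rfl fun A _ => hA A, Finset.sum_comm]
  refine Finset.sum_congr rfl fun x _ => ?_
  rw [← Finset.sum_mul, ← indicator_eq_sum, ite_mul, one_mul, zero_mul]

end BFPS
end

section
/- (Harish-Chandra/Itzykson–Zuber formula.) Let N ≥ 1, let A = diag(a_1,…,a_N) and B = diag(b_1,…,b_N) be diagonal N×N real matrices with a_1,…,a_N pairwise distinct and b_1,…,b_N pairwise distinct, and let μ be the Haar probability measure on the unitary group U(N). Then ∫_{U(N)} exp(Tr(A U B U*)) dμ(U) = (∏_{p=1}^{N−1} p!) · det(e^{a_i b_j})_{i,j=1}^N / (Δ_N(a) Δ_N(b)), where Δ_N(a) = ∏_{1≤i<j≤N}(a_j − a_i) is the Vandermonde determinant and U* is the conjugate transpose of U. -/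
/-!
Write `⟨r⟩` for the integral of `r(U diag(b) U*)` over the unitary group, `r` being a polynomial in
the entries of a matrix `M`. The proof is algebraic apart from two facts about `⟨·⟩`: it vanishes on
the derivatives `δ_Y r` of polynomials along `M ↦ YM - MY` (`orbInt_isOrbital`), and it can be
applied to the exponential series term by term (`hasSum_orbInt`).

Let `Δ` be the Vandermonde polynomial and, for a polynomial `q` in `N` variables, let `T q` be the
value of `⟨·⟩` on `(Δ(∂) q)(M_11, …, M_NN)`. The key is that multiplying `q` by a symmetric
polynomial `s` multiplies `T q` by the scalar `s(b)`. For `s = ∑ Xᵢ²` this is the statement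
`inter_normSq`, that `Tr M²` and `∑ Xᵢ²` correspond to each other modulo the span of the `δ_Y r`. It
follows from the harmonicity of `Δ` and the identity `M_ij M_ji (∂ᵢ - ∂ⱼ) r ≡ (Xᵢ - Xⱼ) r`
(`loop_eq`). The operators `Tr (∂/∂M)^m` and `∑ ∂ᵢ^m` correspond to each other as well, and an
`m`-fold commutator with half the quadratic invariant turns these into multiplication by `m! Tr M^m`
and `m! ∑ Xᵢ^m` (`inter_power`). Newton's identities then cover all symmetric polynomials.

As `T` is moreover antisymmetric under permutations of the variables, it is determined by
`T Δ = N! ∏ p!` (`diffOp_vdm_vdm`): one gets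
`T q · Δ(b) = ∏ p! · ∑ sign(σ) q(b ∘ σ)` (`IsOrbital.lift_eq`). Applied to the terms of
`exp(∑ aᵢ Xᵢ)`, on which `Δ(∂)` acts as the scalar `Δ(a)`, this is the formula
(`IsOrbital.sum_eq`).
-/

open MeasureTheory
open scoped Matrix

namespace HCIZ

open MvPolynomial

variable {N : ℕ}

/-! ### Constant-coefficient differential operators on polynomials -/

/-- Polynomials in `N` variables, thought of as functions of the eigenvalues or of the diagonal. -/
abbrev PolyV (N : ℕ) := MvPolynomial (Fin N) ℂ

/-- Polynomials in the entries of an `N × N` matrix; the variable `X (i, j)` is the entry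
`M i j`. -/
abbrev PolyM (N : ℕ) := MvPolynomial (Fin N × Fin N) ℂ

/-- The partial derivative `∂ᵢ`, as a linear endomorphism, so that it can be multiplied with
other operators. -/
noncomputable abbrev del {σ : Type*} (i : σ) : Module.End ℂ (MvPolynomial σ ℂ) := (pderiv (R := ℂ) i).toLinearMap

lemma del_comm {σ : Type*} (i j : σ) : del i * del j = del j * del i := by
  classical
  have h : ⁅pderiv (R := ℂ) i, pderiv (R := ℂ) j⁆ = 0 := by
    refine MvPolynomial.derivation_ext fun k => ?_
    rw [Derivation.commutator_apply]
    simp [pderiv_X, Pi.single_apply, apply_ite]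
  refine LinearMap.ext fun p => ?_
  have := congrArg (fun d => d p) h
  simpa [Derivation.commutator_apply, sub_eq_zero] using this

/-- Substituting the commuting operators `∂ᵢ` for the variables is a ring homomorphism. As
`aeval` needs a commutative target, it is applied in the subalgebra generated by the `∂ᵢ`. -/
lemma exists_diffOp (N : ℕ) : ∃ D : PolyV N →ₐ[ℂ] Module.End ℂ (PolyV N), ∀ i, D (X i) = del i := by
  have hc : ∀ x ∈ Set.range (del (σ := Fin N)), ∀ y ∈ Set.range (del (σ := Fin N)), x * y = y * x := by
    rintro _ ⟨i, rfl⟩ _ ⟨j, rfl⟩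
    exact del_comm i j
  let S := Algebra.adjoin ℂ (Set.range (del (σ := Fin N)))
  have hS : IsMulCommutative S := Algebra.isMulCommutative_adjoin ℂ hc
  let _ : CommSemiring S := { (inferInstance : Semiring S) with mul_comm := hS.is_comm.comm }
  let g : Fin N → S := fun i => ⟨del i, Algebra.subset_adjoin ⟨i, rfl⟩⟩
  let f : PolyV N →ₐ[ℂ] S := aeval g
  refine ⟨S.val.comp f, fun i => ?_⟩
  simp [f, g]

/-- The constant-coefficient differential operator `p(∂)` of a polynomial `p`, obtained from
`p` by replacing `X i` with `∂ᵢ`. -/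
noncomputable def diffOp (N : ℕ) : PolyV N →ₐ[ℂ] Module.End ℂ (PolyV N) :=
  (exists_diffOp N).choose

@[simp] lemma diffOp_X (i : Fin N) : diffOp N (X i) = del i := (exists_diffOp N).choose_spec i

lemma diffOp_comm (p q : PolyV N) : diffOp N p * diffOp N q = diffOp N q * diffOp N p := by
  rw [← map_mul, mul_comm, map_mul]

/-- Multiplication by `p`, as a linear operator. -/
noncomputable abbrev mulOp {σ : Type*} (p : MvPolynomial σ ℂ) : Module.End ℂ (MvPolynomial σ ℂ) :=
  Algebra.lmul ℂ (MvPolynomial σ ℂ) p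

@[simp] lemma mulOp_apply {σ : Type*} (p q : MvPolynomial σ ℂ) : mulOp p q = p * q := rfl

lemma del_mulOp {σ : Type*} (i : σ) (p : MvPolynomial σ ℂ) :
    del i * mulOp p = mulOp p * del i + mulOp (pderiv i p) := by
  refine LinearMap.ext fun q => ?_
  simp [mul_comm]

/-- The commutator of `p(∂)` with multiplication by `Xᵢ` is `(∂ᵢp)(∂)`. -/
lemma diffOp_mul_X (i : Fin N) (p : PolyV N) :
    diffOp N p * mulOp (X i) = mulOp (X i) * diffOp N p + diffOp N (pderiv i p) := by
  classical
  induction p using MvPolynomial.induction_on with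
  | C c =>
    have : diffOp N (C c) = algebraMap ℂ _ c := AlgHom.commutes _ _
    rw [this, Algebra.commutes]; simp
  | add p q hp hq => simp only [map_add, add_mul, mul_add, hp, hq]; abel
  | mul_X p j hp =>
    rw [mul_comm p, map_mul, mul_assoc, hp, mul_add, ← mul_assoc, diffOp_X, del_mulOp,
      Derivation.leibniz, map_add]
    simp only [smul_eq_mul, map_mul, diffOp_X, add_mul, pderiv_X, mul_assoc]
    by_cases h : j = i
    · subst h; simp; abel
    · simp [h]

lemma diffOp_mul_X_sq (i : Fin N) (p : PolyV N) :
    diffOp N p * mulOp (X i ^ 2) = mulOp (X i ^ 2) * diffOp N p +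
      2 * (mulOp (X i) * diffOp N (pderiv i p)) + diffOp N (pderiv i (pderiv i p)) := by
  rw [pow_two, mulOp, map_mul, ← mul_assoc, diffOp_mul_X, add_mul, diffOp_mul_X, mul_assoc, diffOp_mul_X]
  noncomm_ring

lemma diffOp_rename (s : Equiv.Perm (Fin N)) (p q : PolyV N) :
    diffOp N (rename s p) (rename s q) = rename s (diffOp N p q) := by
  induction p using MvPolynomial.induction_on generalizing q with
  | C c =>
    have : ∀ c, diffOp N (C c) = algebraMap ℂ _ c := fun c => AlgHom.commutes _ _
    simp [this, Module.algebraMap_end_apply]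
  | add p q hp hq => simp [hp, hq]
  | mul_X p j hp =>
    rw [map_mul, rename_X, map_mul, map_mul, diffOp_X, diffOp_X, Module.End.mul_apply,
      Module.End.mul_apply, ← hp]
    simp [pderiv_rename s.injective]

/-! ### The Vandermonde polynomial is harmonic -/

/-- The Vandermonde polynomial `Δ = ∏_{i<j} (X j - X i)`, encoded as a determinant. -/
noncomputable def vdm (N : ℕ) : PolyV N := (Matrix.vandermonde (fun i : Fin N => (X i : PolyV N))).det

/-- The index set of the product `∏_{i<j}`. -/
abbrev pairs (N : ℕ) : Finset (Fin N × Fin N) := Finset.univ.filter fun q => q.1 < q.2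

lemma det_vandermonde_pairs {R : Type*} [CommRing R] (v : Fin N → R) :
    (Matrix.vandermonde v).det = ∏ q ∈ pairs N, (v q.2 - v q.1) := by
  rw [Matrix.det_vandermonde, Finset.prod_filter, ← Finset.univ_product_univ, Finset.prod_product]
  refine Finset.prod_congr rfl fun i _ => ?_
  rw [← Finset.prod_filter]
  refine Finset.prod_congr ?_ fun _ _ => rfl
  ext j; simp

lemma vdm_eq_sum : vdm N = ∑ σ : Equiv.Perm (Fin N),
    ((σ.sign : ℤ) : PolyV N) * ∏ i, X i ^ ((σ i : Fin N) : ℕ) := by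
  rw [vdm, ← Matrix.det_transpose, Matrix.det_apply']
  rfl

lemma rename_vdm (s : Equiv.Perm (Fin N)) : rename s (vdm N) = ((s.sign : ℤ) : PolyV N) * vdm N := by
  rw [vdm, ← Matrix.det_permute, AlgHom.map_det]
  congr 1
  ext i j : 2
  simp [Matrix.vandermonde]

lemma eval_vdm (v : Fin N → ℂ) : eval v (vdm N) = ∏ q ∈ pairs N, (v q.2 - v q.1) := by
  rw [vdm, det_vandermonde_pairs]; simp

/-- The quotient `Δ / (X i - X j)` for `i ≠ j`, and `0` for `i = j`. It is antisymmetric in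
`(i, j)`. -/
noncomputable def vdmQuot (i j : Fin N) : PolyV N :=
  if i < j then -∏ q ∈ (pairs N).erase (i, j), (X q.2 - X q.1)
  else if j < i then ∏ q ∈ (pairs N).erase (j, i), (X q.2 - X q.1) else 0

lemma vdmQuot_self (i : Fin N) : vdmQuot i i = 0 := by simp [vdmQuot]

lemma vdmQuot_swap (i j : Fin N) : vdmQuot j i = -vdmQuot i j := by
  rcases lt_trichotomy i j with h | h | h
  · simp [vdmQuot, h, h.not_gt]
  · subst h; simp [vdmQuot_self]
  · simp [vdmQuot, h, h.not_gt]

lemma vdmQuot_mul {i j : Fin N} (h : i ≠ j) : (X i - X j) * vdmQuot i j = vdm N := by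
  have key : ∀ i j : Fin N, i < j → (X i - X j) * vdmQuot i j = vdm N := by
    intro i j h
    rw [vdm, det_vandermonde_pairs, ← Finset.mul_prod_erase _ _ (a := (i, j)) (by simpa using h),
      vdmQuot, if_pos h]
    ring
  rcases lt_or_gt_of_ne h with h | h
  · exact key i j h
  · rw [vdmQuot_swap, ← key j i h]; ring

lemma derivation_prod {ι R : Type*} [DecidableEq ι] [CommRing R] [Algebra ℂ R]
    (d : Derivation ℂ R R) (s : Finset ι) (f : ι → R) :
    d (∏ q ∈ s, f q) = ∑ q ∈ s, (∏ r ∈ s.erase q, f r) * d (f q) := by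
  induction s using Finset.induction_on with
  | empty => simp
  | insert a s ha ih =>
    rw [Finset.prod_insert ha, Derivation.leibniz, ih, Finset.sum_insert ha,
      Finset.erase_insert ha, smul_eq_mul, smul_eq_mul, add_comm, Finset.mul_sum]
    congr 1
    refine Finset.sum_congr rfl fun q hq => ?_
    have : a ≠ q := fun h => ha (h ▸ hq)
    rw [Finset.erase_insert_of_ne this, Finset.prod_insert (by simp [ha]), mul_assoc]

/-- The logarithmic derivative of the Vandermonde product, cleared of denominators. -/
lemma pderiv_vdm (i : Fin N) : pderiv i (vdm N) = ∑ j, vdmQuot i j := by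
  classical
  rw [vdm, det_vandermonde_pairs, derivation_prod]
  have h1 : ∀ q ∈ pairs N, (∏ r ∈ (pairs N).erase q, (X r.2 - X r.1 : PolyV N)) *
      pderiv i (X q.2 - X q.1 : PolyV N) = (if q.1 = i then vdmQuot i q.2 else 0)
        + (if q.2 = i then vdmQuot i q.1 else 0) := by
    rintro ⟨k, l⟩ hq
    have hkl : k < l := by simpa using hq
    simp only [map_sub, pderiv_X, Pi.single_apply]
    by_cases hk : k = i
    · subst hk
      simp [hkl.ne', vdmQuot, hkl]
    · by_cases hl : l = i
      · subst hl
        simp [hk, vdmQuot, hkl, hkl.not_gt]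
      · simp [hk, hl]
  rw [Finset.sum_congr rfl h1, Finset.sum_filter, ← Finset.univ_product_univ, Finset.sum_product]
  have h2 : ∀ k l : Fin N, (if k < l then ((if k = i then vdmQuot i l else 0)
        + (if l = i then vdmQuot i k else 0)) else 0) =
      (if k = i then (if i < l then vdmQuot i l else 0) else 0) +
      (if l = i then (if k < i then vdmQuot i k else 0) else 0) := by
    intro k l
    by_cases hk : k = i
    · subst hk
      by_cases hl : l = k <;> simp [hl]
    · by_cases hl : l = i
      · subst hl; simp [hk]
      · simp [hk, hl]
  simp only [h2, Finset.sum_add_distrib]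
  rw [Finset.sum_comm]
  simp only [Finset.sum_ite_eq', Finset.mem_univ, if_true]
  rw [← Finset.sum_add_distrib]
  refine Finset.sum_congr rfl fun j _ => ?_
  rcases lt_trichotomy i j with h | h | h
  · simp [h, h.not_gt]
  · subst h; simp [vdmQuot_self]
  · simp [h, h.not_gt]

lemma pderiv_pow_prod (i : Fin N) (k : Fin N → ℕ) :
    pderiv i (∏ j, (X j : PolyV N) ^ k j) =
      k i * ∏ j, (X j : PolyV N) ^ (Function.update k i (k i - 1)) j := by
  classical
  rw [derivation_prod, Finset.sum_eq_single i]
  · rw [← Finset.mul_prod_erase Finset.univ _ (Finset.mem_univ i)]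
    have : ∏ j ∈ Finset.univ.erase i, (X j : PolyV N) ^ (Function.update k i (k i - 1)) j =
        ∏ j ∈ Finset.univ.erase i, (X j : PolyV N) ^ k j := by
      refine Finset.prod_congr rfl fun j hj => ?_
      rw [Function.update_of_ne (Finset.ne_of_mem_erase hj)]
    rw [this]
    simp [pderiv_X]
    ring
  · intro j _ hj
    simp [pderiv_X, hj]
  · simp

/-- `∑ ∂ᵢ² Δ = 0`: in the determinant, `∑ ∂ᵢ²` turns row `k` into a multiple of row `k - 2`,
one row at a time, so each resulting determinant has two proportional rows. -/
lemma vdm_harmonic : ∑ i, pderiv i (pderiv i (vdm N)) = 0 := by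
  classical
  -- `W k` is the transposed Vandermonde matrix with `∂²` applied to row `k`
  let W (k : Fin N) : Matrix (Fin N) (Fin N) (PolyV N) := Matrix.of fun l i =>
    if l = k then ((k : ℕ) * ((k : ℕ) - 1 : ℕ) : PolyV N) * X i ^ ((k : ℕ) - 2) else X i ^ (l : ℕ)
  have hW : ∀ k, (W k).det = 0 := by
    intro k
    by_cases hk : (k : ℕ) < 2
    · refine Matrix.det_eq_zero_of_row_eq_zero k fun i => ?_
      have : (k : ℕ) = 0 ∨ (k : ℕ) = 1 := by omega
      rcases this with h | h <;> simp [W, h]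
    · let k' : Fin N := ⟨k - 2, by omega⟩
      have hk' : k' ≠ k := by
        intro h
        have : (k : ℕ) - 2 = k := congrArg Fin.val h
        omega
      have h1 : W k = (Matrix.updateRow (W k) k
          (((k : ℕ) * ((k : ℕ) - 1 : ℕ) : PolyV N) • (W k) k')) := by
        ext l i : 2
        by_cases h : l = k
        · subst h; simp [W, hk', k']
        · simp [Matrix.updateRow_ne h]
      rw [h1, Matrix.det_updateRow_smul, Matrix.det_zero_of_row_eq hk' ?_, mul_zero]
      rw [Matrix.updateRow_self, Matrix.updateRow_ne hk']
  calc ∑ i, pderiv i (pderiv i (vdm N)) = ∑ k, (W k).det := ?_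
    _ = 0 := by simp [hW]
  simp only [Matrix.det_apply', vdm_eq_sum, map_sum]
  rw [Finset.sum_comm]
  conv_rhs => rw [Finset.sum_comm]
  refine Finset.sum_congr rfl fun σ _ => ?_
  conv_rhs => rw [← Equiv.sum_comp σ]
  refine Finset.sum_congr rfl fun i _ => ?_
  have hz : ∀ (z : ℤ) (p : PolyV N), pderiv i ((z : PolyV N) * p) = z * pderiv i p := by
    intro z p
    rw [← zsmul_eq_mul, map_zsmul, zsmul_eq_mul]
  have hn : ∀ (z : ℕ) (p : PolyV N), pderiv i ((z : PolyV N) * p) = z * pderiv i p := by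
    intro z p
    rw [← nsmul_eq_mul, map_nsmul, nsmul_eq_mul]
  rw [hz, pderiv_pow_prod i (fun j => (σ j : ℕ)), hz, hn, pderiv_pow_prod,
    ← Finset.mul_prod_erase Finset.univ _ (Finset.mem_univ i),
    ← Finset.mul_prod_erase Finset.univ (fun j => W (σ i) (σ j) j) (Finset.mem_univ i)]
  have : ∏ x ∈ Finset.univ.erase i, W (σ i) (σ x) x =
      ∏ j ∈ Finset.univ.erase i, (X j : PolyV N) ^ (σ j : ℕ) := by
    refine Finset.prod_congr rfl fun j hj => ?_
    have : σ j ≠ σ i := fun h => (Finset.ne_of_mem_erase hj) (σ.injective h)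
    simp [W, this]
  rw [this]
  have h3 : ∏ x ∈ Finset.univ.erase i, (X x : PolyV N) ^
      Function.update (Function.update (fun j ↦ ((σ j : Fin N) : ℕ)) i ((σ i : ℕ) - 1)) i
          (Function.update (fun j ↦ ((σ j : Fin N) : ℕ)) i ((σ i : ℕ) - 1) i - 1) x =
      ∏ j ∈ Finset.univ.erase i, (X j : PolyV N) ^ (σ j : ℕ) := by
    refine Finset.prod_congr rfl fun j hj => ?_
    rw [Function.update_of_ne (Finset.ne_of_mem_erase hj),
      Function.update_of_ne (Finset.ne_of_mem_erase hj)]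
  rw [h3]
  simp only [Function.update_self, W, Matrix.of_apply, if_true]
  rw [Nat.sub_sub]
  ring

/-! ### The Vandermonde operator applied to the Vandermonde polynomial -/

lemma del_pow_prod (i : Fin N) (m : ℕ) (l : Fin N → ℕ) :
    (del i ^ m) (∏ j, (X j : PolyV N) ^ l j) =
      ((l i).descFactorial m : PolyV N) * ∏ j, (X j : PolyV N) ^ (Function.update l i (l i - m)) j := by
  induction m with
  | zero => simp
  | succ m ih =>
    rw [pow_succ', Module.End.mul_apply, ih, ← nsmul_eq_mul, map_nsmul, Derivation.coeFn_coe,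
      pderiv_pow_prod, Nat.descFactorial_succ, nsmul_eq_mul, Function.update_self,
      Function.update_idem, Nat.sub_sub]
    push_cast
    ring

lemma diffOp_prod (s : Finset (Fin N)) (k l : Fin N → ℕ) :
    diffOp N (∏ i ∈ s, X i ^ k i) (∏ j, (X j : PolyV N) ^ l j) =
      ((∏ i ∈ s, (l i).descFactorial (k i) : ℕ) : PolyV N) *
        ∏ j, (X j : PolyV N) ^ (if j ∈ s then l j - k j else l j) := by
  induction s using Finset.induction_on with
  | empty => simp
  | insert a s ha ih =>
    rw [Finset.prod_insert ha, Finset.prod_insert ha, map_mul, Module.End.mul_apply, ih, map_pow,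
      diffOp_X, ← nsmul_eq_mul, map_nsmul, del_pow_prod, nsmul_eq_mul]
    have : Function.update (fun j => if j ∈ s then l j - k j else l j) a
        ((fun j => if j ∈ s then l j - k j else l j) a - k a) =
        fun j => if j ∈ insert a s then l j - k j else l j := by
      ext j
      by_cases h : j = a
      · subst h; simp [ha]
      · simp [h]
    rw [this]
    simp only [ha, if_false]
    push_cast
    ring

/-- Distinct monomials of `Δ` have the same degree, so applying the derivative monomial of one
to the other gives `0`; each of the `N!` diagonal terms contributes `∏ p!`. -/
lemma diffOp_vdm_vdm : diffOp N (vdm N) (vdm N) =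
    C ((N.factorial : ℂ) * ∏ p ∈ Finset.range N, (p.factorial : ℂ)) := by
  have key : ∀ σ τ : Equiv.Perm (Fin N), diffOp N (∏ i, X i ^ ((σ i : Fin N) : ℕ))
      (∏ i, (X i : PolyV N) ^ ((τ i : Fin N) : ℕ)) =
      if σ = τ then C (∏ p ∈ Finset.range N, (p.factorial : ℂ)) else 0 := by
    intro σ τ
    rw [diffOp_prod]
    split_ifs with h
    · subst h
      simp only [Nat.sub_self, pow_zero, Finset.prod_const_one, mul_one,
        Nat.descFactorial_self]
      rw [Equiv.prod_comp σ (fun i : Fin N => ((i : ℕ)).factorial), Finset.prod_range]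
      simp
    · -- the exponents have equal sums, so some exponent of the operator exceeds that of the target
      have : ∃ i, (τ i : ℕ) < (σ i : ℕ) := by
        by_contra hcon
        push Not at hcon
        apply h
        have hs : ∑ i, (σ i : ℕ) = ∑ i, (τ i : ℕ) := by
          rw [Equiv.sum_comp σ (fun i : Fin N => (i : ℕ)), Equiv.sum_comp τ (fun i : Fin N => (i : ℕ))]
        have := (Finset.sum_eq_sum_iff_of_le (fun i _ => hcon i)).1 hs
        ext i
        exact this i (Finset.mem_univ i)
      obtain ⟨i, hi⟩ := this
      rw [Finset.prod_eq_zero (Finset.mem_univ i) (Nat.descFactorial_of_lt hi)]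
      simp
  have hz : ∀ (z : ℤ) (L : Module.End ℂ (PolyV N)) (p : PolyV N), L ((z : PolyV N) * p) = z * L p := by
    intro z L p
    rw [← zsmul_eq_mul, map_zsmul, zsmul_eq_mul]
  have hI : ∀ (z : ℤ) (p : PolyV N), (z : Module.End ℂ (PolyV N)) p = z * p := by
    intro z p
    simp
  have hexp : diffOp N (vdm N) (vdm N) = ∑ σ : Equiv.Perm (Fin N), ∑ τ : Equiv.Perm (Fin N),
      ((σ.sign : ℤ) : PolyV N) * (((τ.sign : ℤ) : PolyV N) *
        diffOp N (∏ i, X i ^ ((σ i : Fin N) : ℕ)) (∏ i, (X i : PolyV N) ^ ((τ i : Fin N) : ℕ))) := by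
    conv_lhs => arg 1; rw [vdm_eq_sum, map_sum]
    rw [LinearMap.sum_apply]
    refine Finset.sum_congr rfl fun σ _ => ?_
    rw [map_mul, Module.End.mul_apply, map_intCast, hI, vdm_eq_sum, map_sum, Finset.mul_sum]
    exact Finset.sum_congr rfl fun τ _ => by rw [hz]
  have hsgn : ∀ σ : Equiv.Perm (Fin N), ((σ.sign : ℤ) : PolyV N) * ((σ.sign : ℤ) : PolyV N) = 1 := by
    intro σ
    rw [← Int.cast_mul, ← Units.val_mul, Int.units_mul_self]; simp
  rw [hexp]
  simp only [key, mul_ite, mul_zero, Finset.sum_ite_eq, Finset.mem_univ, if_true]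
  simp only [← mul_assoc, hsgn, one_mul, Finset.sum_const, Finset.card_univ, Fintype.card_perm,
    Fintype.card_fin]
  simp

/-! ### Infinitesimal conjugation and the radial part of the quadratic invariant -/

/-- The vector field `M ↦ YM - MY` on matrices, acting on polynomials as a derivation: the
infinitesimal form of conjugation by `exp(tY)`. -/
noncomputable def adDer (Y : Matrix (Fin N) (Fin N) ℂ) : Derivation ℂ (PolyM N) (PolyM N) :=
  mkDerivation ℂ fun p => ∑ a, (C (Y p.1 a) * X (a, p.2) - X (p.1, a) * C (Y a p.2))

lemma adDer_X (Y : Matrix (Fin N) (Fin N) ℂ) (k l : Fin N) :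
    adDer Y (X (k, l)) = ∑ a, (C (Y k a) * X (a, l) - X (k, a) * C (Y a l)) := by
  simp [adDer, mkDerivation_X]

lemma adDer_single_X (i j k l : Fin N) :
    adDer (Matrix.single i j 1) (X (k, l)) =
      (if k = i then X (j, l) else 0) - (if l = j then X (k, i) else 0) := by
  rw [adDer_X, Finset.sum_sub_distrib]
  congr 1
  · by_cases h : k = i
    · subst h; simp [Matrix.single_apply]
    · simp [h, Ne.symm h]
  · by_cases h : l = j
    · subst h; simp [Matrix.single_apply]
    · simp [h, Ne.symm h]

/-- The span of all derivatives `δ_Y r` along conjugation orbits. Every conjugation-invariant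
functional vanishes on it; congruences between polynomials below are modulo this subspace. -/
noncomputable def infSpan (N : ℕ) : Submodule ℂ (PolyM N) :=
  Submodule.span ℂ {s | ∃ (Y : Matrix (Fin N) (Fin N) ℂ) (r : PolyM N), s = adDer Y r}

lemma adDer_mem (Y : Matrix (Fin N) (Fin N) ℂ) (r : PolyM N) : adDer Y r ∈ infSpan N :=
  Submodule.subset_span ⟨Y, r, rfl⟩

/-- A polynomial in `N` variables, read as a polynomial in the diagonal entries of a matrix. -/
noncomputable abbrev diagEmb (N : ℕ) : PolyV N →ₐ[ℂ] PolyM N := rename fun i => (i, i)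

/-- The chain rule for a function of the diagonal entries. -/
lemma adDer_diagEmb (Y : Matrix (Fin N) (Fin N) ℂ) (r : PolyV N) :
    adDer Y (diagEmb N r) = ∑ k, diagEmb N (pderiv k r) * adDer Y (X (k, k)) := by
  classical
  induction r using MvPolynomial.induction_on with
  | C c => simp
  | add p q hp hq => simp only [map_add, add_mul, Finset.sum_add_distrib, hp, hq]
  | mul_X p j hp =>
    have h : ∀ k, diagEmb N (pderiv k (p * X j)) * adDer Y (X (k, k)) =
        (if k = j then diagEmb N p * adDer Y (X (k, k)) else 0) +
          X (j, j) * (diagEmb N (pderiv k p) * adDer Y (X (k, k))) := by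
      intro k
      rw [Derivation.leibniz, pderiv_X, map_add, smul_eq_mul, smul_eq_mul, map_mul, map_mul,
        rename_X, Pi.single_apply, add_mul, mul_assoc (X (j, j))]
      by_cases hk : k = j
      · subst hk; simp
      · simp [hk, Ne.symm hk]
    rw [Finset.sum_congr rfl fun k _ => h k, Finset.sum_add_distrib, Finset.sum_ite_eq',
      if_pos (Finset.mem_univ _), ← Finset.mul_sum, ← hp, map_mul, Derivation.leibniz, rename_X,
      smul_eq_mul, smul_eq_mul]

/-- The loop equation: modulo `infSpan`, `M_ij M_ji (∂ᵢ - ∂ⱼ) r` is congruent to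
`(X i - X j) r`. It is `δ_Y (M_ij r)` for the matrix unit `Y = E_ij`. -/
lemma loop_eq (i j : Fin N) (r : PolyV N) :
    X (i, j) * X (j, i) * diagEmb N (pderiv i r - pderiv j r) -
      diagEmb N ((X i - X j) * r) ∈ infSpan N := by
  have h : adDer (Matrix.single i j 1) (diagEmb N r) =
      X (j, i) * diagEmb N (pderiv i r - pderiv j r) := by
    rw [adDer_diagEmb]
    simp only [adDer_single_X, mul_sub, Finset.sum_sub_distrib, mul_ite, mul_zero,
      Finset.sum_ite_eq', Finset.mem_univ, if_true, map_sub]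
    ring
  have := adDer_mem (Matrix.single i j 1) (X (i, j) * diagEmb N r)
  rw [Derivation.leibniz, h, adDer_single_X] at this
  convert this using 1
  simp
  ring

/-- The map `q ↦ (Δ(∂) q)(M_11, …, M_NN)`. -/
noncomputable def liftOp (N : ℕ) : PolyV N →ₗ[ℂ] PolyM N :=
  (diagEmb N).toLinearMap ∘ₗ diffOp N (vdm N)

lemma liftOp_apply (q : PolyV N) : liftOp N q = diagEmb N (diffOp N (vdm N) q) := rfl

/-- The operator `P` on matrix polynomials preserves `infSpan`, and `liftOp` intertwines it,
modulo `infSpan`, with the operator `Q` on polynomials in `N` variables. -/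
structure Inter (P : Module.End ℂ (PolyM N)) (Q : Module.End ℂ (PolyV N)) : Prop where
  pres : ∀ s ∈ infSpan N, P s ∈ infSpan N
  inter : ∀ q, P (liftOp N q) - liftOp N (Q q) ∈ infSpan N

lemma Inter.mul {P P' : Module.End ℂ (PolyM N)} {Q Q' : Module.End ℂ (PolyV N)}
    (h : Inter P Q) (h' : Inter P' Q') : Inter (P * P') (Q * Q') where
  pres s hs := h.pres _ (h'.pres _ hs)
  inter q := by
    have := add_mem (h.pres _ (h'.inter q)) (h.inter (Q' q))
    simpa using this

lemma Inter.sub {P P' : Module.End ℂ (PolyM N)} {Q Q' : Module.End ℂ (PolyV N)}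
    (h : Inter P Q) (h' : Inter P' Q') : Inter (P - P') (Q - Q') where
  pres s hs := sub_mem (h.pres _ hs) (h'.pres _ hs)
  inter q := by
    have := sub_mem (h.inter q) (h'.inter q)
    convert this using 1
    simp; abel

lemma Inter.smul {P : Module.End ℂ (PolyM N)} {Q : Module.End ℂ (PolyV N)}
    (h : Inter P Q) (c : ℂ) : Inter (c • P) (c • Q) where
  pres s hs := Submodule.smul_mem _ _ (h.pres _ hs)
  inter q := by
    have := Submodule.smul_mem _ c (h.inter q)
    simpa [smul_sub] using this

/-- `Tr M²`. -/
noncomputable def normSqM (N : ℕ) : PolyM N := ∑ i, ∑ j, X (i, j) * X (j, i)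

/-- `∑ Xᵢ²`. -/
noncomputable def normSqV (N : ℕ) : PolyV N := ∑ i, X i ^ 2

/-- The generic matrix, whose entries are the variables. -/
noncomputable abbrev genM (N : ℕ) : Matrix (Fin N) (Fin N) (PolyM N) := Matrix.of fun i j => X (i, j)

lemma adDer_X_eq (Y : Matrix (Fin N) (Fin N) ℂ) (k l : Fin N) :
    adDer Y (X (k, l)) = (Y.map C * genM N - genM N * Y.map C : Matrix _ _ (PolyM N)) k l := by
  simp [adDer_X, Matrix.mul_apply, Finset.sum_sub_distrib]

lemma adDer_normSqM (Y : Matrix (Fin N) (Fin N) ℂ) : adDer Y (normSqM N) = 0 := by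
  have : adDer Y (normSqM N) = (genM N * (Y.map C * genM N - genM N * Y.map C)).trace +
      ((Y.map C * genM N - genM N * Y.map C) * genM N).trace := by
    simp only [normSqM, map_sum, Derivation.leibniz, adDer_X_eq, smul_eq_mul, Matrix.trace,
      Matrix.diag_apply, Finset.sum_add_distrib]
    congr 1
    refine Finset.sum_congr rfl fun i _ => ?_
    rw [Matrix.mul_apply]
    exact Finset.sum_congr rfl fun j _ => mul_comm _ _
  rw [this, Matrix.trace_mul_comm _ (genM N), Matrix.mul_sub, Matrix.trace_sub,
    Matrix.trace_mul_comm (genM N) (genM N * Y.map C), Matrix.mul_assoc]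
  simp

/-- `Tr M²` acts on the image of `liftOp` as `∑ Xᵢ²`. Commuting `∑ Xᵢ²` past `Δ(∂)` gives
`∑_{i≠j} (Xᵢ - Xⱼ) (Δ/(Xᵢ - Xⱼ))(∂)`, the term `∑ (∂ᵢ²Δ)(∂)` vanishing by harmonicity, and the
loop equation identifies each summand with an off-diagonal term `M_ij M_ji` of `Tr M²`. -/
lemma inter_normSq : Inter (mulOp (normSqM N)) (mulOp (normSqV N)) where
  pres s hs := by
    refine Submodule.span_induction (p := fun s _ => mulOp (normSqM N) s ∈ infSpan N)
      ?_ ?_ ?_ ?_ hs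
    · rintro _ ⟨Y, r, rfl⟩
      have := adDer_mem Y (normSqM N * r)
      rw [Derivation.leibniz, adDer_normSqM] at this
      simpa using this
    · simp
    · intro x y _ _ hx hy; rw [map_add]; exact add_mem hx hy
    · intro c x _ hx; rw [map_smul]; exact Submodule.smul_mem _ _ hx
  inter q := by
    have key : diffOp N (vdm N) (normSqV N * q) = normSqV N * diffOp N (vdm N) q +
        ∑ i, ∑ j, (X i - X j) * diffOp N (vdmQuot i j) q := by
      have h1 : diffOp N (vdm N) * mulOp (normSqV N) = mulOp (normSqV N) * diffOp N (vdm N) +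
          ∑ i, 2 * (mulOp (X i) * diffOp N (pderiv i (vdm N))) := by
        have h0 : mulOp (normSqV N) = ∑ i, mulOp (X i ^ 2) := by
          simp only [normSqV, mulOp, map_sum]
        rw [h0, Finset.mul_sum, Finset.sum_mul, Finset.sum_congr rfl fun i _ => diffOp_mul_X_sq i _]
        rw [Finset.sum_add_distrib, Finset.sum_add_distrib, ← map_sum, vdm_harmonic, map_zero,
          add_zero]
      have h2 := LinearMap.congr_fun h1 q
      rw [Module.End.mul_apply, LinearMap.add_apply, Module.End.mul_apply, mulOp_apply, mulOp_apply,
        LinearMap.sum_apply] at h2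
      rw [h2]
      congr 1
      have h3 : ∀ i, (2 * (mulOp (X i) * diffOp N (pderiv i (vdm N)))) q =
          ∑ j, 2 * (X i * diffOp N (vdmQuot i j) q) := by
        intro i
        rw [two_mul, LinearMap.add_apply, ← two_mul, Module.End.mul_apply, mulOp_apply, pderiv_vdm]
        simp [Finset.mul_sum]
      simp only [h3]
      have h4 : ∑ i, ∑ j, (X j * diffOp N (vdmQuot i j) q) =
          - ∑ i, ∑ j, (X i * diffOp N (vdmQuot i j) q) := by
        rw [Finset.sum_comm]
        simp only [← Finset.sum_neg_distrib]
        refine Finset.sum_congr rfl fun i _ => Finset.sum_congr rfl fun j _ => ?_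
        rw [vdmQuot_swap i j]; simp
      simp only [sub_mul, Finset.sum_sub_distrib, h4, two_mul, Finset.sum_add_distrib, sub_neg_eq_add]
    have term : ∀ i j : Fin N, X (i, j) * X (j, i) * liftOp N q -
        diagEmb N ((if i = j then X i ^ 2 * diffOp N (vdm N) q else 0) +
          (X i - X j) * diffOp N (vdmQuot i j) q) ∈ infSpan N := by
      intro i j
      by_cases h : i = j
      · subst h
        have : (X (i, i) * X (i, i) * liftOp N q -
          diagEmb N ((if i = i then X i ^ 2 * diffOp N (vdm N) q else 0) +
          (X i - X i) * diffOp N (vdmQuot i i) q)) = 0 := by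
          simp [liftOp_apply, vdmQuot_self]; ring
        rw [this]; exact zero_mem _
      · have := loop_eq i j (diffOp N (vdmQuot i j) q)
        have h5 : pderiv i (diffOp N (vdmQuot i j) q) - pderiv j (diffOp N (vdmQuot i j) q) =
            diffOp N (vdm N) q := by
          rw [← vdmQuot_mul h, map_mul, map_sub, diffOp_X, diffOp_X]; simp
        rw [h5] at this
        simpa [h, liftOp_apply] using this
    have := Submodule.sum_mem _ fun i (_ : i ∈ Finset.univ) => Submodule.sum_mem _ fun j (_ : j ∈ Finset.univ) => term i j
    convert this using 1
    simp only [mulOp_apply, Finset.sum_sub_distrib, ← map_sum, Finset.sum_add_distrib]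
    rw [liftOp_apply (normSqV N * q), key]
    simp [normSqM, normSqV, Finset.sum_mul]

/-! ### All power sums from the quadratic one, by iterated commutators -/

section Ad

variable {R : Type*} [Ring R] [Algebra ℂ R]

/-- The commutator `x ↦ xH - Hx`. -/
def adR (H : R) : R →ₗ[ℂ] R := LinearMap.mulRight ℂ H - LinearMap.mulLeft ℂ H

lemma adR_apply (H x : R) : adR H x = x * H - H * x := rfl

lemma adR_mul (H x y : R) : adR H (x * y) = x * adR H y + adR H x * y := by
  simp only [adR_apply]; noncomm_ring

lemma adR_pow_mul {H D Z : R} (hD : adR H D = Z) (hZ : adR H Z = 0) (P : R) (n : ℕ) :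
    (adR H ^ (n + 1)) (D * P) =
      D * (adR H ^ (n + 1)) P + ((n + 1 : ℕ) : ℂ) • (Z * (adR H ^ n) P) := by
  induction n with
  | zero => simp [adR_mul, hD]
  | succ n ih =>
    rw [pow_succ' _ (n + 1), Module.End.mul_apply, ih, map_add, adR_mul, map_smul, adR_mul, hD, hZ,
      zero_mul, add_zero, ← Module.End.mul_apply, ← Module.End.mul_apply, ← pow_succ', ← pow_succ',
      add_assoc]
    congr 1
    push_cast
    module

/-- If the commutator of `D` with `H` is `Z`, which commutes with `H`, then `m` commutators turn
`D ^ m` into `m! Z ^ m`. No commutation between `D` and `Z` is needed, so this applies to matrices. -/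
lemma adR_pow_pow {H D Z : R} (hD : adR H D = Z) (hZ : adR H Z = 0) (m : ℕ) :
    (adR H ^ m) (D ^ m) = (m.factorial : ℂ) • Z ^ m ∧ (adR H ^ (m + 1)) (D ^ m) = 0 := by
  induction m with
  | zero => simp [adR_apply]
  | succ m ih =>
    constructor
    · rw [pow_succ' D, adR_pow_mul hD hZ, ih.1, ih.2, mul_zero, zero_add, Nat.factorial_succ,
        mul_smul_comm, ← pow_succ', smul_smul]
      push_cast
      rfl
    · rw [pow_succ' D, adR_pow_mul hD hZ, ih.2, pow_succ' (adR H), Module.End.mul_apply, ih.2]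
      simp

end Ad

lemma adR_pow_trace {R : Type*} [Ring R] [Algebra ℂ R] (H : R) (n : ℕ)
    (Y : Matrix (Fin N) (Fin N) R) :
    ((adR (Matrix.scalar (Fin N) H) ^ n) Y).trace = (adR H ^ n) Y.trace := by
  induction n generalizing Y with
  | zero => simp
  | succ n ih =>
    rw [pow_succ, Module.End.mul_apply, ih, pow_succ, Module.End.mul_apply]
    congr 1
    simp [adR_apply, Matrix.trace]

lemma Inter.ad_pow {P H : Module.End ℂ (PolyM N)} {Q K : Module.End ℂ (PolyV N)}
    (h : Inter P Q) (h' : Inter H K) (n : ℕ) : Inter ((adR H ^ n) P) ((adR K ^ n) Q) := by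
  induction n with
  | zero => simpa using h
  | succ n ih =>
    rw [pow_succ', pow_succ', Module.End.mul_apply, Module.End.mul_apply, adR_apply, adR_apply]
    exact (ih.mul h').sub (h'.mul ih)

/-- The matrix of operators `∂/∂M_ji`, transposed so that `δ_Y` acts on it by conjugation. -/
noncomputable def delMat (N : ℕ) : Matrix (Fin N) (Fin N) (Module.End ℂ (PolyM N)) :=
  Matrix.of fun i j => del (j, i)

lemma derivation_sum_apply {σ ι : Type*} (s : Finset ι)
    (D : ι → Derivation ℂ (MvPolynomial σ ℂ) (MvPolynomial σ ℂ)) (p : MvPolynomial σ ℂ) :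
    (∑ a ∈ s, D a) p = ∑ a ∈ s, D a p := by
  classical
  induction s using Finset.induction_on with
  | empty => simp
  | insert a s ha ih => simp [Finset.sum_insert ha, ih]

lemma adDer_del (Y : Matrix (Fin N) (Fin N) ℂ) (k l : Fin N) :
    (adDer Y).toLinearMap * del (k, l) - del (k, l) * (adDer Y).toLinearMap =
      ∑ a, Y l a • del (k, a) - ∑ a, Y a k • del (a, l) := by
  classical
  have h : ⁅adDer Y, pderiv (R := ℂ) (k, l)⁆ =
      ∑ a, Y l a • pderiv (R := ℂ) (k, a) - ∑ a, Y a k • pderiv (R := ℂ) (a, l) := by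
    refine MvPolynomial.derivation_ext fun ⟨i, j⟩ => ?_
    rw [Derivation.commutator_apply, adDer_X]
    have h1 : adDer Y (pderiv (k, l) (X (i, j))) = 0 := by
      rw [pderiv_X, Pi.single_apply]; split_ifs <;> simp
    rw [h1, Derivation.sub_apply, derivation_sum_apply, derivation_sum_apply]
    simp only [map_sum, map_sub, Derivation.leibniz, pderiv_C, pderiv_X, Pi.single_apply,
      Prod.mk.injEq, smul_eq_mul, Derivation.smul_apply, ite_and]
    by_cases hj : j = l <;> by_cases hi : i = k <;>
      simp [hj, hi, Finset.sum_sub_distrib, smul_eq_C_mul]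
  refine LinearMap.ext fun p => ?_
  have := congrArg (fun d : Derivation ℂ (PolyM N) (PolyM N) => d p) h
  simp only [Derivation.commutator_apply, Derivation.sub_apply, derivation_sum_apply] at this
  simpa using this

/-- `Tr ∂^m` is conjugation invariant. The operators `∂/∂M_ji` commute with each other and with
scalars, and `δ_Y - Y` commutes with the whole matrix `∂`. -/
lemma trace_delMat_commute (Y : Matrix (Fin N) (Fin N) ℂ) (m : ℕ) :
    (adDer Y).toLinearMap * (delMat N ^ m).trace = (delMat N ^ m).trace * (adDer Y).toLinearMap := by
  set S := Matrix.scalar (Fin N) (adDer Y).toLinearMap with hS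
  set Yc : Matrix (Fin N) (Fin N) (Module.End ℂ (PolyM N)) := Y.map (algebraMap ℂ _) with hYc
  -- `adDer_del` says exactly that `S - Yc` commutes with the matrix of derivatives
  have h1 : Commute (S - Yc) (delMat N) := by
    have : S * delMat N - delMat N * S = Yc * delMat N - delMat N * Yc := by
      refine Matrix.ext fun k l => ?_
      have := adDer_del Y l k
      simp only [Algebra.smul_def] at this
      simp only [Matrix.sub_apply, Matrix.mul_apply, hYc, hS, delMat, Matrix.of_apply, Matrix.map_apply]
      have h3 : ∀ a, del (a, k) * algebraMap ℂ (Module.End ℂ (PolyM N)) (Y a l) =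
          algebraMap ℂ (Module.End ℂ (PolyM N)) (Y a l) * del (a, k) := fun a =>
        (Algebra.commutes _ _).symm
      simp only [h3]
      rw [← this]
      simp [Matrix.diagonal_apply]
    rw [Commute, SemiconjBy, sub_mul, mul_sub, sub_eq_sub_iff_sub_eq_sub]
    exact this
  have h2 := (h1.pow_right m).eq
  have h3 : S * delMat N ^ m - delMat N ^ m * S = Yc * delMat N ^ m - delMat N ^ m * Yc := by
    rw [sub_mul, mul_sub, sub_eq_sub_iff_sub_eq_sub] at h2
    exact h2
  have h4 := congrArg Matrix.trace h3
  have h5 : (Yc * delMat N ^ m).trace = (delMat N ^ m * Yc).trace := by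
    simp only [Matrix.trace, Matrix.diag_apply, Matrix.mul_apply]
    rw [Finset.sum_comm]
    refine Finset.sum_congr rfl fun i _ => Finset.sum_congr rfl fun j _ => ?_
    simp only [hYc, Matrix.map_apply]
    exact Algebra.commutes _ _
  rw [Matrix.trace_sub, Matrix.trace_sub, h5, sub_self, sub_eq_zero] at h4
  simpa [hS, Matrix.trace, Finset.sum_mul, Finset.mul_sum] using h4

/-- Off-diagonal derivatives kill functions of the diagonal entries. -/
lemma delMat_pow_diagEmb (m : ℕ) (i j : Fin N) (q : PolyV N) :
    (delMat N ^ m) i j (diagEmb N q) = if i = j then diagEmb N ((del i ^ m) q) else 0 := by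
  have h1 : ∀ i j (q : PolyV N), delMat N i j (diagEmb N q) =
      if i = j then diagEmb N (del i q) else 0 := by
    intro i j q
    by_cases h : i = j
    · subst h
      have hinj : Function.Injective (fun i : Fin N => (i, i)) := fun a b h => congrArg Prod.fst h
      simpa [delMat] using pderiv_rename (R := ℂ) hinj i q
    · simp only [delMat, Matrix.of_apply, Derivation.coeFn_coe, h, if_false]
      refine pderiv_eq_zero_of_notMem_vars fun hmem => ?_
      classical
      have := vars_rename _ _ hmem
      simp only [Finset.mem_image, Prod.mk.injEq] at this
      obtain ⟨a, _, rfl, rfl⟩ := this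
      exact h rfl
  induction m generalizing q i j with
  | zero =>
    by_cases h : i = j
    · subst h; simp
    · simp [h]
  | succ m ih =>
    rw [pow_succ, Matrix.mul_apply, LinearMap.sum_apply]
    simp only [Module.End.mul_apply, h1]
    rw [Finset.sum_eq_single j]
    · by_cases h : i = j
      · subst h; simp [ih, pow_succ]
      · simp [ih, h]
    · intro k _ hk; simp [hk]
    · simp

/-- `Tr ∂^m` and `∑ ∂ᵢ^m` agree on functions of the diagonal, exactly. -/
lemma inter_trace_del (m : ℕ) : Inter (delMat N ^ m).trace (∑ i, del i ^ m) where
  pres s hs := by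
    refine Submodule.span_induction (p := fun s _ => (delMat N ^ m).trace s ∈ infSpan N)
      ?_ ?_ ?_ ?_ hs
    · rintro _ ⟨Y, r, rfl⟩
      have := LinearMap.congr_fun (trace_delMat_commute Y m) r
      simp only [Module.End.mul_apply, Derivation.coeFn_coe] at this
      rw [← this]
      exact adDer_mem _ _
    · simp
    · intro x y _ _ hx hy; rw [map_add]; exact add_mem hx hy
    · intro c x _ hx; rw [map_smul]; exact Submodule.smul_mem _ _ hx
  inter q := by
    have h : diffOp N (∑ i, X i ^ m) = ∑ i, del i ^ m := by simp
    have h1 : (delMat N ^ m).trace (liftOp N q) = liftOp N ((∑ i, del i ^ m) q) := by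
      rw [liftOp_apply, liftOp_apply, ← h, ← Module.End.mul_apply, diffOp_comm, h, Matrix.trace,
        LinearMap.sum_apply, Module.End.mul_apply, LinearMap.sum_apply, map_sum]
      simp only [Matrix.diag_apply, delMat_pow_diagEmb, if_true]
    rw [h1, sub_self]
    exact zero_mem _

lemma pderiv_normSqM (k l : Fin N) : pderiv (k, l) (normSqM N) = 2 * X (l, k) := by
  classical
  have : ∀ i j : Fin N, pderiv (k, l) (X (i, j) * X (j, i) : PolyM N) =
      (if i = k then if j = l then X (l, k) else 0 else 0) +
      (if i = l then if j = k then X (l, k) else 0 else 0) := by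
    intro i j
    simp only [Derivation.leibniz, pderiv_X, Pi.single_apply, Prod.mk.injEq, smul_eq_mul]
    by_cases h1 : i = k <;> by_cases h2 : j = l <;> by_cases h3 : i = l <;> by_cases h4 : j = k <;>
      simp_all
  simp [normSqM, this, Finset.sum_add_distrib, two_mul]

lemma adR_mulOp {σ : Type*} (p q : MvPolynomial σ ℂ) : adR (mulOp p) (mulOp q) = 0 := by
  rw [adR_apply, mulOp, mulOp, ← map_mul, ← map_mul, mul_comm, sub_self]

lemma adR_del {σ : Type*} (i : σ) (p : MvPolynomial σ ℂ) :
    adR (mulOp p) (del i) = mulOp (pderiv i p) := by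
  rw [adR_apply, del_mulOp]; abel

/-- `Tr M^m` acts on the image of `liftOp` as the power sum `∑ Xᵢ^m`. The operator `Tr ∂^m`
intertwines with `∑ ∂ᵢ^m`, and `m` commutators with half the quadratic invariant turn them into
multiplication by `m! Tr M^m` and by `m! ∑ Xᵢ^m`. -/
theorem inter_power (m : ℕ) : Inter (mulOp (genM N ^ m).trace) (mulOp (∑ i, (X i : PolyV N) ^ m)) := by
  have h := (inter_trace_del m).ad_pow ((inter_normSq (N := N)).smul (1 / 2)) m
  have e1 : (1 / 2 : ℂ) • mulOp (normSqM N) = mulOp (C (1 / 2) * normSqM N) :=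
    LinearMap.ext fun p => by simp [smul_eq_C_mul]
  have e2 : (1 / 2 : ℂ) • mulOp (normSqV N) = mulOp (C (1 / 2) * normSqV N) :=
    LinearMap.ext fun p => by simp [smul_eq_C_mul]
  have hhalf : ∀ {σ : Type} (p : MvPolynomial σ ℂ), C (1 / 2 : ℂ) * (2 * p) = p := by
    intro σ p
    have : (2 : MvPolynomial σ ℂ) = C 2 := rfl
    rw [this, ← mul_assoc, ← C_mul]
    norm_num
  have entry : ∀ (H : Module.End ℂ (PolyM N)) (M : Matrix (Fin N) (Fin N) (Module.End ℂ (PolyM N)))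
      (i j : Fin N), adR (Matrix.scalar (Fin N) H) M i j = adR H (M i j) := by
    intro H M i j
    simp [adR_apply]
  have hA : (adR (mulOp (C (1 / 2) * normSqM N)) ^ m) (delMat N ^ m).trace =
      (m.factorial : ℂ) • mulOp (genM N ^ m).trace := by
    have hx : (genM N).map (Algebra.lmul ℂ (PolyM N)) =
        Matrix.of fun i j => mulOp (X (i, j)) := rfl
    rw [← adR_pow_trace, (adR_pow_pow (Z := (genM N).map (Algebra.lmul ℂ (PolyM N))) ?_ ?_ m).1,
      Matrix.trace_smul]
    · congr 1
      rw [← AlgHom.mapMatrix_apply, ← map_pow, AlgHom.mapMatrix_apply]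
      simp [Matrix.trace, mulOp]
    · refine Matrix.ext fun i j => ?_
      rw [entry, delMat, Matrix.of_apply, adR_del, Derivation.leibniz, pderiv_normSqM, pderiv_C]
      simp only [smul_eq_mul, mul_zero, add_zero, hhalf]
      rfl
    · refine Matrix.ext fun i j => ?_
      rw [entry]
      exact adR_mulOp _ (X (i, j))
  have hB : (adR (mulOp (C (1 / 2) * normSqV N)) ^ m) (∑ i, del i ^ m) =
      (m.factorial : ℂ) • mulOp (∑ i, (X i : PolyV N) ^ m) := by
    have h0 : mulOp (∑ i, (X i : PolyV N) ^ m) = ∑ i, mulOp (X i : PolyV N) ^ m := by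
      simp only [mulOp, map_sum, map_pow]
    rw [map_sum, h0, Finset.smul_sum]
    refine Finset.sum_congr rfl fun i _ => ?_
    rw [(adR_pow_pow (Z := mulOp (X i)) ?_ (adR_mulOp _ _) m).1]
    rw [adR_del, Derivation.leibniz, pderiv_C]
    have : pderiv i (normSqV N) = 2 * X i := by
      classical
      simp [normSqV, Derivation.leibniz_pow, pderiv_X, Pi.single_apply]
    rw [this, smul_zero, add_zero, smul_eq_mul, hhalf]
  rw [e1, e2, hA, hB] at h
  have := h.smul ((m.factorial : ℂ)⁻¹)
  rwa [smul_smul, smul_smul, inv_mul_cancel₀ (by exact_mod_cast m.factorial_ne_zero), one_smul,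
    one_smul] at this

/-! ### The functional on antisymmetric polynomials -/

/-- The properties of the functional `r ↦ ∫ r(U diag(b) U*) dU` that determine it on the image
of `liftOp`: infinitesimal conjugation invariance, power traces acting as scalars, invariance under
permuting the diagonal, and normalization. -/
structure IsOrbital (E : PolyM N →ₗ[ℂ] ℂ) (b : Fin N → ℂ) : Prop where
  inv : ∀ Y r, E (adDer Y r) = 0
  trace : ∀ m r, E ((genM N ^ m).trace * r) = (∑ i, b i ^ m) * E r
  perm : ∀ (s : Equiv.Perm (Fin N)) (r : PolyV N), E (diagEmb N (rename s r)) = E (diagEmb N r)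
  one : E 1 = 1

/-- The polynomials `s` such that `T (s q) = s(b) T q` for all `q`. -/
noncomputable def multipliers (T : PolyV N →ₗ[ℂ] ℂ) (b : Fin N → ℂ) : Subalgebra ℂ (PolyV N) where
  carrier := {s | ∀ q, T (s * q) = eval b s * T q}
  mul_mem' {s t} hs ht q := by rw [mul_assoc, hs, ht, eval_mul, mul_assoc]
  add_mem' {s t} hs ht q := by rw [add_mul, map_add, hs, ht, eval_add, add_mul]
  algebraMap_mem' c q := by
    rw [algebraMap_eq, ← smul_eq_C_mul, map_smul, eval_C, smul_eq_mul]

lemma mem_multipliers {T : PolyV N →ₗ[ℂ] ℂ} {b : Fin N → ℂ} {s : PolyV N} :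
    s ∈ multipliers T b ↔ ∀ q, T (s * q) = eval b s * T q := Iff.rfl

/-- Newton's identities: over `ℂ` the power sums generate the elementary symmetric polynomials. -/
lemma esymm_mem_of_psum_mem {S : Subalgebra ℂ (PolyV N)} (h : ∀ m, psum (Fin N) ℂ m ∈ S) (k : ℕ) :
    esymm (Fin N) ℂ k ∈ S := by
  induction k using Nat.strong_induction_on with
  | _ k ih =>
    rcases Nat.eq_zero_or_pos k with rfl | hk
    · rw [esymm_zero]; exact one_mem _
    · have hmem : (k : PolyV N) * esymm (Fin N) ℂ k ∈ S := by
        rw [mul_esymm_eq_sum]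
        refine mul_mem (pow_mem (neg_mem (one_mem _)) _) (sum_mem fun a ha => ?_)
        exact mul_mem (mul_mem (pow_mem (neg_mem (one_mem _)) _)
          (ih _ (Finset.mem_filter.mp ha).2)) (h _)
      have := S.smul_mem hmem ((k : ℂ)⁻¹)
      have hC : (k : PolyV N) = C (k : ℂ) := by simp
      rwa [smul_eq_C_mul, ← mul_assoc, hC, ← C_mul, inv_mul_cancel₀ (by exact_mod_cast hk.ne'),
        C_1, one_mul] at this

lemma symmetric_mem {S : Subalgebra ℂ (PolyV N)} (h : ∀ m, psum (Fin N) ℂ m ∈ S)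
    {p : PolyV N} (hp : p.IsSymmetric) : p ∈ S := by
  obtain ⟨t, ht⟩ := esymmAlgHom_fin_surjective ℂ (le_refl N) ⟨p, hp⟩
  have h1 := congrArg Subtype.val ht
  rw [esymmAlgHom_apply] at h1
  change _ = p at h1
  rw [← h1, aeval_def, eval₂_eq]
  refine sum_mem fun d _ => mul_mem (S.algebraMap_mem _) (prod_mem fun i _ => pow_mem ?_ _)
  exact esymm_mem_of_psum_mem h _

/-- The antisymmetrization `∑ sign(σ) q(X ∘ σ)`, without the factor `1 / N!`. -/
noncomputable def antisymm (q : PolyV N) : PolyV N :=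
  ∑ s : Equiv.Perm (Fin N), ((s.sign : ℤ) : ℂ) • rename s q

lemma rename_antisymm (s : Equiv.Perm (Fin N)) (q : PolyV N) :
    rename s (antisymm q) = ((s.sign : ℤ) : PolyV N) * antisymm q := by
  simp only [antisymm, map_sum, map_smul, rename_rename, Finset.mul_sum]
  refine Fintype.sum_equiv (Equiv.mulLeft s) _ _ fun t => ?_
  rw [Equiv.coe_mulLeft, Equiv.Perm.sign_mul, ← Equiv.Perm.coe_mul, smul_eq_C_mul, smul_eq_C_mul,
    ← mul_assoc]
  congr 1
  rcases Int.units_eq_one_or s.sign with h | h <;> simp [h]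

lemma sign_sq (s : Equiv.Perm (Fin N)) : ((s.sign : ℤ) : PolyV N) * ((s.sign : ℤ) : PolyV N) = 1 := by
  rcases Int.units_eq_one_or s.sign with h | h <;> simp [h]

/-- The functional `T q = E (Δ(∂) q)` is antisymmetric and all symmetric polynomials act on it by
their value at `b`. Evaluating `T (Δ² D)` in two ways for the antisymmetrization `D` of `q`, as
`Δ²` times `D` and as `DΔ` times `Δ`, reduces it to `T Δ`. -/
theorem IsOrbital.lift_eq {E : PolyM N →ₗ[ℂ] ℂ} {b : Fin N → ℂ} (hE : IsOrbital E b)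
    (hb : eval b (vdm N) ≠ 0) (q : PolyV N) :
    E (liftOp N q) * eval b (vdm N) =
      (∏ p ∈ Finset.range N, (p.factorial : ℂ)) *
        ∑ s : Equiv.Perm (Fin N), ((s.sign : ℤ) : ℂ) * eval (b ∘ s) q := by
  set T : PolyV N →ₗ[ℂ] ℂ := E ∘ₗ liftOp N with hT
  have hT' : ∀ q, E (liftOp N q) = T q := fun _ => rfl
  have hspan : ∀ s ∈ infSpan N, E s = 0 := by
    intro s hs
    refine Submodule.span_induction (p := fun s _ => E s = 0) ?_ ?_ ?_ ?_ hs
    · rintro _ ⟨Y, r, rfl⟩; exact hE.inv Y r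
    · simp
    · intro x y _ _ hx hy; rw [map_add, hx, hy, add_zero]
    · intro c x _ hx; rw [map_smul, hx, smul_zero]
  have hpsum : ∀ m, psum (Fin N) ℂ m ∈ multipliers T b := by
    intro m
    rw [mem_multipliers]
    intro q
    have h := hspan _ ((inter_power m).inter q)
    rw [map_sub, mulOp_apply, mulOp_apply, hE.trace, sub_eq_zero] at h
    rw [psum, ← hT', ← h, hT', map_sum]
    simp
  have hsymm : ∀ p : PolyV N, p.IsSymmetric → ∀ q, T (p * q) = eval b p * T q := fun p hp =>
    mem_multipliers.mp (symmetric_mem hpsum hp)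
  have hsign : ∀ (s : Equiv.Perm (Fin N)) q, T (rename s q) = ((s.sign : ℤ) : ℂ) * T q := by
    intro s q
    have h1 : diffOp N (vdm N) (rename s q) =
        ((s.sign : ℤ) : ℂ) • rename s (diffOp N (vdm N) q) := by
      rw [← diffOp_rename, rename_vdm]
      rcases Int.units_eq_one_or s.sign with h | h <;> simp [h]
    rw [← hT', ← hT', liftOp_apply, liftOp_apply, h1, map_smul, map_smul, hE.perm, smul_eq_mul]
  have hanti : T (antisymm q) = N.factorial * T q := by
    simp only [antisymm, map_sum, map_smul, hsign, smul_eq_mul, ← mul_assoc]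
    have : ∀ s : Equiv.Perm (Fin N), ((s.sign : ℤ) : ℂ) * ((s.sign : ℤ) : ℂ) = 1 := by
      intro s
      rcases Int.units_eq_one_or s.sign with h | h <;> simp [h]
    simp [this, Fintype.card_perm]
  have hTv : T (vdm N) = N.factorial * ∏ p ∈ Finset.range N, (p.factorial : ℂ) := by
    rw [← hT', liftOp_apply, diffOp_vdm_vdm, diagEmb, rename_C, ← mul_one (C _), ← smul_eq_C_mul,
      map_smul, hE.one, smul_eq_mul, mul_one]
  have h1 : T (vdm N * vdm N * antisymm q) = eval b (vdm N * vdm N) * T (antisymm q) := by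
    refine hsymm _ (fun s => ?_) _
    rw [map_mul, rename_vdm, mul_mul_mul_comm, sign_sq, one_mul]
  have h2 : T (antisymm q * vdm N * vdm N) = eval b (antisymm q * vdm N) * T (vdm N) := by
    refine hsymm _ (fun s => ?_) _
    rw [map_mul, rename_vdm, rename_antisymm, mul_mul_mul_comm, sign_sq, one_mul]
  -- compare the two evaluations and cancel `N! Δ(b)`
  have h3 : vdm N * vdm N * antisymm q = antisymm q * vdm N * vdm N := by ring
  rw [h3, h2, hanti, hTv, map_mul, map_mul] at h1
  have h4 : eval b (antisymm q) =
      ∑ s : Equiv.Perm (Fin N), ((s.sign : ℤ) : ℂ) * eval (b ∘ s) q := by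
    simp [antisymm, eval_rename]
  rw [hT', ← h4]
  have hN : (N.factorial : ℂ) ≠ 0 := by exact_mod_cast N.factorial_ne_zero
  apply mul_left_cancel₀ (mul_ne_zero hN hb)
  linear_combination -h1

/-! ### Expanding the exponential -/

/-- The `n`-th term `(∑ aᵢ Xᵢ)^n / n!` of the series of `exp(∑ aᵢ Xᵢ)`. -/
noncomputable def expTerm (a : Fin N → ℂ) (n : ℕ) : PolyV N :=
  C ((n.factorial : ℂ)⁻¹) * (∑ i, C (a i) * X i) ^ n

lemma eval_expTerm (a v : Fin N → ℂ) (n : ℕ) :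
    eval v (expTerm a n) = (∑ i, a i * v i) ^ n / n.factorial := by
  simp [expTerm, div_eq_inv_mul]

lemma pderiv_expTerm_zero (a : Fin N → ℂ) (i : Fin N) : pderiv i (expTerm a 0) = 0 := by
  simp [expTerm]

lemma pderiv_expTerm_succ (a : Fin N → ℂ) (i : Fin N) (n : ℕ) :
    pderiv i (expTerm a (n + 1)) = a i • expTerm a n := by
  classical
  have h : pderiv i (∑ j, C (a j) * X j : PolyV N) = C (a i) := by
    simp [Derivation.leibniz, pderiv_X, Pi.single_apply]
  have hf : ((n + 1).factorial : ℂ)⁻¹ * (n + 1 : ℕ) = (n.factorial : ℂ)⁻¹ := by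
    rw [Nat.factorial_succ]
    have := n.factorial_ne_zero
    have h' : ((n : ℂ) + 1) ≠ 0 := by exact_mod_cast n.succ_ne_zero
    push_cast
    field_simp
  rw [expTerm, expTerm, Derivation.leibniz, pderiv_C, smul_zero, add_zero, Derivation.leibniz_pow, h,
    ← hf, C_mul, smul_eq_C_mul, Nat.add_sub_cancel, map_natCast]
  simp only [smul_eq_mul, nsmul_eq_mul]
  ring

/-- `p(∂)` acts on the exponential series `exp(∑ aᵢ Xᵢ)` as multiplication by `p(a)`. -/
lemma hasSum_diffOp {F : PolyV N →ₗ[ℂ] ℂ} {a : Fin N → ℂ} {I : ℂ}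
    (h : HasSum (fun n => F (expTerm a n)) I) (p : PolyV N) :
    HasSum (fun n => F (diffOp N p (expTerm a n))) (eval a p * I) := by
  induction p using MvPolynomial.induction_on with
  | C c =>
    have : ∀ q, diffOp N (C c) q = c • q := by
      intro q
      rw [← algebraMap_eq, AlgHom.commutes, Module.algebraMap_end_apply]
    simpa [this] using h.mul_left c
  | add p q hp hq => simpa [add_mul] using hp.add hq
  | mul_X p i hp =>
    -- differentiation shifts the series by one and kills the constant term
    rw [← hasSum_nat_add_iff' 1]
    have h1 : ∀ n, F (diffOp N (p * X i) (expTerm a (n + 1))) =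
        a i * F (diffOp N p (expTerm a n)) := by
      intro n
      rw [map_mul, diffOp_X, Module.End.mul_apply, Derivation.coeFn_coe, pderiv_expTerm_succ,
        map_smul, map_smul, smul_eq_mul]
    have h0 : F (diffOp N (p * X i) (expTerm a 0)) = 0 := by
      rw [map_mul, diffOp_X, Module.End.mul_apply, Derivation.coeFn_coe, pderiv_expTerm_zero,
        map_zero, map_zero]
    simp only [h1, Finset.range_one, Finset.sum_singleton, h0, sub_zero]
    have h2 : eval a (p * X i) * I = a i * (eval a p * I) := by
      rw [eval_mul, eval_X]; ring
    rw [h2]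
    exact hp.mul_left (a i)

/-- The formula for an orbital functional: `Δ(∂)` brings `Δ(a)` out of the exponential series,
and `IsOrbital.lift_eq` evaluates every term of the series. -/
theorem IsOrbital.sum_eq {E : PolyM N →ₗ[ℂ] ℂ} {b : Fin N → ℂ} (hE : IsOrbital E b)
    (hb : eval b (vdm N) ≠ 0) {a : Fin N → ℂ} {I : ℂ}
    (h : HasSum (fun n => E (diagEmb N (expTerm a n))) I) :
    eval a (vdm N) * I * eval b (vdm N) =
      (∏ p ∈ Finset.range N, (p.factorial : ℂ)) *
        (Matrix.of fun i j : Fin N => Complex.exp (a i * b j)).det := by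
  have h1 := (hasSum_diffOp (F := E ∘ₗ (diagEmb N).toLinearMap) h (vdm N)).mul_right
    (eval b (vdm N))
  have h2 : ∀ n, (E ∘ₗ (diagEmb N).toLinearMap) (diffOp N (vdm N) (expTerm a n)) *
      eval b (vdm N) = (∏ p ∈ Finset.range N, (p.factorial : ℂ)) *
        ∑ s : Equiv.Perm (Fin N), ((s.sign : ℤ) : ℂ) *
          ((∑ i, a i * b (s i)) ^ n / n.factorial) := by
    intro n
    have := hE.lift_eq hb (expTerm a n)
    simp only [eval_expTerm] at this
    exact this
  simp only [h2] at h1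
  refine h1.unique (HasSum.mul_left _ ?_)
  have hdet : (Matrix.of fun i j : Fin N => Complex.exp (a i * b j)).det =
      ∑ s : Equiv.Perm (Fin N), ((s.sign : ℤ) : ℂ) * Complex.exp (∑ i, a i * b (s i)) := by
    rw [← Matrix.det_transpose, Matrix.det_apply']
    simp [Complex.exp_sum]
  rw [hdet]
  refine hasSum_sum fun s _ => HasSum.mul_left _ ?_
  rw [Complex.exp_eq_exp_ℂ]
  exact NormedSpace.expSeries_div_hasSum_exp _

/-! ### Haar measure on the unitary group -/

section Analysis

lemma adDer_add (Y Z : Matrix (Fin N) (Fin N) ℂ) : adDer (Y + Z) = adDer Y + adDer Z := by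
  refine MvPolynomial.derivation_ext fun ⟨k, l⟩ => ?_
  rw [Derivation.add_apply, adDer_X, adDer_X, adDer_X, ← Finset.sum_add_distrib]
  refine Finset.sum_congr rfl fun a _ => ?_
  simp only [Matrix.add_apply, C_add]
  ring

lemma adDer_smul (c : ℂ) (Y : Matrix (Fin N) (Fin N) ℂ) : adDer (c • Y) = c • adDer Y := by
  refine MvPolynomial.derivation_ext fun ⟨k, l⟩ => ?_
  rw [Derivation.smul_apply, adDer_X, adDer_X, Finset.smul_sum]
  refine Finset.sum_congr rfl fun a _ => ?_
  simp only [Matrix.smul_apply, smul_eq_mul, C_mul, smul_eq_C_mul]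
  ring

/-- The unitary group `U(N)`. -/
abbrev UGroup (N : ℕ) := Matrix.unitaryGroup (Fin N) ℂ

instance : CompactSpace (UGroup N) := by
  have hc : IsCompact {M : Matrix (Fin N) (Fin N) ℂ | ∀ i j, M i j ∈ Metric.closedBall (0 : ℂ) 1} := by
    have heq : {M : Matrix (Fin N) (Fin N) ℂ | ∀ i j, M i j ∈ Metric.closedBall (0 : ℂ) 1} =
        Set.univ.pi fun _ => Set.univ.pi fun _ => Metric.closedBall (0 : ℂ) 1 :=
      Set.ext fun M =>
        ⟨fun h i _ j _ => h i j, fun h i j => h i (Set.mem_univ i) j (Set.mem_univ j)⟩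
    rw [heq]
    exact isCompact_univ_pi fun _ => isCompact_univ_pi fun _ => isCompact_closedBall _ _
  refine isCompact_iff_compactSpace.mp (hc.of_isClosed_subset ?_ ?_)
  · have : ((UGroup N : Submonoid (Matrix (Fin N) (Fin N) ℂ)) : Set (Matrix (Fin N) (Fin N) ℂ)) =
        {M | star M * M = 1} ∩ {M | M * star M = 1} := by
      ext M; exact Iff.rfl
    rw [this]
    exact (isClosed_eq (by fun_prop) continuous_const).inter
      (isClosed_eq (by fun_prop) continuous_const)
  · intro M hM i j
    simpa using entry_norm_bound_of_unitary hM i j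

/-- The point `U diag(b) U*` of the orbit of `diag(b)`. -/
noncomputable def orb (b : Fin N → ℂ) (U : UGroup N) : Matrix (Fin N) (Fin N) ℂ :=
  (U : Matrix (Fin N) (Fin N) ℂ) * Matrix.diagonal b * (U : Matrix (Fin N) (Fin N) ℂ)ᴴ

/-- Evaluation of a matrix polynomial at a matrix. -/
noncomputable abbrev evalM (M : Matrix (Fin N) (Fin N) ℂ) : PolyM N →+* ℂ := eval fun p => M p.1 p.2

lemma orb_mul (b : Fin N → ℂ) (g U : UGroup N) :
    orb b (g * U) = (g : Matrix (Fin N) (Fin N) ℂ) * orb b U * (g : Matrix (Fin N) (Fin N) ℂ)ᴴ := by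
  simp [orb, Matrix.mul_assoc]

lemma continuous_orb (b : Fin N → ℂ) : Continuous (orb b) := by
  unfold orb; fun_prop

lemma continuous_evalM_orb (b : Fin N → ℂ) (r : PolyM N) :
    Continuous fun U => evalM (orb b U) r := by
  refine (MvPolynomial.continuous_eval r).comp (continuous_pi fun p => ?_)
  exact (continuous_orb b).matrix_elem _ _

lemma orb_pow (b : Fin N → ℂ) (U : UGroup N) (m : ℕ) : orb b U ^ m = orb (fun i => b i ^ m) U := by
  have hU : (U : Matrix (Fin N) (Fin N) ℂ)ᴴ * U = 1 := (Unitary.mem_iff.mp U.2).1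
  have hU' : (U : Matrix (Fin N) (Fin N) ℂ) * (U : Matrix (Fin N) (Fin N) ℂ)ᴴ = 1 :=
    (Unitary.mem_iff.mp U.2).2
  induction m with
  | zero => simp [orb, hU']
  | succ m ih =>
    rw [pow_succ, ih]
    simp only [orb, Matrix.mul_assoc]
    rw [← Matrix.mul_assoc _ (U : Matrix (Fin N) (Fin N) ℂ), hU, Matrix.one_mul,
      ← Matrix.mul_assoc (Matrix.diagonal _) (Matrix.diagonal _), Matrix.diagonal_mul_diagonal]
    simp only [pow_succ]

lemma trace_orb (b : Fin N → ℂ) (U : UGroup N) : (orb b U).trace = ∑ i, b i := by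
  have hU : (U : Matrix (Fin N) (Fin N) ℂ)ᴴ * U = 1 := (Unitary.mem_iff.mp U.2).1
  rw [orb, Matrix.trace_mul_comm, ← Matrix.mul_assoc, hU, Matrix.one_mul, Matrix.trace_diagonal]

lemma evalM_trace_pow (M : Matrix (Fin N) (Fin N) ℂ) (m : ℕ) :
    evalM M (genM N ^ m).trace = (M ^ m).trace := by
  have h : (evalM M).mapMatrix (genM N) = M := by
    ext i j; simp [evalM]
  conv_rhs => rw [← h, ← map_pow]
  simp [Matrix.trace]

lemma hasDerivAt_evalM {c : ℂ → Matrix (Fin N) (Fin N) ℂ} {z : ℂ} {Y : Matrix (Fin N) (Fin N) ℂ}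
    (h : ∀ i j, HasDerivAt (fun w => c w i j) ((Y * c z - c z * Y) i j) z) (r : PolyM N) :
    HasDerivAt (fun w => evalM (c w) r) (evalM (c z) (adDer Y r)) z := by
  induction r using MvPolynomial.induction_on with
  | C a => simpa using hasDerivAt_const z a
  | add p q hp hq =>
    simp only [map_add]
    exact hp.add hq
  | mul_X p k hp =>
    have h1 : evalM (c z) (adDer Y (X k)) = (Y * c z - c z * Y) k.1 k.2 := by
      rw [← Prod.mk.eta (p := k), adDer_X]
      simp [Matrix.mul_apply, Finset.sum_sub_distrib]
    have := hp.mul (h k.1 k.2)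
    rw [Derivation.leibniz, map_add, smul_eq_mul, smul_eq_mul, map_mul, map_mul, h1]
    simp only [map_mul, eval_X]
    exact this.congr_deriv (by ring)

open scoped Matrix.Norms.L2Operator in
/-- The flow `t ↦ exp(tY)` of a skew-Hermitian `Y`. On real `t` the adjoint is `exp(-tY)`, so the
conjugate of `M` extends to a holomorphic function of `t`, which is what is differentiated. -/
lemma exists_unitary_flow {Y : Matrix (Fin N) (Fin N) ℂ} (hY : star Y = -Y) :
    ∃ g : ℝ → UGroup N, ∀ (M : Matrix (Fin N) (Fin N) ℂ) (r : PolyM N) (t : ℝ),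
      HasDerivAt (fun t => evalM ((g t : Matrix (Fin N) (Fin N) ℂ) * M *
          (g t : Matrix (Fin N) (Fin N) ℂ)ᴴ) r)
        (evalM ((g t : Matrix (Fin N) (Fin N) ℂ) * M * (g t : Matrix (Fin N) (Fin N) ℂ)ᴴ)
          (adDer Y r)) t := by
  have hskew : ∀ t : ℝ, star ((t : ℂ) • Y) = -((t : ℂ) • Y) := by
    intro t; rw [star_smul, hY]; simp
  let e : ℂ → Matrix (Fin N) (Fin N) ℂ := fun z => NormedSpace.exp (z • Y)
  have hstar : ∀ t : ℝ, star (e t) = e (-t) := by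
    intro t
    simp only [e]
    rw [NormedSpace.star_exp, hskew, neg_smul]
  have hu : ∀ t : ℝ, e t ∈ Matrix.unitaryGroup (Fin N) ℂ := by
    intro t
    let +nondep : NormedAlgebra ℚ (Matrix (Fin N) (Fin N) ℂ) := .restrictScalars ℚ ℂ _
    exact NormedSpace.exp_mem_unitary_of_mem_skewAdjoint (skewAdjoint.mem_iff.mpr (hskew t))
  refine ⟨fun t => ⟨e t, hu t⟩, fun M r t => ?_⟩
  have h1 : ∀ z, HasDerivAt (fun w => e w * M * e (-w))
      (Y * (e z * M * e (-z)) - (e z * M * e (-z)) * Y) z := by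
    intro z
    have a1 : HasDerivAt e (Y * e z) z := hasDerivAt_exp_smul_const' Y z
    have a2 : HasDerivAt e (e (-z) * Y) (-z) := hasDerivAt_exp_smul_const Y (-z)
    have a3 : HasDerivAt (fun w => e (-w)) (-(e (-z) * Y)) z :=
       (a2.scomp z (hasDerivAt_neg z)).congr_deriv (by simp)
    exact ((a1.mul_const M).mul a3).congr_deriv (by noncomm_ring)
  have h2 := fun z => hasDerivAt_evalM (c := fun w => e w * M * e (-w)) (z := z) (Y := Y)
    (fun i j => by
      let L : Matrix (Fin N) (Fin N) ℂ →L[ℂ] ℂ :=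
        LinearMap.toContinuousLinearMap (Matrix.entryLinearMap ℂ ℂ i j)
      exact L.hasFDerivAt.comp_hasDerivAt z (h1 z)) r
  have h3 := (h2 t).comp_ofReal
  simp only [← Matrix.star_eq_conjTranspose, hstar]
  exact h3

variable [MeasurableSpace (UGroup N)] [BorelSpace (UGroup N)]

lemma integrable_of_continuous (μ : Measure (UGroup N)) [IsProbabilityMeasure μ] {f : UGroup N → ℂ}
    (hf : Continuous f) : Integrable f μ :=
  hf.integrable_of_hasCompactSupport (HasCompactSupport.of_compactSpace f)

/-- The functional `r ↦ ∫ r(U diag(b) U*) dμ(U)`. -/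
noncomputable def orbInt (μ : Measure (UGroup N)) [IsProbabilityMeasure μ] (b : Fin N → ℂ) :
    PolyM N →ₗ[ℂ] ℂ where
  toFun r := ∫ U, evalM (orb b U) r ∂μ
  map_add' p q := by
    simp only [map_add]
    exact integral_add (integrable_of_continuous μ (continuous_evalM_orb b p))
      (integrable_of_continuous μ (continuous_evalM_orb b q))
  map_smul' c p := by
    simp only [smul_eval, RingHom.id_apply, smul_eq_mul]
    exact integral_const_mul _ _

lemma orbInt_apply (μ : Measure (UGroup N)) [IsProbabilityMeasure μ] (b : Fin N → ℂ) (r : PolyM N) :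
    orbInt μ b r = ∫ U, evalM (orb b U) r ∂μ := rfl

variable {μ : Measure (UGroup N)} [IsProbabilityMeasure μ]

lemma orbInt_conj (hinv : ∀ g : UGroup N, μ.map (fun U => g * U) = μ) (b : Fin N → ℂ)
    (g : UGroup N) (r : PolyM N) :
    ∫ U, evalM ((g : Matrix (Fin N) (Fin N) ℂ) * orb b U * (g : Matrix (Fin N) (Fin N) ℂ)ᴴ) r ∂μ =
      orbInt μ b r := by
  have hg : Continuous fun U : UGroup N => g * U := continuous_const.mul continuous_id
  have hr := continuous_evalM_orb b r
  rw [orbInt_apply]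
  conv_rhs => rw [← hinv g]
  rw [integral_map hg.measurable.aemeasurable hr.aestronglyMeasurable]
  simp only [orb_mul]

/-- The integral of `r(g U diag(b) U* g*)` with `g = exp(tY)` does not depend on `t`; its derivative
at `t = 0` is the integral of `δ_Y r`. -/
lemma orbInt_adDer_skew (hinv : ∀ g : UGroup N, μ.map (fun U => g * U) = μ) (b : Fin N → ℂ)
    {Y : Matrix (Fin N) (Fin N) ℂ} (hY : star Y = -Y) (r : PolyM N) :
    orbInt μ b (adDer Y r) = 0 := by
  obtain ⟨g, hg⟩ := exists_unitary_flow hY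
  obtain ⟨K, hK⟩ := isCompact_univ.exists_bound_of_continuousOn
    (continuous_evalM_orb b (adDer Y r)).continuousOn
  have hcont : ∀ t s, Continuous fun U : UGroup N =>
      evalM ((g t : Matrix (Fin N) (Fin N) ℂ) * orb b U * (g t : Matrix (Fin N) (Fin N) ℂ)ᴴ) s := by
    intro t s
    simp only [← orb_mul]
    exact (continuous_evalM_orb b s).comp (continuous_const.mul continuous_id)
  have := hasDerivAt_integral_of_dominated_loc_of_deriv_le (μ := μ) (𝕜 := ℝ) (x₀ := 0)
    (F := fun t U => evalM ((g t : Matrix (Fin N) (Fin N) ℂ) * orb b U *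
      (g t : Matrix (Fin N) (Fin N) ℂ)ᴴ) r)
    (F' := fun t U => evalM ((g t : Matrix (Fin N) (Fin N) ℂ) * orb b U *
      (g t : Matrix (Fin N) (Fin N) ℂ)ᴴ) (adDer Y r)) (bound := fun _ => K) (s := Set.univ)
    Filter.univ_mem (Filter.Eventually.of_forall fun t => (hcont t r).aestronglyMeasurable)
    (integrable_of_continuous μ (hcont 0 r)) (hcont 0 _).aestronglyMeasurable
    (Filter.Eventually.of_forall fun U t _ => by
      rw [← orb_mul]; exact hK _ (Set.mem_univ _))
    (integrable_const K)
    (Filter.Eventually.of_forall fun U t _ => hg (orb b U) r t)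
  have h2 := this.2
  simp only [orbInt_conj hinv] at h2
  exact h2.unique (hasDerivAt_const 0 _)

/-- Any `Y` is a complex combination of two skew-Hermitian matrices, and permutations of the
diagonal come from permutation matrices. -/
theorem orbInt_isOrbital (hinv : ∀ g : UGroup N, μ.map (fun U => g * U) = μ) (b : Fin N → ℂ) :
    IsOrbital (orbInt μ b) b where
  inv Y r := by
    -- the decomposition of `Y` into skew-Hermitian matrices
    have hdec : Y = (1 / 2 : ℂ) • (Y - star Y) + (-Complex.I / 2) • (Complex.I • (Y + star Y)) := by
      rw [smul_smul, show -Complex.I / 2 * Complex.I = 1 / 2 by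
        linear_combination (-1 / 2 : ℂ) * Complex.I_mul_I]
      module
    rw [hdec, adDer_add, adDer_smul, adDer_smul, Derivation.add_apply, Derivation.smul_apply,
      Derivation.smul_apply, map_add, map_smul, map_smul,
      orbInt_adDer_skew hinv b (Y := Y - star Y) (by simp),
      orbInt_adDer_skew hinv b (Y := Complex.I • (Y + star Y)) (by simp [star_smul, add_comm])]
    simp
  trace m r := by
    simp only [orbInt_apply, map_mul, evalM_trace_pow, orb_pow, trace_orb]
    exact integral_const_mul _ _
  perm s r := by
    classical
    have hP : (Matrix.of fun i j : Fin N => if s i = j then (1 : ℂ) else 0) ∈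
        Matrix.unitaryGroup (Fin N) ℂ := by
      rw [Matrix.mem_unitaryGroup_iff]
      ext i j
      simp [Matrix.mul_apply, Matrix.star_apply, Matrix.one_apply, eq_comm]
    rw [← orbInt_conj hinv b ⟨_, hP⟩ (diagEmb N r), orbInt_apply]
    refine integral_congr_ae (Filter.Eventually.of_forall fun U => ?_)
    simp only [evalM, diagEmb, eval_rename]
    congr 2
    funext i
    simp [Matrix.mul_apply, Matrix.conjTranspose_apply]
  one := by simp [orbInt_apply]

/-- Integration term by term, the exponent being bounded on the compact group. -/
theorem hasSum_orbInt (a b : Fin N → ℂ) :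
    HasSum (fun n => orbInt μ b (diagEmb N (expTerm a n)))
      (∫ U, Complex.exp (∑ i, a i * orb b U i i) ∂μ) := by
  have hcont : Continuous fun U : UGroup N => ∑ i, a i * orb b U i i :=
    continuous_finsetSum _ fun i _ => continuous_const.mul ((continuous_orb b).matrix_elem i i)
  obtain ⟨K, hK⟩ := isCompact_univ.exists_bound_of_continuousOn hcont.continuousOn
  have hterm : ∀ n, orbInt μ b (diagEmb N (expTerm a n)) =
      ∫ U, (∑ i, a i * orb b U i i) ^ n / (n.factorial : ℂ) ∂μ := by
    intro n
    rw [orbInt_apply]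
    refine integral_congr_ae (Filter.Eventually.of_forall fun U => ?_)
    simp only [evalM, diagEmb, eval_rename, eval_expTerm]
    rfl
  simp only [hterm]
  refine hasSum_integral_of_dominated_convergence (fun n _ => K ^ n / n.factorial)
    (fun n => ((hcont.pow n).div_const _).aestronglyMeasurable)
    (fun n => Filter.Eventually.of_forall fun U => ?_)
    (Filter.Eventually.of_forall fun U => Real.summable_pow_div_factorial K)
    (integrable_const _) (Filter.Eventually.of_forall fun U => ?_)
  · rw [norm_div, norm_pow, Complex.norm_natCast]
    gcongr
    exact hK U (Set.mem_univ _)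
  · rw [Complex.exp_eq_exp_ℂ]
    exact NormedSpace.expSeries_div_hasSum_exp _

end Analysis

end HCIZ

/-- The Harish-Chandra/Itzykson–Zuber formula: for diagonal real matrices
`A = diag(a)`, `B = diag(b)` with pairwise distinct entries and `μ` the Haar probability
measure (i.e. the left-invariant probability measure) on the unitary group `U(N)`,
`∫ exp(Tr(A U B U*)) dμ(U) = (∏_{p=1}^{N-1} p!) · det(e^{a_i b_j}) / (Δ_N(a) Δ_N(b))`. -/
theorem harish_chandra_itzykson_zuber (N : ℕ) (hN : 1 ≤ N)
    [MeasurableSpace (Matrix.unitaryGroup (Fin N) ℂ)]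
    [BorelSpace (Matrix.unitaryGroup (Fin N) ℂ)]
    (a b : Fin N → ℝ) (ha : Function.Injective a) (hb : Function.Injective b)
    (μ : Measure (Matrix.unitaryGroup (Fin N) ℂ)) [IsProbabilityMeasure μ]
    (hinv : ∀ g : Matrix.unitaryGroup (Fin N) ℂ, μ.map (fun U => g * U) = μ) :
    ∫ U : Matrix.unitaryGroup (Fin N) ℂ,
        Complex.exp ((Matrix.diagonal (fun i => (a i : ℂ)) * (U : Matrix (Fin N) (Fin N) ℂ) *
          Matrix.diagonal (fun i => (b i : ℂ)) * (U : Matrix (Fin N) (Fin N) ℂ)ᴴ).trace) ∂μ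
      = ((∏ p ∈ Finset.range N, (p.factorial : ℂ)) *
          (Matrix.of fun i j : Fin N => Complex.exp ((a i : ℂ) * (b j : ℂ))).det) /
        ((∏ q ∈ Finset.univ.filter (fun q : Fin N × Fin N => q.1 < q.2),
            ((a q.2 : ℂ) - (a q.1 : ℂ))) *
          (∏ q ∈ Finset.univ.filter (fun q : Fin N × Fin N => q.1 < q.2),
            ((b q.2 : ℂ) - (b q.1 : ℂ)))) := by
  have inj : ∀ v : Fin N → ℝ, Function.Injective v →
      ∏ q ∈ HCIZ.pairs N, ((v q.2 : ℂ) - (v q.1 : ℂ)) ≠ 0 := by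
    intro v hv
    refine Finset.prod_ne_zero_iff.mpr fun q hq => sub_ne_zero.mpr fun h => ?_
    exact (Finset.mem_filter.mp hq).2.ne' (hv (Complex.ofReal_injective h))
  have hb' : MvPolynomial.eval (fun i => (b i : ℂ)) (HCIZ.vdm N) ≠ 0 := by
    rw [HCIZ.eval_vdm]
    exact inj b hb
  have key := (HCIZ.orbInt_isOrbital hinv fun i => (b i : ℂ)).sum_eq hb'
    (HCIZ.hasSum_orbInt (fun i => (a i : ℂ)) fun i => (b i : ℂ))
  have htr : ∀ U : Matrix.unitaryGroup (Fin N) ℂ,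
      (Matrix.diagonal (fun i => (a i : ℂ)) * (U : Matrix (Fin N) (Fin N) ℂ) *
        Matrix.diagonal (fun i => (b i : ℂ)) * (U : Matrix (Fin N) (Fin N) ℂ)ᴴ).trace =
      ∑ i, (a i : ℂ) * HCIZ.orb (fun i => (b i : ℂ)) U i i := by
    intro U
    simp only [HCIZ.orb, Matrix.mul_assoc, Matrix.trace, Matrix.diag_apply, Matrix.diagonal_mul]
  rw [HCIZ.eval_vdm, HCIZ.eval_vdm] at key
  simp only [htr]
  rw [eq_div_iff (mul_ne_zero (inj a ha) (inj b hb)), ← key]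
  ring
end

section
/- (Semigroup/commutation property of Toeplitz-like kernels; core identity of Proposition A.5.) Let n ≥ 1 and let f_1, f_2 : ℤ → ℂ be finitely supported, with convolution (f_1 ∗ f_2)(m) = ∑_{k ∈ ℤ} f_1(k) f_2(m − k). Then for all x, z ∈ W_n: ∑_{y ∈ W_n} det(f_1(x_i − y_j))_{i,j=1}^n · det(f_2(y_i − z_j))_{i,j=1}^n = det((f_1 ∗ f_2)(x_i − z_j))_{i,j=1}^n, where the sum over y ∈ W_n is finite. In particular the corresponding transition kernels commute: T_n(F_1) T_n(F_2) = T_n(F_2) T_n(F_1) = T_n(F_1 F_2), where F_k is the Laurent polynomial with coefficients f_k. -/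
/-!
The identity is the Cauchy–Binet formula for the rectangular matrices `f₁ (x i - s)` and
`f₂ (s - z j)`, where `s` runs over the finite set `S` of integers of the form `x i - k` with
`k` in the support of `f₁`. The substitution `s = x i - k` turns the convolution into the matrix
product over `S`. If a tuple `y` has an entry `y j` outside `S`, then the `j`-th column of
`f₁ (x i - y j)` vanishes, so restricting the sum over the Weyl chamber to tuples in `S` loses
nothing.

Cauchy–Binet itself (`det_sum_mul_eq_sum_strictMono`) follows by expanding the determinant
multilinearly in the rows: it becomes a sum over all maps `p : Fin n → S`, in which the
non-injective ones contribute zero, and an injective `p` factors uniquely as `y ∘ σ` with `y`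
strictly increasing and `σ` a permutation.
-/

open Finset in
/-- Every injective tuple is uniquely a strictly increasing tuple precomposed with a
permutation. -/
lemma sum_injective_eq_sum_strictMono_perm {n : ℕ} (S : Finset ℤ) (g : (Fin n → ℤ) → ℂ) :
    ∑ p ∈ (Fintype.piFinset fun _ : Fin n => S) with Function.Injective p, g p =
      ∑ y ∈ (Fintype.piFinset fun _ : Fin n => S) with StrictMono y,
        ∑ σ : Equiv.Perm (Fin n), g (y ∘ σ) := by
  rw [← Finset.sum_product']
  symm
  refine Finset.sum_bij (fun q _ => q.1 ∘ q.2) ?_ ?_ ?_ (fun _ _ => rfl)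
  · rintro ⟨y, σ⟩ h
    simp only [mem_product, mem_filter, Fintype.mem_piFinset, mem_univ, and_true] at h ⊢
    exact ⟨fun i => h.1 (σ i), h.2.injective.comp σ.injective⟩
  · rintro ⟨y, σ⟩ h ⟨y', σ'⟩ h' e
    simp only [mem_product, mem_filter, Fintype.mem_piFinset, mem_univ, and_true] at h h' e
    have hr : Set.range y = Set.range y' := by
      rw [← σ.surjective.range_comp y, ← σ'.surjective.range_comp y', e]
    obtain rfl : y = y' := (h.2.range_inj h'.2).1 hr
    congr 1
    ext i : 1
    exact h.2.injective (congrFun e i)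
  · intro p h
    simp only [mem_filter, Fintype.mem_piFinset] at h
    refine ⟨(p ∘ Tuple.sort p, (Tuple.sort p)⁻¹), ?_, ?_⟩
    · simp only [mem_product, mem_filter, Fintype.mem_piFinset, mem_univ, and_true]
      exact ⟨fun i => h.1 _, (Tuple.monotone_sort p).strictMono_of_injective
        (h.2.comp (Tuple.sort p).injective)⟩
    · ext i
      simp

open Finset in
/-- The Cauchy–Binet formula, with the intermediate index running over a finite set of integers
and the square minors indexed by strictly increasing tuples in that set. -/
lemma det_sum_mul_eq_sum_strictMono {n : ℕ} (S : Finset ℤ) (A : Fin n → ℤ → ℂ)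
    (B : ℤ → Fin n → ℂ) :
    (Matrix.of fun i j : Fin n => ∑ s ∈ S, A i s * B s j).det =
      ∑ y ∈ (Fintype.piFinset fun _ : Fin n => S) with StrictMono y,
        (Matrix.of fun i j : Fin n => A i (y j)).det *
          (Matrix.of fun i j : Fin n => B (y i) j).det := by
  have expand : (Matrix.of fun i j : Fin n => ∑ s ∈ S, A i s * B s j).det =
      ∑ p ∈ Fintype.piFinset fun _ : Fin n => S,
        (∏ i, A i (p i)) * (Matrix.of fun i j : Fin n => B (p i) j).det := by
    have h : (Matrix.of fun i j : Fin n => ∑ s ∈ S, A i s * B s j) =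
        fun i => ∑ s ∈ S, A i s • B s := by
      ext i j
      simp [Finset.sum_apply]
    rw [h]
    refine ((Matrix.detRowAlternating (R := ℂ) (n := Fin n)).toMultilinearMap.map_sum_finset
      (fun i s => A i s • B s) (fun _ => S)).trans ?_
    refine Finset.sum_congr rfl fun p _ => ?_
    exact (Matrix.detRowAlternating (R := ℂ) (n := Fin n)).toMultilinearMap.map_smul_univ
      (fun i => A i (p i)) (fun i => B (p i))
  have drop : ∑ p ∈ Fintype.piFinset fun _ : Fin n => S,
        (∏ i, A i (p i)) * (Matrix.of fun i j : Fin n => B (p i) j).det =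
      ∑ p ∈ (Fintype.piFinset fun _ : Fin n => S) with Function.Injective p,
        (∏ i, A i (p i)) * (Matrix.of fun i j : Fin n => B (p i) j).det := by
    refine (Finset.sum_filter_of_ne fun p _ hp => ?_).symm
    by_contra hinj
    simp only [Function.Injective, not_forall] at hinj
    obtain ⟨a, b, hab, hne⟩ := hinj
    refine hp ?_
    rw [Matrix.det_zero_of_row_eq hne (by ext j; simp [hab]), mul_zero]
  rw [expand, drop, sum_injective_eq_sum_strictMono_perm]
  refine Finset.sum_congr rfl fun y _ => ?_
  rw [← Matrix.det_transpose (Matrix.of fun i j : Fin n => A i (y j)), Matrix.det_apply',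
    Finset.sum_mul]
  refine Finset.sum_congr rfl fun σ _ => ?_
  have hperm := Matrix.det_permute σ (Matrix.of fun i j : Fin n => B (y i) j)
  have hsub : (Matrix.of fun i j : Fin n => B ((y ∘ σ) i) j) =
      (Matrix.of fun i j : Fin n => B (y i) j).submatrix σ id := rfl
  rw [hsub, hperm]
  simp only [Function.comp_apply, Matrix.transpose_apply, Matrix.of_apply]
  ring


/-- Semigroup/commutation property of Toeplitz-like determinantal kernels (core identity of
Proposition A.5): for finitely supported `f₁, f₂ : ℤ → ℂ` with convolution
`(f₁ ∗ f₂)(m) = ∑_k f₁(k) f₂(m-k)`, and all `x, z ∈ W_n`,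
`∑_{y ∈ W_n} det(f₁(x_i - y_j)) det(f₂(y_i - z_j)) = det((f₁ ∗ f₂)(x_i - z_j))`.
In particular the corresponding transition kernels `T_n(F₁)`, `T_n(F₂)` commute and
`T_n(F₁) T_n(F₂) = T_n(F₁ F₂)`. -/
theorem toeplitz_kernel_convolution (n : ℕ) (hn : 1 ≤ n) (f₁ f₂ : ℤ →₀ ℂ)
    (x z : Fin n → ℤ) (hx : StrictMono x) (hz : StrictMono z) :
    ∑ᶠ y ∈ {y : Fin n → ℤ | StrictMono y},
        (Matrix.of fun i j : Fin n => f₁ (x i - y j)).det *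
          (Matrix.of fun i j : Fin n => f₂ (y i - z j)).det
      = (Matrix.of fun i j : Fin n =>
          ∑ k ∈ f₁.support, f₁ k * f₂ (x i - z j - k)).det := by
  classical
  set S : Finset ℤ := Finset.univ.biUnion fun i : Fin n => f₁.support.image fun k => x i - k
    with hS
  have hmem : ∀ i s, f₁ (x i - s) ≠ 0 → s ∈ S := by
    intro i s h
    simp only [hS, Finset.mem_biUnion, Finset.mem_univ, true_and, Finset.mem_image]
    exact ⟨i, x i - s, Finsupp.mem_support_iff.2 h, by ring⟩
  have conv : ∀ i j, ∑ k ∈ f₁.support, f₁ k * f₂ (x i - z j - k) =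
      ∑ s ∈ S, f₁ (x i - s) * f₂ (s - z j) := by
    intro i j
    refine Finset.sum_bij_ne_zero (fun k _ _ => x i - k) ?_ ?_ ?_ ?_
    · intro k hk _
      exact hmem i _ (by simpa using hk)
    · intro k _ _ k' _ _ h
      linarith
    · intro s _ h
      have h1 := left_ne_zero_of_mul h
      have e : x i - z j - (x i - s) = s - z j := by ring
      exact ⟨x i - s, Finsupp.mem_support_iff.2 h1, by rwa [e], by ring⟩
    · intro k _ _
      have e : x i - k - z j = x i - z j - k := by ring
      rw [sub_sub_cancel, e]
  simp only [conv]
  rw [det_sum_mul_eq_sum_strictMono S (fun i s => f₁ (x i - s)) (fun s j => f₂ (s - z j))]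
  refine finsum_mem_eq_sum_of_inter_support_eq _ ?_
  ext y
  simp only [Set.mem_inter_iff, Set.mem_setOf_eq, Finset.coe_filter, Fintype.mem_piFinset,
    Function.mem_support]
  refine ⟨fun ⟨hy, hne⟩ => ⟨⟨fun j => ?_, hy⟩, hne⟩, fun ⟨⟨_, hy⟩, hne⟩ => ⟨hy, hne⟩⟩
  by_contra hj
  refine left_ne_zero_of_mul hne (Matrix.det_eq_zero_of_column_eq_zero j fun i => ?_)
  by_contra h
  exact hj (hmem i _ h)
end
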